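/- Let 0 < d < n be integers and let E ⊆ ℝ^n be a LARRF set of dimension d with constants ε and C₀, where ε is small enough depending only on n and d. For each τ > 0 there exists K = K(n,d,C₀,τ) ≥ 1 such that for every x ∈ E and 0 < r ≤ 10⁻¹ there are a d-dimensional affine plane P through x and a K-bi-Lipschitz bijection g : ℝ^n → ℝ^n (K⁻¹|z−w| ≤ |g(z) − g(w)| ≤ K|z−w| for all z, w) such that |g(z) − z| ≤ Cε for all z ∈ ℝ^n (C depending only on n and d), g(z) = z for all z ∈ ℝ^n ∖ B(x,2r), and H^d( E ∩ B(x,r) ∖ g(P) ) ≤ τ r^d. (Theorem 15.39: LARRF sets have very big pieces of bi-Lipschitz images of d-planes.) -/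

import Mathlib

open Metric Set MeasureTheory
open scoped ENNReal

noncomputable section

set_option synthInstance.maxHeartbeats 1000000
set_option maxHeartbeats 1000000

/-- `ℝⁿ`. -/
abbrev V (n : ℕ) := EuclideanSpace ℝ (Fin n)

/-- `P` is a `d`-dimensional affine plane of `ℝⁿ`. -/
def IsAffinePlane (n d : ℕ) (P : Set (V n)) : Prop :=
  ∃ Q : AffineSubspace ℝ (V n), (Q : Set (V n)) = P ∧
    Module.finrank ℝ Q.direction = d ∧ (Q : Set (V n)).Nonempty

/-- The normalized local Hausdorff distance `d_{x,r}(A,B)`. -/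
def nhd {n : ℕ} (x : V n) (r : ℝ) (A B : Set (V n)) : ℝ :=
  r⁻¹ * max (⨆ y ∈ A ∩ ball x r, infDist y B) (⨆ y ∈ B ∩ ball x r, infDist y A)

/-- `E` is a locally Ahlfors-regular Reifenberg-flat (LARRF) set of dimension `d`
with constants `ε` and `C₀` (Definition 15.1). -/
def IsLARRF (n d : ℕ) (ε C₀ : ℝ) (E : Set (V n)) : Prop :=
  E.Nonempty ∧ IsClosed E ∧
  ∀ x ∈ E, ∀ r : ℝ, 0 < r → r ≤ 1 →
    (∃ P : Set (V n), IsAffinePlane n d P ∧ x ∈ P ∧ nhd x r P E ≤ ε) ∧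
    ENNReal.ofReal (C₀⁻¹ * r ^ d) ≤ μH[(d : ℝ)] (E ∩ ball x r) ∧
    μH[(d : ℝ)] (E ∩ ball x r) ≤ ENNReal.ofReal (C₀ * r ^ d)

/-!
The plane approximating `E` near a point `e` may turn as the scale decreases. Starting from the
scale `r`, one passes from each stopping scale `s k e` to the next one `s (k + 1) e`, roughly the
largest scale at which the plane at `e` has turned by a fixed angle `δ`, regularized so that it
varies slowly with `e`.

Glueing the orthogonal projections onto the planes at scale `s k` gives a map flattening `E` at this
scale. On the set where `s m = 0`, composing `m` such maps brings `E` into a single plane, and each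
of them moves differences of points by at most a small multiple of `δ`. Their inverse displacements
therefore extend to small Lipschitz vector fields, and `g` is a composition of `m` perturbations of
the identity with constants `1 / 2` and `2`.

The remaining points are those whose planes turn more than `m` times, and turning costs measure.
There are no holes in `E` over its approximating planes, because a ball has no Lipschitz retraction
onto its sphere. So a covering of `E` by balls at a scale where the planes have tilted has total
`∑ rᵢ ^ d` larger, by a definite amount for each tilted ball, than a covering at the previous scale.
By Ahlfors regularity these sums are bounded by a multiple of `r ^ d` independent of `m`, so some of
the first `m` turns affects only a fraction `O(1 / m)` of the measure.
-/

section Determinant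

open scoped NNReal

variable {X : Type*} [NormedAddCommGroup X] [NormedSpace ℝ X]

lemma approximatesLinearOn_id_add {u : X → X} {K : ℝ≥0} (hu : LipschitzWith K u) :
    ApproximatesLinearOn (fun z => z + u z)
      (ContinuousLinearEquiv.refl ℝ X : X →L[ℝ] X) univ K := by
  rw [ApproximatesLinearOn.approximatesLinearOn_iff_lipschitzOnWith, lipschitzOnWith_univ]
  convert hu using 1
  ext z
  simp

lemma bijective_id_add_of_lipschitz [CompleteSpace X] {u : X → X} {K : ℝ≥0} (hK : K < 1)
    (hu : LipschitzWith K u) : Function.Bijective fun z => z + u z := by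
  have happrox := approximatesLinearOn_id_add hu
  have hK' : Subsingleton X ∨ K < ‖((ContinuousLinearEquiv.refl ℝ X).symm : X →L[ℝ] X)‖₊⁻¹ := by
    rcases subsingleton_or_nontrivial X with hX | hX
    · exact Or.inl hX
    · refine Or.inr (hK.trans_le ?_)
      rw [ContinuousLinearEquiv.refl_symm, ContinuousLinearEquiv.coe_refl,
        ContinuousLinearMap.nnnorm_id, inv_one]
  exact ⟨injOn_univ.1 (happrox.injOn hK'), happrox.surjective hK'⟩

variable [FiniteDimensional ℝ X]

lemma det_id_add_ne_zero {A : X →L[ℝ] X} (hA : ‖A‖ < 1) :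
    (ContinuousLinearMap.id ℝ X + A).det ≠ 0 := by
  intro h0
  obtain ⟨v, hv, hv0⟩ := (Submodule.ne_bot_iff _).1 (LinearMap.bot_lt_ker_of_det_eq_zero
    (f := ((ContinuousLinearMap.id ℝ X + A : X →L[ℝ] X) : X →ₗ[ℝ] X)) h0).ne'
  have hAv : v = -A v := eq_neg_of_add_eq_zero_left (by simpa using hv)
  have hlt : ‖A v‖ < ‖v‖ := (A.le_opNorm v).trans_lt
    (mul_lt_of_lt_one_left (norm_pos_iff.2 hv0) hA)
  rw [← norm_neg, ← hAv] at hlt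
  exact hlt.false

lemma det_id_add_pos {A : X →L[ℝ] X} (hA : ‖A‖ < 1) :
    0 < (ContinuousLinearMap.id ℝ X + A).det := by
  have hcont : Continuous fun s : ℝ => (ContinuousLinearMap.id ℝ X + s • A).det :=
    ContinuousLinearMap.continuous_det.comp (by fun_prop)
  have hone : (ContinuousLinearMap.id ℝ X + (0 : ℝ) • A).det = 1 := by
    simp [ContinuousLinearMap.det]
  by_contra! hle
  obtain ⟨s, hs, hs0⟩ := intermediate_value_Icc' (zero_le_one (α := ℝ)) hcont.continuousOn
    (show (0 : ℝ) ∈ _ from ⟨by simpa using hle, by simp only [hone, zero_le_one]⟩)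
  refine det_id_add_ne_zero ?_ hs0
  calc ‖s • A‖ = s * ‖A‖ := by rw [norm_smul, Real.norm_of_nonneg hs.1]
    _ ≤ 1 * ‖A‖ := by gcongr; exact hs.2
    _ < 1 := by rwa [one_mul]

lemma exists_polynomial_eval_eq_det (A : X →L[ℝ] X) :
    ∃ p : Polynomial ℝ, p.natDegree ≤ Module.finrank ℝ X ∧
      ∀ t, p.eval t = (ContinuousLinearMap.id ℝ X + t • A).det := by
  classical
  let b := Module.finBasis ℝ X
  let M := LinearMap.toMatrix b b (A : X →ₗ[ℝ] X)
  refine ⟨Matrix.det ((Polynomial.X : Polynomial ℝ) • M.map Polynomial.C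
    + (1 : Matrix _ _ ℝ).map Polynomial.C), ?_, fun t => ?_⟩
  · simpa using Polynomial.natDegree_det_X_add_C_le M 1
  · rw [ContinuousLinearMap.det, ← LinearMap.det_toMatrix b, ← Polynomial.coe_evalRingHom,
      RingHom.map_det]
    congr 1
    ext i j
    simp only [M, LinearMap.toMatrix_apply, RingHom.mapMatrix_apply, Matrix.map_apply,
      Matrix.add_apply, Matrix.smul_apply, Matrix.one_apply]
    by_cases hij : i = j <;> simp [hij] <;> ring

lemma exists_det_id_add_eq_sum {t₀ : ℝ} (ht₀ : 0 < t₀) :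
    ∃ (s : Finset ℕ) (t c : ℕ → ℝ), (∀ i, 0 < t i ∧ t i ≤ t₀) ∧ ∑ i ∈ s, c i = 1 ∧
      ∀ A : X →L[ℝ] X, (ContinuousLinearMap.id ℝ X + A).det
        = ∑ i ∈ s, c i * (ContinuousLinearMap.id ℝ X + t i • A).det := by
  let s := Finset.range (Module.finrank ℝ X + 1)
  let t : ℕ → ℝ := fun i => t₀ / (i + 1)
  let c : ℕ → ℝ := fun i => (Lagrange.basis s t i).eval 1
  have hinj : Set.InjOn t s := fun i _ j _ hij => by
    have hij' : t₀ / ((i : ℝ) + 1) = t₀ / ((j : ℝ) + 1) := hij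
    rw [div_eq_div_iff (by positivity) (by positivity)] at hij'
    exact_mod_cast (add_right_cancel (mul_left_cancel₀ ht₀.ne' hij')).symm
  have hdet : ∀ A : X →L[ℝ] X, (ContinuousLinearMap.id ℝ X + A).det
      = ∑ i ∈ s, c i * (ContinuousLinearMap.id ℝ X + t i • A).det := fun A => by
    obtain ⟨p, hdeg, hp⟩ := exists_polynomial_eval_eq_det A
    have hcard : p.degree < s.card := Polynomial.degree_le_natDegree.trans_lt (by
      rw [Finset.card_range]
      exact_mod_cast Nat.lt_succ_of_le hdeg)
    calc (ContinuousLinearMap.id ℝ X + A).det = p.eval 1 := by rw [hp, one_smul]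
      _ = (Lagrange.interpolate s t fun i => p.eval (t i)).eval 1 := by
        rw [← Lagrange.eq_interpolate hinj hcard]
      _ = ∑ i ∈ s, c i * (ContinuousLinearMap.id ℝ X + t i • A).det := by
        rw [Lagrange.interpolate_apply, Polynomial.eval_finsetSum]
        refine Finset.sum_congr rfl fun i _ => ?_
        rw [Polynomial.eval_mul, Polynomial.eval_C, hp, mul_comm]
  refine ⟨s, t, c, fun i => ⟨by positivity, div_le_self ht₀.le ?_⟩, ?_, hdet⟩
  · exact le_add_of_nonneg_left i.cast_nonneg
  · simpa [ContinuousLinearMap.det] using (hdet 0).symm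

end Determinant

section Degree

open scoped NNReal

variable {X : Type*} [NormedAddCommGroup X] [NormedSpace ℝ X] [FiniteDimensional ℝ X]

lemma image_eq_of_bijective_of_eqOn_compl {α : Type*} {f : α → α} {B : Set α}
    (hf : Function.Bijective f) (hB : EqOn f id Bᶜ) : f '' B = B := by
  have hcompl : f '' Bᶜ = Bᶜ := by rw [image_congr hB, image_id]
  rw [image_compl_eq hf] at hcompl
  exact compl_injective hcompl

lemma hausdorffMeasure_image_inter_of_ae_mem {α β : Type*} [MetricSpace α] [MeasurableSpace α]
    [BorelSpace α] [MetricSpace β] [MeasurableSpace β] [BorelSpace β] {f : α → β} {L : ℝ≥0}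
    (hf : LipschitzWith L f) {s : ℝ} (hs : 0 ≤ s) {B D : Set α} (hD : ∀ᵐ p ∂μH[s], p ∈ D) :
    μH[s] (f '' (B ∩ D)) = μH[s] (f '' B) := by
  have hnull : μH[s] (f '' Dᶜ) = 0 := by
    refine le_antisymm ((hf.hausdorffMeasure_image_le hs Dᶜ).trans_eq ?_) bot_le
    rw [show μH[s] Dᶜ = 0 from hD, mul_zero]
  refine le_antisymm (measure_mono (image_mono inter_subset_left)) ?_
  calc μH[s] (f '' B) ≤ μH[s] (f '' (B ∩ D) ∪ f '' Dᶜ) := measure_mono (by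
        rw [← image_union]
        exact image_mono fun p hp => (em (p ∈ D)).imp (fun h => ⟨hp, h⟩) id)
    _ ≤ μH[s] (f '' (B ∩ D)) + μH[s] (f '' Dᶜ) := measure_union_le _ _
    _ = μH[s] (f '' (B ∩ D)) := by rw [hnull, add_zero]

variable [MeasurableSpace X] [BorelSpace X]

lemma integral_det_id_add_fderiv_of_lt_one {u : X → X} {K : ℝ≥0} (hu : LipschitzWith K u)
    (hK : K < 1) {B : Set X} (hB : MeasurableSet B) (hB' : μH[Module.finrank ℝ X] B ≠ ∞)
    (hzero : ∀ p ∉ B, u p = 0) :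
    IntegrableOn (fun p => (ContinuousLinearMap.id ℝ X + fderiv ℝ u p).det) B
        μH[Module.finrank ℝ X] ∧
      ∫ p in B, (ContinuousLinearMap.id ℝ X + fderiv ℝ u p).det ∂μH[Module.finrank ℝ X]
        = μH[Module.finrank ℝ X].real B := by
  set μ : Measure X := μH[Module.finrank ℝ X]
  set f : X → X := fun p => p + u p
  set J : X → ℝ := fun p => (ContinuousLinearMap.id ℝ X + fderiv ℝ u p).det
  have hf : Function.Bijective f := bijective_id_add_of_lipschitz hK hu
  have hfB : f '' B = B := image_eq_of_bijective_of_eqOn_compl hf fun p hp => by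
    simp only [f, hzero p hp, add_zero, id]
  set D : Set X := {p | DifferentiableAt ℝ u p}
  have hBD : MeasurableSet (B ∩ D) := hB.inter (measurableSet_of_differentiableAt ℝ u)
  have hDae : ∀ᵐ p ∂μ, p ∈ D := hu.ae_differentiableAt
  have hBDae : (B ∩ D : Set X) =ᵐ[μ] B := by
    filter_upwards [hDae] with p hp using propext (and_iff_left hp)
  have hJpos : ∀ p, 0 < J p := fun p =>
    det_id_add_pos ((norm_fderiv_le_of_lipschitz ℝ hu).trans_lt (by exact_mod_cast hK))
  have hJmeas : Measurable J := ContinuousLinearMap.continuous_det.measurable.comp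
    ((measurable_fderiv ℝ u).const_add _)
  have himage : μ (f '' (B ∩ D)) = μ B := (hausdorffMeasure_image_inter_of_ae_mem
    (LipschitzWith.id.add hu) (by positivity) hDae).trans (congrArg μ hfB)
  have hlint : ∫⁻ p in B, ENNReal.ofReal (J p) ∂μ = μ B := by
    have hderiv : ∀ p ∈ B ∩ D, HasFDerivWithinAt f
        (ContinuousLinearMap.id ℝ X + fderiv ℝ u p) (B ∩ D) p := fun p hp =>
      ((hasFDerivAt_id p).add hp.2.hasFDerivAt).hasFDerivWithinAt
    rw [← himage, ← lintegral_abs_det_fderiv_eq_addHaar_image μ hBD hderiv hf.1.injOn,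
      setLIntegral_congr hBDae]
    simp only [J, abs_of_pos (hJpos _)]
  have hJnonneg : 0 ≤ᵐ[μ.restrict B] J := .of_forall fun p => (hJpos p).le
  refine ⟨⟨hJmeas.aestronglyMeasurable, ?_⟩, ?_⟩
  · rw [hasFiniteIntegral_iff_ofReal hJnonneg, hlint]
    exact hB'.lt_top
  · rw [integral_eq_lintegral_of_nonneg_ae hJnonneg hJmeas.aestronglyMeasurable, hlint,
      measureReal_def]

/-- Both sides are polynomial in `t` for the perturbation `t • u`, and they agree for small `t`. -/
lemma integral_det_id_add_fderiv {u : X → X} {L : ℝ≥0} (hu : LipschitzWith L u) {B : Set X}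
    (hB : MeasurableSet B) (hB' : μH[Module.finrank ℝ X] B ≠ ∞) (hzero : ∀ p ∉ B, u p = 0) :
    ∫ p in B, (ContinuousLinearMap.id ℝ X + fderiv ℝ u p).det ∂μH[Module.finrank ℝ X]
      = μH[Module.finrank ℝ X].real B := by
  set μ : Measure X := μH[Module.finrank ℝ X]
  have hsmall : ∀ t : ℝ, 0 < t → t ≤ 1 / (2 * (L + 1)) →
      IntegrableOn (fun p => (ContinuousLinearMap.id ℝ X + t • fderiv ℝ u p).det) B μ ∧
      ∫ p in B, (ContinuousLinearMap.id ℝ X + t • fderiv ℝ u p).det ∂μ = μ.real B := by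
    intro t ht ht'
    have hlip : LipschitzWith (‖t‖₊ * L) (t • u) := (lipschitzWith_smul t).comp hu
    have hlt : ‖t‖₊ * L < 1 := by
      rw [← NNReal.coe_lt_coe]
      push_cast
      rw [le_div_iff₀ (by positivity)] at ht'
      rw [Real.norm_of_nonneg ht.le]
      linarith
    have hfderiv : ∀ p, t • fderiv ℝ u p = fderiv ℝ (t • u) p := fun p =>
      (congrFun (fderiv_const_smul_field t) p).symm
    simp only [hfderiv]
    exact integral_det_id_add_fderiv_of_lt_one hlip hlt hB hB' fun p hp => by simp [hzero p hp]
  obtain ⟨N, t, c, ht, hc, hdet⟩ := exists_det_id_add_eq_sum (X := X)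
    (t₀ := 1 / (2 * ((L : ℝ) + 1))) (by positivity)
  calc ∫ p in B, (ContinuousLinearMap.id ℝ X + fderiv ℝ u p).det ∂μ
      = ∑ i ∈ N, ∫ p in B, c i * (ContinuousLinearMap.id ℝ X + t i • fderiv ℝ u p).det ∂μ := by
        rw [integral_congr_ae (.of_forall fun p => hdet (fderiv ℝ u p))]
        exact integral_finsetSum _ fun i _ => (hsmall (t i) (ht i).1 (ht i).2).1.const_mul _
    _ = ∑ i ∈ N, c i * μ.real B := Finset.sum_congr rfl fun i _ => by
        rw [integral_const_mul, (hsmall (t i) (ht i).1 (ht i).2).2]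
    _ = μ.real B := by rw [← Finset.sum_mul, hc, one_mul]

end Degree

section RadialPush

variable {X : Type*} [NormedAddCommGroup X] [NormedSpace ℝ X]

/-- The radial map which is the identity off `ball 0 S` and pushes its nonzero points to the
sphere. -/
def radialPush (S : ℝ) (a : X) : X := max 1 (S / ‖a‖) • a

lemma radialPush_of_le {S : ℝ} {a : X} (h : S ≤ ‖a‖) : radialPush S a = a := by
  rw [radialPush, max_eq_left (div_le_one_of_le₀ h (norm_nonneg a)), one_smul]

lemma norm_radialPush_of_le {S : ℝ} {a : X} (ha : a ≠ 0) (h : ‖a‖ ≤ S) :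
    ‖radialPush S a‖ = S := by
  have ha' : 0 < ‖a‖ := norm_pos_iff.2 ha
  have hS : 0 ≤ S := ha'.le.trans h
  rw [radialPush, max_eq_right (by rwa [le_div_iff₀ ha', one_mul]), norm_smul, norm_div,
    norm_norm, Real.norm_of_nonneg hS, div_mul_cancel₀ _ ha'.ne']

lemma lipschitzOnWith_radialPush {S ρ : ℝ} (hS : 0 ≤ S) (hρ : 0 < ρ) :
    LipschitzOnWith (Real.toNNReal (2 * (S / ρ) + 1)) (radialPush (X := X) S) {a | ρ ≤ ‖a‖} := by
  refine LipschitzOnWith.of_dist_le_mul fun a (ha : ρ ≤ ‖a‖) b (hb : ρ ≤ ‖b‖) => ?_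
  have ha0 : 0 < ‖a‖ := hρ.trans_le ha
  have hb0 : 0 < ‖b‖ := hρ.trans_le hb
  have hmax : max 1 (S / ‖a‖) ≤ S / ρ + 1 :=
    max_le (le_add_of_nonneg_left (by positivity)) (by
      have : S / ‖a‖ ≤ S / ρ := by gcongr
      linarith)
  have hdiff : |max 1 (S / ‖a‖) - max 1 (S / ‖b‖)| * ‖b‖ ≤ S / ρ * ‖a - b‖ :=
    calc |max 1 (S / ‖a‖) - max 1 (S / ‖b‖)| * ‖b‖ ≤ |S / ‖a‖ - S / ‖b‖| * ‖b‖ := by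
          refine mul_le_mul_of_nonneg_right ?_ hb0.le
          simp only [max_comm (1 : ℝ)]
          exact abs_max_sub_max_le_abs _ _ _
      _ = S / ‖a‖ * |‖b‖ - ‖a‖| := by
          rw [show S / ‖a‖ - S / ‖b‖ = S / ‖a‖ * (‖b‖ - ‖a‖) / ‖b‖ by field_simp, abs_div, abs_mul,
            abs_of_nonneg (by positivity : 0 ≤ S / ‖a‖), abs_norm, div_mul_cancel₀ _ hb0.ne']
      _ ≤ S / ρ * ‖a - b‖ := by
          rw [norm_sub_rev]
          gcongr
          exact abs_norm_sub_norm_le b a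
  rw [Real.coe_toNNReal _ (by positivity), dist_eq_norm, dist_eq_norm]
  calc ‖radialPush S a - radialPush S b‖
      = ‖max 1 (S / ‖a‖) • (a - b) + (max 1 (S / ‖a‖) - max 1 (S / ‖b‖)) • b‖ := by
        rw [radialPush, radialPush, smul_sub, sub_smul, sub_add_sub_cancel]
    _ ≤ max 1 (S / ‖a‖) * ‖a - b‖ + |max 1 (S / ‖a‖) - max 1 (S / ‖b‖)| * ‖b‖ := by
        refine (norm_add_le _ _).trans_eq ?_
        rw [norm_smul, norm_smul, Real.norm_eq_abs, Real.norm_eq_abs,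
          abs_of_pos (lt_max_of_lt_left one_pos)]
    _ ≤ (S / ρ + 1) * ‖a - b‖ + S / ρ * ‖a - b‖ := by gcongr
    _ = (2 * (S / ρ) + 1) * ‖a - b‖ := by ring

end RadialPush

section Retraction

open scoped NNReal

variable {X : Type*} [NormedAddCommGroup X] [InnerProductSpace ℝ X] [FiniteDimensional ℝ X]

lemma det_eq_zero_of_norm_sub_eventually_const {h : X → X} {A : X →L[ℝ] X} {p q : X} {S : ℝ}
    (hS : S ≠ 0) (hA : HasFDerivAt h A p) (hconst : ∀ᶠ p' in nhds p, ‖h p' - q‖ = S) :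
    A.det = 0 := by
  by_contra hdet
  have hsurj : Function.Surjective A :=
    ((Module.End.isUnit_iff _).1 ((LinearMap.isUnit_iff_isUnit_det (A : X →ₗ[ℝ] X)).2
      (isUnit_iff_ne_zero.2 hdet))).2
  obtain ⟨v, hv⟩ := hsurj (h p - q)
  have hderiv : 2 • (innerSL ℝ (h p - q)).comp A = 0 := by
    refine (hA.sub_const q).norm_sq.unique
      ((hasFDerivAt_const (S ^ 2) p).congr_of_eventuallyEq ?_)
    filter_upwards [hconst] with p' hp'
    rw [hp']
  have hinner := congrArg (fun T : X →L[ℝ] ℝ => T v) hderiv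
  simp only [smul_apply, ContinuousLinearMap.comp_apply, hv, innerSL_apply_apply,
    real_inner_self_eq_norm_sq, zero_apply, hconst.self_of_nhds] at hinner
  exact hS (by simpa using hinner)

lemma not_exists_lipschitz_retraction {h : X → X} {L : ℝ≥0} (hL : LipschitzWith L h) {q : X}
    {S : ℝ} (hS : 0 < S) (hid : ∀ p, S ≤ ‖p - q‖ → h p = p)
    (hsphere : ∀ p, ‖p - q‖ < S → ‖h p - q‖ = S) : False := by
  borelize X
  set μ : Measure X := μH[Module.finrank ℝ X]
  have hu : LipschitzWith (L + 1) fun p => h p - p := hL.sub LipschitzWith.id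
  have hvol := integral_det_id_add_fderiv hu (measurableSet_ball (x := q) (ε := S))
    measure_ball_lt_top.ne fun p hp =>
      sub_eq_zero.2 (hid p (by simpa [dist_eq_norm] using hp))
  have hdet : ∀ᵐ p ∂μ, p ∈ ball q S →
      (ContinuousLinearMap.id ℝ X + fderiv ℝ (fun p => h p - p) p).det = 0 := by
    filter_upwards [hu.ae_differentiableAt] with p hp hpq
    refine det_eq_zero_of_norm_sub_eventually_const hS.ne' (h := h) (p := p) (q := q) ?_ ?_
    · convert (hasFDerivAt_id p).add hp.hasFDerivAt using 1
      ext p'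
      simp
    · filter_upwards [isOpen_ball.mem_nhds hpq] with p' hp'
      exact hsphere p' (by simpa [dist_eq_norm] using hp')
  rw [setIntegral_congr_ae measurableSet_ball hdet, integral_zero] at hvol
  exact (ENNReal.toReal_pos (measure_ball_pos μ q hS).ne' measure_ball_lt_top.ne).ne hvol

lemma exists_mapsTo_ball_of_eq_id {f : X → X} (hf : Continuous f) {R : ℝ}
    (hid : ∀ p, R ≤ ‖p‖ → f p = p) (q : X) (ρ : ℝ) :
    ∃ S, ρ ≤ S ∧ (∀ p, S ≤ ‖p - q‖ → f p = p) ∧ ∀ p, ‖p - q‖ < S → ‖f p - q‖ ≤ S := by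
  obtain ⟨M, hM⟩ := (isCompact_closedBall (0 : X) R).exists_bound_of_continuousOn
    (f := fun p => f p - q) (by fun_prop)
  refine ⟨max ρ (max M (R + ‖q‖)), le_max_left _ _, fun p hp => hid p ?_, fun p hp => ?_⟩
  · have hpq := (((le_max_right _ _).trans (le_max_right _ _)).trans hp).trans (norm_sub_le p q)
    linarith
  · rcases le_total R ‖p‖ with hR | hR
    · rw [hid p hR]
      exact hp.le
    · exact (hM p (by simpa using hR)).trans ((le_max_left _ _).trans (le_max_right _ _))

/-- Otherwise composing `f` with the radial push away from `q` would retract a ball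
to its sphere. -/
lemma exists_norm_sub_lt_of_lipschitz {f : X → X} {L : ℝ≥0} (hL : LipschitzWith L f) {R : ℝ}
    (hid : ∀ p, R ≤ ‖p‖ → f p = p) (q : X) {ρ : ℝ} (hρ : 0 < ρ) : ∃ p, ‖f p - q‖ < ρ := by
  by_contra! hfar
  obtain ⟨S, hρS, hSid, hSmap⟩ := exists_mapsTo_ball_of_eq_id hL.continuous hid q ρ
  have hS : 0 < S := hρ.trans_le hρS
  have hlip : LipschitzWith (Real.toNNReal (2 * (S / ρ) + 1) * L)
      (radialPush S ∘ fun p => f p - q) := by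
    rw [← lipschitzOnWith_univ]
    exact (lipschitzOnWith_radialPush hS.le hρ).comp
      (by simpa using hL.sub (LipschitzWith.const q)) fun p _ => hfar p
  refine not_exists_lipschitz_retraction (q := q)
    (h := fun p => q + (radialPush S ∘ fun p => f p - q) p)
    (by simpa using (LipschitzWith.const q).add hlip) hS (fun p hp => ?_) fun p hp => ?_
  · rw [Function.comp_apply, hSid p hp, radialPush_of_le hp, add_sub_cancel]
  · rw [Function.comp_apply, add_sub_cancel_left]
    exact norm_radialPush_of_le (norm_pos_iff.1 (hρ.trans_le (hfar p))) (hSmap p hp)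

lemma exists_lipschitz_near_of_continuous {f : X → X} (hf : Continuous f) {R a : ℝ}
    (hfa : ∀ p, ‖p‖ ≤ R → ‖f p - p‖ ≤ a) {σ : ℝ} (hσ : 0 < σ) (hσR : σ < R) :
    ∃ (g : X → X) (L : ℝ≥0), LipschitzWith L g ∧ (∀ p, R ≤ ‖p‖ → g p = p) ∧
      (∀ p, ‖g p - p‖ ≤ a + σ) ∧ ∀ p, ‖p‖ ≤ R - σ → ‖g p - f p‖ < σ := by
  let χ : ContDiffBump (0 : X) := ⟨R + 1, R + 2, by linarith, by linarith⟩
  let χ' : ContDiffBump (0 : X) := ⟨R - σ, R, by linarith, by linarith⟩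
  obtain ⟨v, hv, hvf⟩ := ((χ.hasCompactSupport.smul_right
    (f' := fun p => f p - p)).uniformContinuous_of_continuous
      (χ.continuous.smul (hf.sub continuous_id))).exists_contDiff_dist_le hσ
  replace hvf : ∀ p, ‖p‖ ≤ R → ‖v p - (f p - p)‖ < σ := fun p hp => by
    have hχ : χ p = 1 := χ.one_of_mem_closedBall (by simp [χ]; linarith)
    simpa [hχ, dist_eq_norm] using hvf p
  have hχ0 : ∀ p, R ≤ ‖p‖ → χ' p • v p = 0 := fun p hp => by
    rw [χ'.zero_of_le_dist (by simpa [χ'] using hp), zero_smul]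
  have hχv : ContDiff ℝ 1 fun p => χ' p • v p := χ'.contDiff.smul (hv.of_le (by simp))
  obtain ⟨L, hL⟩ := hχv.lipschitzWith_of_hasCompactSupport
    χ'.hasCompactSupport.smul_right one_ne_zero
  refine ⟨fun p => p + χ' p • v p, 1 + L, LipschitzWith.id.add hL, fun p hp => ?_, fun p => ?_,
    fun p hp => ?_⟩
  · exact (congrArg (p + ·) (hχ0 p hp)).trans (add_zero p)
  · rw [add_sub_cancel_left]
    rcases le_total ‖p‖ R with hp | hp
    · calc ‖χ' p • v p‖ = χ' p * ‖v p‖ := by rw [norm_smul, Real.norm_of_nonneg χ'.nonneg]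
        _ ≤ ‖v p‖ := mul_le_of_le_one_left (norm_nonneg _) χ'.le_one
        _ ≤ ‖f p - p‖ + ‖v p - (f p - p)‖ := norm_le_norm_add_norm_sub' _ _
        _ ≤ a + σ := add_le_add (hfa p hp) (hvf p hp).le
    · rw [hχ0 p hp, norm_zero]
      have ha := (norm_nonneg _).trans (hfa 0 (by simpa using (hσ.trans hσR).le))
      positivity
  · have hχ1 : χ' p = 1 := χ'.one_of_mem_closedBall (by simpa [χ'] using hp)
    simp only [hχ1, one_smul]
    convert hvf p (by linarith) using 2
    abel

lemma exists_norm_sub_lt_of_continuous {f : X → X} (hf : Continuous f) {R a : ℝ} (hR : 0 ≤ R)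
    (hfa : ∀ p, ‖p‖ ≤ R → ‖f p - p‖ ≤ a) {q : X} (hq : ‖q‖ < R - a) {ρ : ℝ} (hρ : 0 < ρ) :
    ∃ p, ‖p‖ ≤ R ∧ ‖f p - q‖ < ρ := by
  obtain ⟨σ, hσ, hσρ, hσq⟩ : ∃ σ : ℝ, 0 < σ ∧ 2 * σ ≤ ρ ∧ ‖q‖ + 3 * σ < R - a :=
    ⟨min (ρ / 2) ((R - a - ‖q‖) / 4), lt_min (by linarith) (by linarith),
      by linarith [min_le_left (ρ / 2) ((R - a - ‖q‖) / 4)],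
      by linarith [min_le_right (ρ / 2) ((R - a - ‖q‖) / 4)]⟩
  have ha : 0 ≤ a := (norm_nonneg _).trans (hfa 0 (by simpa using hR))
  obtain ⟨g, L, hL, hid, hga, hgf⟩ :=
    exists_lipschitz_near_of_continuous hf hfa hσ (by linarith [norm_nonneg q])
  obtain ⟨p, hp⟩ := exists_norm_sub_lt_of_lipschitz hL hid q hσ
  have hpR : ‖p‖ ≤ R - σ := by
    have hpq := norm_le_norm_add_norm_sub' p (g p)
    have hgq := norm_le_norm_add_norm_sub' (g p) q
    linarith [hga p, norm_sub_rev p (g p)]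
  refine ⟨p, by linarith, ?_⟩
  calc ‖f p - q‖ ≤ ‖f p - g p‖ + ‖g p - q‖ := norm_sub_le_norm_sub_add_norm_sub _ _ _
    _ < σ + σ := add_lt_add (by rw [norm_sub_rev]; exact hgf p hpR) hp
    _ ≤ ρ := by linarith

end Retraction

section Subspaces

variable {X : Type*} [NormedAddCommGroup X] [InnerProductSpace ℝ X] [FiniteDimensional ℝ X]
  {W W' : Submodule ℝ X}

lemma norm_sub_starProjection_le (W : Submodule ℝ X) (x : X) {w : X} (hw : w ∈ W) :
    ‖x - W.starProjection x‖ ≤ ‖x - w‖ := by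
  rw [Submodule.starProjection_minimal]
  exact ciInf_le ⟨0, by rintro _ ⟨y, rfl⟩; positivity⟩ (⟨w, hw⟩ : W)

lemma norm_sub_starProjection_le_norm (W : Submodule ℝ X) (x : X) :
    ‖x - W.starProjection x‖ ≤ ‖x‖ := by
  simpa using norm_sub_starProjection_le W x W.zero_mem

lemma norm_sub_starProjection_le_of_norm_eq {a ρ : ℝ} (hρ : 0 < ρ)
    (h : ∀ v ∈ W, ‖v‖ = ρ → ‖v - W'.starProjection v‖ ≤ a * ρ) {v : X} (hv : v ∈ W) :
    ‖v - W'.starProjection v‖ ≤ a * ‖v‖ := by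
  rcases eq_or_ne v 0 with rfl | hv0
  · simp
  have hpos : 0 < ‖v‖ := norm_pos_iff.2 hv0
  have hscaled := h ((ρ / ‖v‖) • v) (W.smul_mem _ hv) (by
    rw [norm_smul, Real.norm_of_nonneg (by positivity), div_mul_cancel₀ _ hpos.ne'])
  rw [map_smul, ← smul_sub, norm_smul, Real.norm_of_nonneg (by positivity), div_mul_eq_mul_div,
    div_le_iff₀ hpos] at hscaled
  exact le_of_mul_le_mul_left (by linarith) hρ

lemma norm_sub_starProjection_symm_le (hdim : Module.finrank ℝ W = Module.finrank ℝ W') {a : ℝ}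
    (ha0 : 0 ≤ a) (ha : a ≤ 1 / 2) (h : ∀ v ∈ W, ‖v - W'.starProjection v‖ ≤ a * ‖v‖)
    {w : X} (hw : w ∈ W') : ‖w - W.starProjection w‖ ≤ 2 * a * ‖w‖ := by
  have hlow : ∀ v ∈ W, ‖v‖ ≤ 2 * ‖W'.starProjection v‖ := fun v hv => by
    have hsplit := norm_le_norm_add_norm_sub' v (W'.starProjection v)
    linarith [h v hv, mul_le_mul_of_nonneg_right ha (norm_nonneg v)]
  let T : W →ₗ[ℝ] W' := (W'.orthogonalProjectionOnto : X →ₗ[ℝ] W').comp W.subtype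
  have hT : ∀ v : W, ((T v : W') : X) = W'.starProjection v := fun v => rfl
  have hinj : Function.Injective T := (injective_iff_map_eq_zero T).2 fun v hv => by
    have hv0 := hlow v v.2
    rw [← hT v, hv] at hv0
    simpa using hv0
  obtain ⟨v, hv⟩ := (LinearMap.injective_iff_surjective_of_finrank_eq_finrank hdim).1 hinj ⟨w, hw⟩
  have hvw : W'.starProjection (v : X) = w := by rw [← hT v, hv]
  calc ‖w - W.starProjection w‖ ≤ ‖w - v‖ := norm_sub_starProjection_le W w v.2
    _ ≤ a * ‖(v : X)‖ := by rw [norm_sub_rev, ← hvw]; exact h v v.2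
    _ ≤ a * (2 * ‖w‖) := by gcongr; exact hvw ▸ hlow v v.2
    _ = 2 * a * ‖w‖ := by ring

lemma norm_starProjection_sub_starProjection_apply_le {b : ℝ}
    (h : ∀ w ∈ W', ‖w - W.starProjection w‖ ≤ b * ‖w‖) (hb : 0 ≤ b) (x : X) :
    ‖W'.starProjection (x - W.starProjection x)‖ ≤ b * ‖x‖ := by
  set w := W'.starProjection (x - W.starProjection x) with hw_def
  have hw : w ∈ W' := W'.starProjection_apply_mem _
  have hinner : ‖w‖ * ‖w‖ = inner ℝ (w - W.starProjection w) x := by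
    have horth := Submodule.starProjection_inner_eq_zero (K := W') (x - W.starProjection x) w hw
    rw [← hw_def, inner_sub_left, sub_eq_zero, real_inner_self_eq_norm_mul_norm,
      real_inner_comm] at horth
    rw [← horth, inner_sub_right, inner_sub_left,
      Submodule.inner_starProjection_left_eq_right W w x]
  rcases (norm_nonneg w).eq_or_lt with h0 | h0
  · rw [← h0]
    positivity
  refine le_of_mul_le_mul_right ?_ h0
  calc ‖w‖ * ‖w‖ ≤ ‖w - W.starProjection w‖ * ‖x‖ := hinner ▸ real_inner_le_norm _ _
    _ ≤ b * ‖w‖ * ‖x‖ := by gcongr; exact h w hw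
    _ = b * ‖x‖ * ‖w‖ := by ring

lemma opNorm_starProjection_sub_le (hdim : Module.finrank ℝ W = Module.finrank ℝ W') {a : ℝ}
    (ha0 : 0 ≤ a) (ha : a ≤ 1 / 2) (h : ∀ v ∈ W, ‖v - W'.starProjection v‖ ≤ a * ‖v‖) :
    ‖W.starProjection - W'.starProjection‖ ≤ 3 * a := by
  refine ContinuousLinearMap.opNorm_le_bound _ (by positivity) fun x => ?_
  calc ‖(W.starProjection - W'.starProjection) x‖
      = ‖(W.starProjection x - W'.starProjection (W.starProjection x)) -
          W'.starProjection (x - W.starProjection x)‖ := by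
        congr 1
        simp only [sub_apply, map_sub]
        abel
    _ ≤ a * ‖W.starProjection x‖ + 2 * a * ‖x‖ :=
        (norm_sub_le _ _).trans (add_le_add (h _ (W.starProjection_apply_mem x))
          (norm_starProjection_sub_starProjection_apply_le
            (fun w hw => norm_sub_starProjection_symm_le hdim ha0 ha h hw) (by positivity) x))
    _ ≤ a * ‖x‖ + 2 * a * ‖x‖ := by gcongr; exact W.norm_starProjection_apply_le x
    _ = 3 * a * ‖x‖ := by ring

lemma exists_tilted_vector (hdim : Module.finrank ℝ W = Module.finrank ℝ W') {δ : ℝ}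
    (hδ0 : 0 < δ) (hδ : δ ≤ 2) (h : δ ≤ ‖W.starProjection - W'.starProjection‖) :
    ∃ v ∈ W, ‖v‖ = 1 ∧ δ / 4 ≤ ‖v - W'.starProjection v‖ := by
  by_contra! hcon
  have := opNorm_starProjection_sub_le hdim (a := δ / 4) (by positivity) (by linarith) fun v hv =>
    norm_sub_starProjection_le_of_norm_eq one_pos
      (fun u hu hu1 => by linarith [hcon u hu hu1]) hv
  linarith

end Subspaces

/-- `E` is `ε`-close, in both directions and at every scale up to `1`, to the chosen
`d`-dimensional planes `e + W e t` through its points. -/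
structure FlatField {X : Type*} [NormedAddCommGroup X] [InnerProductSpace ℝ X]
    [FiniteDimensional ℝ X] (d : ℕ) (ε : ℝ) (E : Set X) (W : X → ℝ → Submodule ℝ X) : Prop where
  isClosed : IsClosed E
  eps_pos : 0 < ε
  finrank_eq : ∀ e ∈ E, ∀ t, 0 < t → t ≤ 1 → Module.finrank ℝ (W e t) = d
  near_plane : ∀ e ∈ E, ∀ t, 0 < t → t ≤ 1 → ∀ f ∈ E, ‖f - e‖ < t →
    ‖(f - e) - (W e t).starProjection (f - e)‖ ≤ ε * t
  near_set : ∀ e ∈ E, ∀ t, 0 < t → t ≤ 1 → ∀ v ∈ W e t, ‖v‖ < t → ∃ f ∈ E, ‖f - (e + v)‖ ≤ ε * t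

section LARRF

variable {n : ℕ} {x : V n} {r : ℝ}

lemma nhd_comm (x : V n) (r : ℝ) (A B : Set (V n)) : nhd x r A B = nhd x r B A := by
  rw [nhd, nhd, max_comm]

lemma infDist_le_mul_of_nhd_le (hr : 0 < r) {A B : Set (V n)} (hxB : x ∈ B) {ε : ℝ}
    (h : nhd x r A B ≤ ε) {y : V n} (hyA : y ∈ A) (hy : y ∈ ball x r) :
    infDist y B ≤ ε * r := by
  have hbound : ∀ y, (⨆ _ : y ∈ A ∩ ball x r, infDist y B) ≤ r := fun y =>
    Real.iSup_le (fun hy => (infDist_le_dist_of_mem hxB).trans hy.2.le) hr.le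
  have hle : infDist y B ≤ ⨆ y ∈ A ∩ ball x r, infDist y B := by
    refine le_ciSup_of_le ⟨r, ?_⟩ y (by rw [ciSup_pos ⟨hyA, hy⟩])
    rintro _ ⟨z, rfl⟩
    exact hbound z
  rw [nhd, inv_mul_le_iff₀ hr, mul_comm] at h
  exact hle.trans ((le_max_left _ _).trans h)

lemma norm_sub_starProjection_direction_le {Q : AffineSubspace ℝ (V n)} {A : Set (V n)} {ε : ℝ}
    (hr : 0 < r) (hxQ : x ∈ Q) (h : nhd x r Q A ≤ ε) {f : V n} (hf : f ∈ A) (hfx : ‖f - x‖ < r) :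
    ‖(f - x) - Q.direction.starProjection (f - x)‖ ≤ ε * r := by
  obtain ⟨y, hyQ, hy⟩ := (Q.closed_of_finiteDimensional).exists_infDist_eq_dist ⟨x, hxQ⟩ f
  calc ‖(f - x) - Q.direction.starProjection (f - x)‖ ≤ ‖(f - x) - (y - x)‖ :=
        norm_sub_starProjection_le _ _ (AffineSubspace.vsub_mem_direction hyQ hxQ)
    _ = infDist f Q := by rw [sub_sub_sub_cancel_right, ← dist_eq_norm, ← hy]
    _ ≤ ε * r := infDist_le_mul_of_nhd_le hr hxQ (nhd_comm x r _ _ ▸ h) hf (mem_ball_iff_norm.2 hfx)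

lemma exists_norm_sub_add_le_of_mem_direction {Q : AffineSubspace ℝ (V n)} {A : Set (V n)} {ε : ℝ}
    (hr : 0 < r) (hA : IsClosed A) (hxQ : x ∈ Q) (hxA : x ∈ A) (h : nhd x r Q A ≤ ε) {v : V n}
    (hv : v ∈ Q.direction) (hvr : ‖v‖ < r) : ∃ f ∈ A, ‖f - (x + v)‖ ≤ ε * r := by
  obtain ⟨f, hf, hfv⟩ := hA.exists_infDist_eq_dist ⟨x, hxA⟩ (x + v)
  have hxv : x + v ∈ Q := add_comm v x ▸ AffineSubspace.vadd_mem_of_mem_direction hv hxQ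
  refine ⟨f, hf, ?_⟩
  rw [← dist_eq_norm, dist_comm, ← hfv]
  exact infDist_le_mul_of_nhd_le hr hxA h hxv (by simpa [dist_eq_norm] using hvr)

lemma IsLARRF.exists_flatField {d : ℕ} {ε C₀ : ℝ} {E : Set (V n)} (hε : 0 < ε)
    (hE : IsLARRF n d ε C₀ E) : ∃ W, FlatField d ε E W := by
  have hplane : ∀ e t, ∃ W : Submodule ℝ (V n), e ∈ E → 0 < t → t ≤ 1 →
      Module.finrank ℝ W = d ∧
      (∀ f ∈ E, ‖f - e‖ < t → ‖(f - e) - W.starProjection (f - e)‖ ≤ ε * t) ∧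
      ∀ v ∈ W, ‖v‖ < t → ∃ f ∈ E, ‖f - (e + v)‖ ≤ ε * t := fun e t => by
    by_cases h : e ∈ E ∧ 0 < t ∧ t ≤ 1
    · obtain ⟨he, ht0, ht1⟩ := h
      obtain ⟨⟨_, ⟨Q, rfl, hdim, -⟩, heQ, hQ⟩, -⟩ := hE.2.2 e he t ht0 ht1
      exact ⟨Q.direction, fun _ _ _ => ⟨hdim,
        fun f hf hft => norm_sub_starProjection_direction_le ht0 heQ hQ hf hft,
        fun v hv hvt => exists_norm_sub_add_le_of_mem_direction ht0 hE.2.1 heQ he hQ hv hvt⟩⟩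
    · exact ⟨⊥, fun he ht0 ht1 => absurd ⟨he, ht0, ht1⟩ h⟩
  choose W hW using hplane
  exact ⟨W, hE.2.1, hε, fun e he t h0 h1 => (hW e t he h0 h1).1,
    fun e he t h0 h1 => (hW e t he h0 h1).2.1, fun e he t h0 h1 => (hW e t he h0 h1).2.2⟩

end LARRF

namespace FlatField

variable {X : Type*} [NormedAddCommGroup X] [InnerProductSpace ℝ X] [FiniteDimensional ℝ X]
  {d : ℕ} {ε : ℝ} {E : Set X} {W : X → ℝ → Submodule ℝ X}

lemma norm_sub_starProjection_le_of_le (hF : FlatField d ε E W) {e f : X} (he : e ∈ E)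
    (hf : f ∈ E) {t T : ℝ} (ht : 0 < t) (hT : T ≤ 1) (htT : ‖e - f‖ + 2 * t ≤ T) (hε : ε ≤ 1)
    {v : X} (hv : v ∈ W e t) (hvt : ‖v‖ = t / 2) :
    ‖v - (W f T).starProjection v‖ ≤ 3 * ε * T := by
  have hef := norm_nonneg (e - f)
  have hεT := mul_le_mul_of_nonneg_left (by linarith : t ≤ T) hF.eps_pos.le
  obtain ⟨g, hg, hgv⟩ := hF.near_set e he t ht (by linarith) v hv (by linarith)
  have hgf : ‖g - f‖ < T := by
    calc ‖g - f‖ = ‖(g - (e + v)) + (e - f) + v‖ := by congr 1; abel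
      _ ≤ ‖g - (e + v)‖ + ‖e - f‖ + ‖v‖ := norm_add₃_le
      _ < T := by linarith [mul_le_of_le_one_left ht.le hε]
  set Q : X → X := fun z => z - (W f T).starProjection z with hQ
  calc ‖Q v‖ = ‖Q (g - f) - Q (e - f) - Q (g - (e + v))‖ := by
        congr 1
        simp only [hQ, map_sub, map_add]
        abel
    _ ≤ ‖Q (g - f)‖ + ‖Q (e - f)‖ + ‖Q (g - (e + v))‖ :=
        (norm_sub_le _ _).trans (add_le_add_left (norm_sub_le _ _) _)
    _ ≤ ε * T + ε * T + ε * t := by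
        gcongr
        · exact hF.near_plane f hf T (by linarith) hT g hg hgf
        · exact hF.near_plane f hf T (by linarith) hT e he (by linarith)
        · exact (norm_sub_starProjection_le_norm _ _).trans hgv
    _ ≤ 3 * ε * T := by linarith

lemma norm_sub_le_of_le (hF : FlatField d ε E W) {e f : X} (he : e ∈ E) (hf : f ∈ E)
    {t T Λ : ℝ} (ht : 0 < t) (hT : T ≤ 1) (htT : ‖e - f‖ + 2 * t ≤ T) (hΛ : T ≤ Λ * t)
    (hε : 6 * Λ * ε ≤ 1 / 2) :
    ‖(W e t).starProjection - (W f T).starProjection‖ ≤ 18 * Λ * ε := by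
  have hε0 := hF.eps_pos
  have hef := norm_nonneg (e - f)
  have hΛ2 : 2 ≤ Λ := le_of_mul_le_mul_right (by linarith : 2 * t ≤ Λ * t) ht
  have hdim : Module.finrank ℝ (W e t) = Module.finrank ℝ (W f T) := by
    rw [hF.finrank_eq e he t ht (by linarith), hF.finrank_eq f hf T (by linarith) hT]
  have hclose := opNorm_starProjection_sub_le hdim (a := 6 * Λ * ε) (by positivity) hε fun v hv =>
    norm_sub_starProjection_le_of_norm_eq (half_pos ht) (fun u hu hut => ?_) hv
  · linarith
  calc ‖u - (W f T).starProjection u‖ ≤ 3 * ε * T :=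
        hF.norm_sub_starProjection_le_of_le he hf ht hT htT (by nlinarith) hu hut
    _ ≤ 3 * ε * (Λ * t) := by gcongr
    _ = 6 * Λ * ε * (t / 2) := by ring

lemma norm_sub_le_of_comparable (hF : FlatField d ε E W) {e f : X} (he : e ∈ E) (hf : f ∈ E)
    {t t' T Λ : ℝ} (ht : 0 < t) (ht' : 0 < t') (hT : T ≤ 1) (htT : ‖e - f‖ + 2 * t ≤ T)
    (htT' : 2 * t' ≤ T) (hΛ : T ≤ Λ * t) (hΛ' : T ≤ Λ * t') (hε : 6 * Λ * ε ≤ 1 / 2) :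
    ‖(W e t).starProjection - (W f t').starProjection‖ ≤ 36 * Λ * ε := by
  have he' := hF.norm_sub_le_of_le he hf ht hT htT hΛ hε
  have hf' := hF.norm_sub_le_of_le hf hf ht' hT (by simpa using htT') hΛ' hε
  rw [norm_sub_rev] at hf'
  linarith [norm_sub_le_norm_sub_add_norm_sub (W e t).starProjection (W f T).starProjection
    (W f t').starProjection]

end FlatField

namespace FlatField

variable {X Y : Type*} [NormedAddCommGroup X] [InnerProductSpace ℝ X] [FiniteDimensional ℝ X]
  {d : ℕ} {ε : ℝ} {E : Set X} {W : X → ℝ → Submodule ℝ X}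

lemma exists_norm_sub_le_of_norm_sub_starProjection_le (hF : FlatField d ε E W) {e p : X}
    (he : e ∈ E) {t : ℝ} (ht : 0 < t) (ht1 : t ≤ 1) (hpe : ‖p - e‖ < t) :
    ∃ f ∈ E, ‖p - f‖ ≤ ‖(p - e) - (W e t).starProjection (p - e)‖ + ε * t := by
  obtain ⟨f, hf, hfe⟩ := hF.near_set e he t ht ht1 _ (Submodule.starProjection_apply_mem _ (p - e))
    ((Submodule.norm_starProjection_apply_le _ _).trans_lt hpe)
  refine ⟨f, hf, ?_⟩
  calc ‖p - f‖ = ‖((p - e) - (W e t).starProjection (p - e)) -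
        (f - (e + (W e t).starProjection (p - e)))‖ := by congr 1; abel
    _ ≤ _ := (norm_sub_le _ _).trans (by gcongr)

lemma exists_near_of_mem_convexHull (hF : FlatField d ε E W) {z p e : X} {τ : ℝ} (hτ : 0 < τ)
    (hτ1 : 2 * τ ≤ 1) (he : e ∈ E) (hez : ‖z - e‖ < τ) (hp : p ∈ convexHull ℝ (E ∩ ball z τ)) :
    ∃ f ∈ E, ‖p - f‖ ≤ 4 * ε * τ := by
  let Q : X →L[ℝ] X := ContinuousLinearMap.id ℝ X - (W e (2 * τ)).starProjection
  let slab : Set X := ball e (2 * τ) ∩ (fun y => y + -e) ⁻¹' (Q ⁻¹' closedBall 0 (ε * (2 * τ)))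
  have hslab : Convex ℝ slab := (convex_ball _ _).inter
    (((convex_closedBall _ _).linear_preimage Q.toLinearMap).translate_preimage_left _)
  have hsub : E ∩ ball z τ ⊆ slab := fun y hy => by
    have hye : ‖y - e‖ < 2 * τ := by
      linarith [mem_ball_iff_norm.1 hy.2, norm_sub_le_norm_sub_add_norm_sub y z e]
    refine ⟨mem_ball_iff_norm.2 hye, ?_⟩
    simpa [Q, sub_eq_add_neg] using hF.near_plane e he _ (by positivity) hτ1 y hy.1 hye
  obtain ⟨hpe, hpQ⟩ := convexHull_min hsub hslab hp
  replace hpQ : ‖(p - e) - (W e (2 * τ)).starProjection (p - e)‖ ≤ ε * (2 * τ) := by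
    simpa [Q, sub_eq_add_neg] using hpQ
  obtain ⟨f, hf, hpf⟩ := hF.exists_norm_sub_le_of_norm_sub_starProjection_le he (by positivity)
    hτ1 (mem_ball_iff_norm.1 hpe)
  exact ⟨f, hf, by linarith⟩

lemma exists_continuous_closer [TopologicalSpace Y] [NormalSpace Y] [ParacompactSpace Y]
    (hF : FlatField d ε E W) (hε : ε ≤ 1 / 16) {f : Y → X} (hf : Continuous f)
    {τ : ℝ} (hτ : 0 < τ) (hτ1 : 2 * τ ≤ 1) (hfE : ∀ p, ∃ e ∈ E, ‖f p - e‖ < τ) :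
    ∃ g : Y → X, Continuous g ∧ (∀ p, ‖g p - f p‖ ≤ τ) ∧ ∀ p, ∃ e ∈ E, ‖g p - e‖ < τ / 2 := by
  obtain ⟨g, hg⟩ := exists_continuous_forall_mem_convex_of_local_const
    (t := fun p => convexHull ℝ (E ∩ ball (f p) τ)) (fun p => convex_convexHull ℝ _) fun p => by
      obtain ⟨e, he, hpe⟩ := hfE p
      refine ⟨e, ?_⟩
      filter_upwards [(isOpen_lt (by fun_prop) continuous_const :
        IsOpen {q | ‖f q - e‖ < τ}).mem_nhds hpe] with q hq
      exact subset_convexHull ℝ _ ⟨he, by rwa [mem_ball_iff_norm, norm_sub_rev]⟩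
  refine ⟨g, g.continuous, fun p => ?_, fun p => ?_⟩
  · exact (mem_ball_iff_norm.1
      (convexHull_min inter_subset_right (convex_ball _ _) (hg p))).le
  · obtain ⟨e, he, hpe⟩ := hfE p
    obtain ⟨e', he', hge⟩ := hF.exists_near_of_mem_convexHull hτ hτ1 he hpe (hg p)
    exact ⟨e', he', hge.trans_lt (by nlinarith)⟩

lemma exists_continuous_closer_pow [TopologicalSpace Y] [NormalSpace Y] [ParacompactSpace Y]
    (hF : FlatField d ε E W) (hε : ε ≤ 1 / 16) {f : Y → X} (hf : Continuous f)
    {τ : ℝ} (hτ : 0 < τ) (hτ1 : 2 * τ ≤ 1) (hfE : ∀ p, ∃ e ∈ E, ‖f p - e‖ < τ) (k : ℕ) :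
    ∃ g : Y → X, Continuous g ∧ (∀ p, ‖g p - f p‖ ≤ 2 * τ - 2 * (τ / 2 ^ k)) ∧
      ∀ p, ∃ e ∈ E, ‖g p - e‖ < τ / 2 ^ k := by
  induction k with
  | zero => exact ⟨f, hf, by simp, by simpa using hfE⟩
  | succ k ih =>
    obtain ⟨g, hg, hgf, hgE⟩ := ih
    have hτk : τ / 2 ^ k ≤ τ := div_le_self hτ.le (one_le_pow₀ one_le_two)
    obtain ⟨g', hg', hgg', hgE'⟩ := hF.exists_continuous_closer hε hg
      (by positivity : 0 < τ / 2 ^ k) (by linarith) hgE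
    have hhalf : τ / 2 ^ (k + 1) = τ / 2 ^ k / 2 := by rw [pow_succ, div_div]
    refine ⟨g', hg', fun p => ?_, hhalf ▸ hgE'⟩
    linarith [hgf p, hgg' p, norm_sub_le_norm_sub_add_norm_sub (g' p) (g p) (f p)]

lemma exists_continuous_near [TopologicalSpace Y] [NormalSpace Y] [ParacompactSpace Y]
    (hF : FlatField d ε E W) (hε : ε ≤ 1 / 16) {f : Y → X} (hf : Continuous f)
    {τ : ℝ} (hτ : 0 < τ) (hτ1 : 2 * τ ≤ 1) (hfE : ∀ p, ∃ e ∈ E, ‖f p - e‖ < τ) {η : ℝ}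
    (hη : 0 < η) :
    ∃ g : Y → X, Continuous g ∧ (∀ p, ‖g p - f p‖ ≤ 2 * τ) ∧ ∀ p, ∃ e ∈ E, ‖g p - e‖ < η := by
  obtain ⟨k, hk⟩ := pow_unbounded_of_one_lt (τ / η) one_lt_two
  obtain ⟨g, hg, hgf, hgE⟩ := hF.exists_continuous_closer_pow hε hf hτ hτ1 hfE k
  have hτk : τ / 2 ^ k < η := (div_lt_comm₀ hη (by positivity)).1 hk
  refine ⟨g, hg, fun p => (hgf p).trans (by simpa using by positivity), fun p => ?_⟩
  obtain ⟨e, he, hpe⟩ := hgE p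
  exact ⟨e, he, hpe.trans hτk⟩

lemma exists_continuous_disc (hF : FlatField d ε E W) (hε : ε < 1) {e : X} (he : e ∈ E) {t : ℝ}
    (ht : 0 < t) (ht1 : t ≤ 1) :
    ∃ f : W e t → X, Continuous f ∧ (∀ p, ‖p‖ ≤ (1 - ε) * t → f p = e + p) ∧
      ∀ p, ∃ g ∈ E, ‖f p - g‖ < 2 * ε * t := by
  have hεt : 0 < ε * t := mul_pos hF.eps_pos ht
  set R : ℝ := (1 - ε) * t
  have hR : 0 < R := mul_pos (by linarith) ht
  have hRt : R < t := by linarith [sub_mul 1 ε t]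
  have hmax : ∀ p : W e t, 0 < max R ‖p‖ := fun p => hR.trans_le (le_max_left _ _)
  refine ⟨fun p => e + ((R / max R ‖p‖) • p : W e t), ?_, fun p hp => ?_, fun p => ?_⟩
  · have : Continuous fun p : W e t => R / max R ‖p‖ :=
      continuous_const.div (by fun_prop) fun p => (hmax p).ne'
    fun_prop
  · simp only [max_eq_left hp, div_self hR.ne', one_smul]
  · have hnorm : ‖(((R / max R ‖p‖) • p : W e t) : X)‖ < t := by
      refine lt_of_le_of_lt ?_ hRt
      rw [← Submodule.coe_norm, norm_smul, Real.norm_of_nonneg (by positivity [hmax p]),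
        div_mul_eq_mul_div, div_le_iff₀ (hmax p)]
      exact mul_le_mul_of_nonneg_left (le_max_right _ _) hR.le
    obtain ⟨g, hg, hge⟩ := hF.near_set e he t ht ht1 _ (Subtype.prop _) hnorm
    exact ⟨g, hg, by rw [norm_sub_rev]; linarith⟩

lemma exists_norm_starProjection_sub_lt {U : Submodule ℝ X} {g : U → X} (hg : Continuous g)
    {e : X} {R a : ℝ} (hR : 0 ≤ R) (hga : ∀ p : U, ‖p‖ ≤ R → ‖g p - (e + p)‖ ≤ a) {q : X}
    (hqU : q ∈ U) (hq : ‖q‖ < R - a) {η : ℝ} (hη : 0 < η) :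
    ∃ p : U, ‖p‖ ≤ R ∧ ‖U.starProjection (g p - e) - q‖ < η := by
  refine exists_norm_sub_lt_of_continuous (q := (⟨q, hqU⟩ : U))
    (f := fun p => U.orthogonalProjectionOnto (g p - e)) (by fun_prop) hR (fun p hp => ?_) hq hη
  have hp' : U.starProjection (p : X) = p := Submodule.starProjection_eq_self_iff.2 p.2
  calc ‖U.orthogonalProjectionOnto (g p - e) - p‖ = ‖U.starProjection (g p - (e + p))‖ := by
        rw [← sub_sub, map_sub _ (g p - e), hp']
        rfl
    _ ≤ a := (U.norm_starProjection_apply_le _).trans (hga p hp)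

lemma exists_starProjection_near (hF : FlatField d ε E W) (hε : ε ≤ 1 / 16) {e : X} (he : e ∈ E)
    {t : ℝ} (ht : 0 < t) (ht1 : t ≤ 1) {q : X} (hqW : q ∈ W e t) (hq : ‖q‖ ≤ (1 - 6 * ε) * t)
    {η : ℝ} (hη : 0 < η) (hηt : η ≤ ε * t) :
    ∃ f ∈ E ∩ closedBall (e + q) (10 * ε * t), ‖(W e t).starProjection (f - e) - q‖ ≤ 2 * η := by
  have : 0 < ε * t := mul_pos hF.eps_pos ht
  obtain ⟨f₀, hf₀, hf₀id, hf₀E⟩ := hF.exists_continuous_disc (by linarith) he ht ht1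
  obtain ⟨g, hg, hgf, hgE⟩ := hF.exists_continuous_near hε hf₀ (by linarith)
    (by nlinarith) hf₀E hη
  have hmove : ∀ p : W e t, ‖p‖ ≤ (1 - ε) * t → ‖g p - (e + p)‖ ≤ 4 * ε * t := fun p hp => by
    rw [← hf₀id p hp]
    linarith [hgf p]
  obtain ⟨p, hpR, hpq⟩ := exists_norm_starProjection_sub_lt hg (mul_nonneg (by linarith) ht.le)
    hmove hqW (by linarith [sub_mul 1 ε t, sub_mul 1 (6 * ε) t]) hη
  have hpq' : ‖(p : X) - q‖ ≤ 4 * ε * t + η := by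
    have hp : (W e t).starProjection (p : X) = p := Submodule.starProjection_eq_self_iff.2 p.2
    calc ‖(p : X) - q‖ = ‖((W e t).starProjection (g p - e) - q) -
          (W e t).starProjection (g p - (e + p))‖ := by
          rw [← sub_sub, map_sub _ (g p - e), hp]; congr 1; abel
      _ ≤ η + ‖g p - (e + p)‖ := (norm_sub_le _ _).trans
          (add_le_add hpq.le (Submodule.norm_starProjection_apply_le _ _))
      _ ≤ 4 * ε * t + η := by linarith [hmove p hpR]
  obtain ⟨f, hf, hfg⟩ := hgE p
  refine ⟨f, ⟨hf, mem_closedBall_iff_norm.2 ?_⟩, ?_⟩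
  · calc ‖f - (e + q)‖ = ‖(f - g p) + (g p - (e + p)) + ((p : X) - q)‖ := by congr 1; abel
      _ ≤ ‖f - g p‖ + ‖g p - (e + p)‖ + ‖(p : X) - q‖ := norm_add₃_le
      _ ≤ 10 * ε * t := by linarith [hmove p hpR, norm_sub_rev f (g p)]
  · calc ‖(W e t).starProjection (f - e) - q‖
        = ‖((W e t).starProjection (g p - e) - q) - (W e t).starProjection (g p - f)‖ := by
          congr 1; simp only [map_sub]; abel
      _ ≤ ‖(W e t).starProjection (g p - e) - q‖ + ‖(W e t).starProjection (g p - f)‖ :=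
          norm_sub_le _ _
      _ ≤ 2 * η := by linarith [(W e t).norm_starProjection_apply_le (g p - f)]

lemma exists_starProjection_eq (hF : FlatField d ε E W) (hε : ε ≤ 1 / 16) {e : X} (he : e ∈ E)
    {t : ℝ} (ht : 0 < t) (ht1 : t ≤ 1) {q : X} (hqW : q ∈ W e t) (hq : ‖q‖ ≤ (1 - 6 * ε) * t) :
    ∃ f ∈ E, (W e t).starProjection (f - e) = q ∧ ‖f - e - q‖ ≤ 10 * ε * t := by
  have hεt : 0 < ε * t := mul_pos hF.eps_pos ht
  have hK : IsCompact (E ∩ closedBall (e + q) (10 * ε * t)) :=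
    (isCompact_closedBall _ _).inter_left hF.isClosed
  obtain ⟨f₁, hf₁, -⟩ := hF.exists_starProjection_near hε he ht ht1 hqW hq hεt le_rfl
  obtain ⟨f, hf, hmin⟩ := hK.exists_isMinOn ⟨f₁, hf₁⟩
    (f := fun f => ‖(W e t).starProjection (f - e) - q‖) (by fun_prop)
  refine ⟨f, hf.1, ?_, by simpa [dist_eq_norm, sub_sub] using hf.2⟩
  refine sub_eq_zero.1 (norm_le_zero_iff.1 (le_of_forall_pos_le_add fun η hη => ?_))
  obtain ⟨f', hf', hfq⟩ := hF.exists_starProjection_near hε he ht ht1 hqW hq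
    (lt_min (half_pos hη) hεt) (min_le_right _ _)
  calc _ ≤ _ := hmin hf'
    _ ≤ 2 * min (η / 2) (ε * t) := hfq
    _ ≤ 0 + η := by linarith [min_le_left (η / 2) (ε * t)]

end FlatField

/-- A scale function on `E` which is nearly constant on balls of the corresponding radius. -/
def SlowlyVarying {X : Type*} [NormedAddCommGroup X] (E : Set X) (s : X → ℝ) : Prop :=
  ∀ e ∈ E, ∀ f ∈ E, s e ≤ s f + ‖e - f‖ / 10

lemma SlowlyVarying.le_add {X : Type*} [NormedAddCommGroup X] {E : Set X} {s : X → ℝ}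
    (hs : SlowlyVarying E s) {e f : X} (he : e ∈ E) (hf : f ∈ E) : s f ≤ s e + ‖e - f‖ / 10 :=
  norm_sub_rev e f ▸ hs f hf e he

section Scales

variable {X : Type*} [NormedAddCommGroup X] [InnerProductSpace ℝ X] [FiniteDimensional ℝ X]

/-- A decreasing chain of stopping scales: between `s k e` and `s (k + 1) e` the planes at `e` stay
close to the one at scale `s k e`, and near scale `s (k + 1) e` they have turned by `δ`. -/
structure ScaleChain (E : Set X) (W : X → ℝ → Submodule ℝ X) (δ θ r : ℝ) (s : ℕ → X → ℝ) :
    Prop where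
  zero_eq : ∀ e, s 0 e = r
  nonneg : ∀ k, ∀ e ∈ E, 0 ≤ s k e
  succ_le : ∀ k, ∀ e ∈ E, s (k + 1) e ≤ θ * s k e
  slowlyVarying : ∀ k, SlowlyVarying E (s k)
  tilt : ∀ k, ∀ e ∈ E, 0 < s (k + 1) e → ∃ t, s (k + 1) e / 2 ≤ t ∧ t ≤ θ * s k e ∧
    δ ≤ ‖(W e t).starProjection - (W e (s k e)).starProjection‖
  close : ∀ k, ∀ e ∈ E, ∀ t, 0 < t → s (k + 1) e ≤ t → t ≤ s k e →
    ‖(W e t).starProjection - (W e (s k e)).starProjection‖ ≤ 2 * δ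

lemma ScaleChain.antitone {E : Set X} {W : X → ℝ → Submodule ℝ X} {δ θ r : ℝ} {s : ℕ → X → ℝ}
    (hS : ScaleChain E W δ θ r s) (hθ : θ ≤ 1) {e : X} (he : e ∈ E) : Antitone fun k => s k e :=
  antitone_nat_of_succ_le fun k =>
    (hS.succ_le k e he).trans (mul_le_of_le_one_left (hS.nonneg k e he) hθ)

lemma ScaleChain.le {E : Set X} {W : X → ℝ → Submodule ℝ X} {δ θ r : ℝ} {s : ℕ → X → ℝ}
    (hS : ScaleChain E W δ θ r s) (hθ : θ ≤ 1) (k : ℕ) {e : X} (he : e ∈ E) : s k e ≤ r :=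
  hS.zero_eq e ▸ hS.antitone hθ he k.zero_le

variable (E : Set X) (W : X → ℝ → Submodule ℝ X) (δ θ : ℝ)

/-- The largest scale below `θ * s f` at which the plane at `f` has turned by `δ`
(`0` if there is none). -/
def tiltScale (s : X → ℝ) (f : X) : ℝ :=
  sSup {t | 0 < t ∧ t ≤ θ * s f ∧ δ ≤ ‖(W f t).starProjection - (W f (s f)).starProjection‖}

/-- The largest slowly varying function on `E` below `tiltScale`. -/
def nextScale (s : X → ℝ) (e : X) : ℝ :=
  ⨅ f : E, (tiltScale W δ θ s f + ‖e - f‖ / 10)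

/-- The successive stopping scales, starting from the constant scale `r`. -/
def stoppingScale (r : ℝ) : ℕ → X → ℝ
  | 0 => fun _ => r
  | k + 1 => nextScale E W δ θ (stoppingScale r k)

variable {E W δ θ} {d : ℕ} {ε r : ℝ} {s : X → ℝ} {e f : X}

variable (W δ θ) in
lemma tiltScale_nonneg (s : X → ℝ) (f : X) : 0 ≤ tiltScale W δ θ s f :=
  Real.sSup_nonneg fun _ ht => ht.1.le

lemma tiltScale_le (h : 0 ≤ θ * s f) : tiltScale W δ θ s f ≤ θ * s f :=
  Real.sSup_le (fun _ ht => ht.2.1) h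

lemma norm_lt_of_tiltScale_lt {t : ℝ} (ht0 : 0 < t) (ht : t ≤ θ * s f)
    (h : tiltScale W δ θ s f < t) :
    ‖(W f t).starProjection - (W f (s f)).starProjection‖ < δ := by
  by_contra! hcon
  exact h.not_ge (le_csSup ⟨θ * s f, fun _ ht => ht.2.1⟩ ⟨ht0, ht, hcon⟩)

variable (W δ θ) in
lemma tiltScale_add_nonneg (s : X → ℝ) (e f : X) : 0 ≤ tiltScale W δ θ s f + ‖e - f‖ / 10 :=
  add_nonneg (tiltScale_nonneg W δ θ s f) (by positivity)

lemma nextScale_nonneg (s : X → ℝ) (e : X) : 0 ≤ nextScale E W δ θ s e :=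
  Real.iInf_nonneg fun f => tiltScale_add_nonneg W δ θ s e f

lemma nextScale_le (s : X → ℝ) (e : X) (hf : f ∈ E) :
    nextScale E W δ θ s e ≤ tiltScale W δ θ s f + ‖e - f‖ / 10 :=
  ciInf_le ⟨0, forall_mem_range.2 fun f : E => tiltScale_add_nonneg W δ θ s e f⟩ (⟨f, hf⟩ : E)

lemma nextScale_le_tiltScale (s : X → ℝ) (he : e ∈ E) :
    nextScale E W δ θ s e ≤ tiltScale W δ θ s e := by
  simpa using nextScale_le (W := W) (δ := δ) (θ := θ) s e he

lemma slowlyVarying_nextScale (s : X → ℝ) : SlowlyVarying E (nextScale E W δ θ s) := by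
  intro e _ f hf
  have : Nonempty E := ⟨⟨f, hf⟩⟩
  rw [← sub_le_iff_le_add]
  refine le_ciInf fun g => ?_
  linarith [nextScale_le (W := W) (δ := δ) (θ := θ) s e g.2,
    norm_sub_le_norm_sub_add_norm_sub e f g]

lemma exists_tilt_of_nextScale_pos (he : e ∈ E) (h : 0 < nextScale E W δ θ s e) :
    ∃ t, nextScale E W δ θ s e / 2 ≤ t ∧ t ≤ θ * s e ∧
      δ ≤ ‖(W e t).starProjection - (W e (s e)).starProjection‖ := by
  have hlt : nextScale E W δ θ s e / 2 < tiltScale W δ θ s e := by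
    linarith [nextScale_le_tiltScale (W := W) (δ := δ) (θ := θ) s he]
  have hne : {t | 0 < t ∧ t ≤ θ * s e ∧
      δ ≤ ‖(W e t).starProjection - (W e (s e)).starProjection‖}.Nonempty := by
    rw [nonempty_iff_ne_empty]
    intro hempty
    rw [tiltScale, hempty, Real.sSup_empty] at hlt
    linarith
  obtain ⟨t, ht, hlt⟩ := exists_lt_of_lt_csSup hne hlt
  exact ⟨t, hlt.le, ht.2.1, ht.2.2⟩

lemma FlatField.norm_sub_le_of_mul_le (hF : FlatField d ε E W) (hf : f ∈ E) {T S : ℝ}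
    (hT : 0 < T) (hθ0 : 0 < θ) (hε : 12 * (ε / θ) ≤ 1 / 2) (hθS : θ * S ≤ T)
    (hTS : T ≤ S) (hS : 2 * S ≤ 1) :
    ‖(W f T).starProjection - (W f S).starProjection‖ ≤ 72 * (ε / θ) := by
  have hS0 : 0 < S := hT.trans_le hTS
  have h2 : 2 * S ≤ 2 / θ * T := by
    rw [div_mul_eq_mul_div, le_div_iff₀ hθ0]
    linarith
  refine (hF.norm_sub_le_of_comparable hf hf hT hS0 hS (by simpa using hTS) le_rfl h2
    (h2.trans (by gcongr)) ((le_of_eq ?_).trans hε)).trans_eq ?_ <;> ring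

lemma FlatField.norm_sub_le_of_tiltScale_lt (hF : FlatField d ε E W) (hf : f ∈ E) {T : ℝ}
    (hθ0 : 0 < θ) (hε : 12 * (ε / θ) ≤ 1 / 2) (hT : tiltScale W δ θ s f < T)
    (hTs : T ≤ s f) (hs : 2 * s f ≤ 1) (hδ : 0 ≤ δ) :
    ‖(W f T).starProjection - (W f (s f)).starProjection‖ ≤ δ + 72 * (ε / θ) := by
  have hT0 : 0 < T := (tiltScale_nonneg W δ θ s f).trans_lt hT
  have hεθ : 0 < ε / θ := div_pos hF.eps_pos hθ0
  rcases le_total (θ * s f) T with h | h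
  · linarith [hF.norm_sub_le_of_mul_le hf hT0 hθ0 hε h hTs hs]
  · linarith [norm_lt_of_tiltScale_lt hT0 h hT]

/-- If `nextScale e` is much smaller than `s e`, this is because of the turning scale at a point
`f` at distance comparable to `nextScale e`, so we compare `W e t` with `W f (40 * t)`, then with
`W f (s f)`, and then with `W e (s e)`. -/
lemma FlatField.norm_sub_le_of_nextScale_le (hF : FlatField d ε E W) (hδ : δ ≤ 1) (hθ0 : 0 < θ)
    (hθ : θ ≤ 1 / 1000) (hε : 10000 * ε ≤ δ * θ) (hs1 : ∀ e ∈ E, s e ≤ 1 / 10)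
    (hs : SlowlyVarying E s) (he : e ∈ E) {t : ℝ} (ht0 : 0 < t) (ht : nextScale E W δ θ s e ≤ t)
    (hts : t ≤ s e) :
    ‖(W e t).starProjection - (W e (s e)).starProjection‖ ≤ 2 * δ := by
  have hε0 := hF.eps_pos
  have hεδ : 10000 * (ε / θ) ≤ δ := by rwa [← mul_div_assoc, div_le_iff₀ hθ0]
  have hεθ : 1000 * ε ≤ ε / θ := by
    rw [le_div_iff₀ hθ0]
    nlinarith
  have hse := hs1 e he
  rcases le_or_gt (θ * s e) t with hθt | hθt
  · linarith [hF.norm_sub_le_of_mul_le he ht0 hθ0 (by linarith) hθt hts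
      (by linarith)]
  have : Nonempty E := ⟨⟨e, he⟩⟩
  obtain ⟨⟨f, hf⟩, hft : tiltScale W δ θ s f + ‖e - f‖ / 10 < 2 * t⟩ :=
    exists_lt_of_ciInf_lt (by linarith : nextScale E W δ θ s e < 2 * t)
  have htf := tiltScale_nonneg W δ θ s f
  have hef0 := norm_nonneg (e - f)
  have htse : 1000 * t ≤ s e := by nlinarith
  have hef := hs e he f hf
  have hfe := hs.le_add he hf
  have h₁ := hF.norm_sub_le_of_le he hf (t := t) (T := 40 * t) (Λ := 40) ht0 (by linarith)
    (by linarith) le_rfl (by linarith)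
  have h₂ := hF.norm_sub_le_of_tiltScale_lt hf (T := 40 * t) hθ0 (by linarith)
    (by linarith) (by linarith) (by linarith [hs1 f hf]) (by linarith : 0 ≤ δ)
  have h₃ := hF.norm_sub_le_of_comparable he hf (t := s e) (t' := s f) (T := 4 * s e) (Λ := 8)
    (by linarith) (by linarith) (by linarith) (by linarith) (by linarith) (by linarith)
    (by linarith) (by linarith)
  rw [norm_sub_rev] at h₃
  linarith [norm_sub_le_norm_sub_add_norm_sub (W e t).starProjection
      (W f (40 * t)).starProjection (W e (s e)).starProjection,
    norm_sub_le_norm_sub_add_norm_sub (W f (40 * t)).starProjection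
      (W f (s f)).starProjection (W e (s e)).starProjection]

lemma stoppingScale_nonneg (hr : 0 ≤ r) (k : ℕ) (e : X) : 0 ≤ stoppingScale E W δ θ r k e := by
  cases k with
  | zero => exact hr
  | succ k => exact nextScale_nonneg _ _

lemma stoppingScale_succ_le (hr : 0 ≤ r) (hθ : 0 ≤ θ) (k : ℕ) (he : e ∈ E) :
    stoppingScale E W δ θ r (k + 1) e ≤ θ * stoppingScale E W δ θ r k e :=
  (nextScale_le_tiltScale _ he).trans (tiltScale_le (mul_nonneg hθ (stoppingScale_nonneg hr k e)))

lemma slowlyVarying_stoppingScale (k : ℕ) : SlowlyVarying E (stoppingScale E W δ θ r k) := by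
  cases k with
  | zero => exact fun e _ f _ => le_add_of_nonneg_right (by positivity)
  | succ k => exact slowlyVarying_nextScale _

lemma FlatField.scaleChain (hF : FlatField d ε E W) (hδ : δ ≤ 1) (hθ0 : 0 < θ)
    (hθ : θ ≤ 1 / 1000) (hε : 10000 * ε ≤ δ * θ) (hr0 : 0 < r) (hr : r ≤ 1 / 10) :
    ScaleChain E W δ θ r (stoppingScale E W δ θ r) := by
  have hanti : ∀ e ∈ E, Antitone fun k => stoppingScale E W δ θ r k e := fun e he =>
    antitone_nat_of_succ_le fun k => (stoppingScale_succ_le hr0.le hθ0.le k he).trans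
      (mul_le_of_le_one_left (stoppingScale_nonneg hr0.le k e) (by linarith))
  have hle : ∀ k, ∀ e ∈ E, stoppingScale E W δ θ r k e ≤ 1 / 10 := fun k e he =>
    (hanti e he k.zero_le).trans hr
  exact ⟨fun _ => rfl, fun k e _ => stoppingScale_nonneg hr0.le k e,
    fun k e he => stoppingScale_succ_le hr0.le hθ0.le k he, slowlyVarying_stoppingScale,
    fun k e he h => exists_tilt_of_nextScale_pos he h,
    fun k e he t h0 h1 h2 => hF.norm_sub_le_of_nextScale_le hδ hθ0 hθ hε (hle k)
      (slowlyVarying_stoppingScale k) he h0 h1 h2⟩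

end Scales

section Glueing

variable {X Z : Type*} [NormedAddCommGroup X]

/-- The local functions `A f` agree up to first order, with error `η`, on balls about `f` of
radius comparable to the slowly varying scale `s f`. -/
structure LocallyCompatible [NormedAddCommGroup Z] (E : Set X) (s : X → ℝ) (A : X → X → Z)
    (η : ℝ) : Prop where
  slowlyVarying : SlowlyVarying E s
  norm_sub_le : ∀ e ∈ E, ∀ f ∈ E, 0 < s e → ‖e - f‖ ≤ s e / 2 → ∀ z, ‖z - e‖ ≤ s e →
    ‖A f z - A e z‖ ≤ η * s e
  norm_sub_sub_le : ∀ e ∈ E, ∀ f ∈ E, 0 < s e → ‖e - f‖ ≤ s e / 2 → ∀ z w,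
    ‖(A f z - A e z) - (A f w - A e w)‖ ≤ η * ‖z - w‖

/-- The values at `z` of the local functions active at `z`, with a penalty that makes the
functions centred far from `z` irrelevant for the infimum. -/
def glueValues (E : Set X) (s : X → ℝ) (A : X → X → ℝ) (η : ℝ) (z : X) : Set ℝ :=
  {y | ∃ f ∈ E, 0 < s f ∧ ‖z - f‖ < s f / 4 ∧ y = A f z + 100 * η * ‖z - f‖}

/-- The glueing of the local functions `A f` (equal to `0` where none is active). -/
def glue (E : Set X) (s : X → ℝ) (A : X → X → ℝ) (η : ℝ) (z : X) : ℝ :=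
  sInf (glueValues E s A η z)

variable {E : Set X} {s : X → ℝ}

lemma SlowlyVarying.norm_sub_le_half (hs : SlowlyVarying E s) {e f z : X} (he : e ∈ E) (hf : f ∈ E)
    (hz : ‖z - e‖ ≤ s e / 40) (hzf : ‖z - f‖ < s f / 4) : ‖e - f‖ ≤ s e / 2 := by
  linarith [hs.le_add he hf, norm_sub_rev e z, norm_nonneg (z - e),
    norm_sub_le_norm_sub_add_norm_sub e z f]

lemma glue_eq_zero {A : X → X → ℝ} {η : ℝ} (hs : SlowlyVarying E s) {e : X} (he : e ∈ E)
    (hse : s e ≤ 0) : glue E s A η e = 0 := by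
  have hempty : glueValues E s A η e = ∅ := by
    rw [eq_empty_iff_forall_notMem]
    rintro _ ⟨f, hf, hsf, hef, -⟩
    linarith [hs.le_add he hf]
  rw [glue, hempty, Real.sInf_empty]

namespace LocallyCompatible

section Real

variable {A : X → X → ℝ} {η : ℝ} {e z w : X}

lemma mem_glueValues (he : e ∈ E) (hse : 0 < s e) (hz : ‖z - e‖ ≤ s e / 40) :
    A e z + 100 * η * ‖z - e‖ ∈ glueValues E s A η z :=
  ⟨e, he, hse, by linarith, rfl⟩

lemma sub_le_of_mem_glueValues (hA : LocallyCompatible E s A η) (hη : 0 ≤ η) (he : e ∈ E)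
    (hse : 0 < s e) (hz : ‖z - e‖ ≤ s e / 40) {y : ℝ} (hy : y ∈ glueValues E s A η z) :
    A e z - η * s e ≤ y := by
  obtain ⟨f, hf, _, hzf, rfl⟩ := hy
  have hef := hA.slowlyVarying.norm_sub_le_half he hf hz hzf
  have hclose := (abs_le.1 (hA.norm_sub_le e he f hf hse hef z (by linarith))).1
  have : 0 ≤ 100 * η * ‖z - f‖ := by positivity
  linarith

lemma glue_le (hA : LocallyCompatible E s A η) (hη : 0 ≤ η) (he : e ∈ E) (hse : 0 < s e)
    (hz : ‖z - e‖ ≤ s e / 40) {y : ℝ} (hy : y ∈ glueValues E s A η z) : glue E s A η z ≤ y :=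
  csInf_le ⟨_, fun _ hy => hA.sub_le_of_mem_glueValues hη he hse hz hy⟩ hy

lemma norm_glue_sub_le (hA : LocallyCompatible E s A η) (hη : 0 ≤ η) (he : e ∈ E)
    (hse : 0 < s e) (hz : ‖z - e‖ ≤ s e / 40) : ‖glue E s A η z - A e z‖ ≤ 101 * η * s e := by
  have hηs : 0 ≤ η * s e := by positivity
  have hlow : A e z - η * s e ≤ glue E s A η z := le_csInf ⟨_, mem_glueValues he hse hz⟩
    fun _ hy => hA.sub_le_of_mem_glueValues hη he hse hz hy
  have hup := hA.glue_le hη he hse hz (mem_glueValues he hse hz)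
  have hpen : 100 * η * ‖z - e‖ ≤ 100 * η * (s e / 40) := by gcongr
  exact abs_le.2 ⟨by linarith, by linarith⟩

/-- A function nearly realizing the infimum at `z` has its centre so close to `z` that it is still
active at `w`. -/
lemma glue_sub_sub_le (hA : LocallyCompatible E s A η) (hη : 0 < η) (he : e ∈ E)
    (hse : 0 < s e) (hz : ‖z - e‖ ≤ s e / 40) (hw : ‖w - e‖ ≤ s e / 40) :
    (glue E s A η w - A e w) - (glue E s A η z - A e z) ≤ 101 * η * ‖z - w‖ := by
  refine le_of_forall_pos_le_add fun κ hκ => ?_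
  have hηs : 0 < η * s e := by positivity
  obtain ⟨y, ⟨f, hf, hsf, hzf, rfl⟩, hy⟩ := exists_lt_of_csInf_lt ⟨_, mem_glueValues he hse hz⟩
    (lt_add_of_pos_right (glue E s A η z) (lt_min hκ hηs))
  have hef := hA.slowlyVarying.norm_sub_le_half he hf hz hzf
  have hval := (abs_le.1 (hA.norm_sub_le e he f hf hse hef z (by linarith))).1
  have hlin := (abs_le.1 (hA.norm_sub_sub_le e he f hf hse hef z w)).1
  have hupz := hA.glue_le hη.le he hse hz (mem_glueValues he hse hz)
  have hzf' : ‖z - f‖ ≤ s e / 20 := by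
    have : η * (100 * ‖z - f‖) ≤ η * (5 * s e) := by
      nlinarith [min_le_right κ (η * s e)]
    linarith [le_of_mul_le_mul_left this hη]
  have hwf : ‖w - f‖ ≤ ‖z - w‖ + ‖z - f‖ :=
    norm_sub_rev z w ▸ norm_sub_le_norm_sub_add_norm_sub _ _ _
  have hzw : ‖z - w‖ ≤ ‖z - e‖ + ‖w - e‖ :=
    norm_sub_rev w e ▸ norm_sub_le_norm_sub_add_norm_sub _ _ _
  have hactive : ‖w - f‖ < s f / 4 := by linarith [hA.slowlyVarying e he f hf]
  have hupw := hA.glue_le hη.le he hse hw ⟨f, hf, hsf, hactive, rfl⟩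
  have hpen : 100 * η * ‖w - f‖ ≤ 100 * η * (‖z - w‖ + ‖z - f‖) := by gcongr
  linarith [min_le_left κ (η * s e)]

lemma norm_glue_sub_sub_le (hA : LocallyCompatible E s A η) (hη : 0 < η) (he : e ∈ E)
    (hse : 0 < s e) (hz : ‖z - e‖ ≤ s e / 40) (hw : ‖w - e‖ ≤ s e / 40) :
    ‖(glue E s A η z - A e z) - (glue E s A η w - A e w)‖ ≤ 101 * η * ‖z - w‖ := by
  have hzw := hA.glue_sub_sub_le hη he hse hz hw
  have hwz := hA.glue_sub_sub_le hη he hse hw hz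
  rw [norm_sub_rev w z] at hwz
  exact abs_le.2 ⟨by linarith, hwz⟩

end Real

variable [NormedAddCommGroup Z] [InnerProductSpace ℝ Z]

lemma inner_left {A : X → X → Z} {η : ℝ} (hA : LocallyCompatible E s A η) {b : Z}
    (hb : ‖b‖ = 1) : LocallyCompatible E s (fun f z => inner ℝ b (A f z)) η := by
  have hle : ∀ v : Z, ‖(inner ℝ b v : ℝ)‖ ≤ ‖v‖ := fun v => by
    simpa [hb] using abs_real_inner_le_norm b v
  refine ⟨hA.slowlyVarying, fun e he f hf hse hef z hz => ?_, fun e he f hf hse hef z w => ?_⟩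
  · rw [← inner_sub_right]
    exact (hle _).trans (hA.norm_sub_le e he f hf hse hef z hz)
  · rw [← inner_sub_right, ← inner_sub_right, ← inner_sub_right]
    exact (hle _).trans (hA.norm_sub_sub_le e he f hf hse hef z w)

end LocallyCompatible

lemma norm_le_card_mul_of_inner_le {ι : Type*} [Fintype ι] [NormedAddCommGroup Z]
    [InnerProductSpace ℝ Z] (b : OrthonormalBasis ι ℝ Z) {v : Z} {a : ℝ}
    (h : ∀ i, ‖(inner ℝ (b i) v : ℝ)‖ ≤ a) : ‖v‖ ≤ Fintype.card ι * a := by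
  calc ‖v‖ = ‖∑ i, (inner ℝ (b i) v : ℝ) • b i‖ := by rw [b.sum_repr']
    _ ≤ ∑ i, ‖(inner ℝ (b i) v : ℝ)‖ := (norm_sum_le _ _).trans_eq (by simp [norm_smul])
    _ ≤ ∑ _i : ι, a := Finset.sum_le_sum fun i _ => h i
    _ = Fintype.card ι * a := by simp

lemma LocallyCompatible.exists_glueing [NormedAddCommGroup Z] [InnerProductSpace ℝ Z]
    [FiniteDimensional ℝ Z] {A : X → X → Z} {η : ℝ} (hA : LocallyCompatible E s A η)
    (hη : 0 < η) :
    ∃ h : X → Z, (∀ e ∈ E, s e ≤ 0 → h e = 0) ∧ ∀ e ∈ E, 0 < s e → ∀ z, ‖z - e‖ ≤ s e / 40 →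
      ‖h z - A e z‖ ≤ Module.finrank ℝ Z * (101 * η * s e) ∧ ∀ w, ‖w - e‖ ≤ s e / 40 →
        ‖(h z - A e z) - (h w - A e w)‖ ≤ Module.finrank ℝ Z * (101 * η * ‖z - w‖) := by
  let b := stdOrthonormalBasis ℝ Z
  let h : X → Z := fun z => ∑ i, glue E s (fun f z => inner ℝ (b i) (A f z)) η z • b i
  have hAi := fun i => hA.inner_left (b.norm_eq_one i)
  have hcoord : ∀ i z, inner ℝ (b i) (h z) = glue E s (fun f z => inner ℝ (b i) (A f z)) η z :=
    fun i z => b.orthonormal.inner_right_fintype _ i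
  have hbound : ∀ {v : Z} {a : ℝ}, (∀ i, ‖(inner ℝ (b i) v : ℝ)‖ ≤ a) →
      ‖v‖ ≤ Module.finrank ℝ Z * a := fun hv => by
    simpa using norm_le_card_mul_of_inner_le b hv
  refine ⟨h, fun e he hse => ?_, fun e he hse z hz => ⟨hbound fun i => ?_,
    fun w hw => hbound fun i => ?_⟩⟩
  · simp only [h, glue_eq_zero hA.slowlyVarying he hse, zero_smul, Finset.sum_const_zero]
  · rw [inner_sub_right, hcoord]
    exact (hAi i).norm_glue_sub_le hη.le he hse hz
  · rw [inner_sub_right, inner_sub_right, inner_sub_right, hcoord, hcoord]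
    exact (hAi i).norm_glue_sub_sub_le hη he hse hz hw

end Glueing

section Flattening

variable {X : Type*} [NormedAddCommGroup X] [InnerProductSpace ℝ X] [FiniteDimensional ℝ X]

/-- `Y` flattens `F` at the scale `s`: near `e ∈ F` it is `β`-close to the orthogonal projection
onto the plane through `e` of direction `W e (s e)`. -/
structure Flattens (F : Set X) (W : X → ℝ → Submodule ℝ X) (s : X → ℝ) (β : ℝ) (Y : X → X) :
    Prop where
  eq_self : ∀ e ∈ F, s e ≤ 0 → Y e = e
  near : ∀ e ∈ F, 0 < s e → ∀ z, ‖z - e‖ ≤ s e / 40 →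
    ‖Y z - (e + (W e (s e)).starProjection (z - e))‖ ≤ β * s e
  near_sub : ∀ e ∈ F, 0 < s e → ∀ z, ‖z - e‖ ≤ s e / 40 → ∀ w, ‖w - e‖ ≤ s e / 40 →
    ‖Y z - Y w - (W e (s e)).starProjection (z - w)‖ ≤ β * ‖z - w‖

variable {d : ℕ} {ε β r : ℝ} {E F : Set X} {W : X → ℝ → Submodule ℝ X} {s : X → ℝ} {Y : X → X}

lemma Flattens.mono {β' : ℝ} (hY : Flattens E W s β Y) (hF : F ⊆ E) (hβ : β ≤ β') :
    Flattens F W s β' Y :=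
  ⟨fun e he => hY.eq_self e (hF he),
    fun e he hse z hz => (hY.near e (hF he) hse z hz).trans (by gcongr),
    fun e he hse z hz w hw => (hY.near_sub e (hF he) hse z hz w hw).trans (by gcongr)⟩

lemma Flattens.norm_sub_le (hY : Flattens F W s β Y) {e z w : X} (he : e ∈ F) (hse : 0 < s e)
    (hz : ‖z - e‖ ≤ s e / 40) (hw : ‖w - e‖ ≤ s e / 40) :
    ‖(Y z - Y w) - (W e (s e)).starProjection (Y z - Y w)‖ ≤ β * ‖z - w‖ :=
  (norm_sub_starProjection_le _ _ (Submodule.starProjection_apply_mem _ (z - w))).trans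
    (hY.near_sub e he hse z hz w hw)

lemma FlatField.norm_sub_le_of_slowlyVarying (hF : FlatField d ε E W) (hε : ε ≤ 1 / 48)
    (hs1 : ∀ e ∈ E, s e ≤ 1 / 10) (hs : SlowlyVarying E s) {e f : X} (he : e ∈ E) (hf : f ∈ E)
    (hse : 0 < s e) (hef : ‖e - f‖ ≤ s e / 2) :
    ‖(W e (s e)).starProjection - (W f (s f)).starProjection‖ ≤ 144 * ε := by
  have hse1 := hs1 e he
  have hsef := hs e he f hf
  have hsfe := hs.le_add he hf
  have := hF.norm_sub_le_of_comparable he hf (t := s e) (t' := s f) (T := 5 / 2 * s e) (Λ := 4)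
    hse (by linarith) (by linarith) (by linarith) (by linarith) (by linarith) (by linarith)
    (by linarith)
  linarith

lemma FlatField.locallyCompatible_starProjection (hF : FlatField d ε E W) (hε : ε ≤ 1 / 48)
    (hs1 : ∀ e ∈ E, s e ≤ 1 / 10) (hs : SlowlyVarying E s) :
    LocallyCompatible E s (fun f z => (W f (s f)).starProjection (z - f) - (z - f))
      (150 * ε) := by
  have hε0 := hF.eps_pos
  refine ⟨hs, fun e he f hf hse hef z hz => ?_, fun e he f hf hse hef z w => ?_⟩ <;>
    have hle := ((W e (s e)).starProjection - (W f (s f)).starProjection).le_of_opNorm_le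
      (hF.norm_sub_le_of_slowlyVarying hε hs1 hs he hf hse hef)
  · have hsef := hs e he f hf
    have hnear := hF.near_plane f hf (s f) (by linarith) (by linarith [hs1 f hf]) e he
      (by linarith)
    calc _ = ‖((W e (s e)).starProjection - (W f (s f)).starProjection) (z - e) +
            ((e - f) - (W f (s f)).starProjection (e - f))‖ := by
          rw [← norm_neg]; congr 1; simp only [sub_apply, map_sub]; abel
      _ ≤ 144 * ε * ‖z - e‖ + ε * s f := (norm_add_le _ _).trans (add_le_add (hle _) hnear)
      _ ≤ 144 * ε * s e + ε * (2 * s e) := by gcongr; linarith [hs.le_add he hf]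
      _ ≤ 150 * ε * s e := by nlinarith
  · calc _ = ‖((W e (s e)).starProjection - (W f (s f)).starProjection) (z - w)‖ := by
          rw [← norm_neg]; congr 1; simp only [sub_apply, map_sub]; abel
      _ ≤ 144 * ε * ‖z - w‖ := hle _
      _ ≤ 150 * ε * ‖z - w‖ := by gcongr; norm_num

lemma FlatField.exists_flattens (hF : FlatField d ε E W) (hε : ε ≤ 1 / 48)
    (hs1 : ∀ e ∈ E, s e ≤ 1 / 10) (hs : SlowlyVarying E s) :
    ∃ Y, Flattens E W s (Module.finrank ℝ X * (101 * (150 * ε))) Y := by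
  obtain ⟨h, h0, hA⟩ := (hF.locallyCompatible_starProjection hε hs1 hs).exists_glueing
    (mul_pos (by norm_num) hF.eps_pos)
  refine ⟨fun z => z + h z, fun e he hse => by simp only [h0 e he hse, add_zero],
    fun e he hse z hz => ?_, fun e he hse z hz w hw => ?_⟩
  · convert (hA e he hse z hz).1 using 1
    · congr 1; abel
    · ring
  · convert (hA e he hse z hz).2 w hw using 1
    · congr 1; simp only [map_sub]; abel
    · ring

lemma FlatField.flattens_proj (hF : FlatField d ε E W) (hε : ε ≤ 1 / 72) {x : X} (hx : x ∈ E)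
    (hr0 : 0 < r) (hr1 : r ≤ 1 / 10) (hs : ∀ e, s e = r) :
    Flattens (E ∩ ball x r) W s (250 * ε)
      (fun z => x + (W x (3 * r)).starProjection (z - x)) := by
  have hε0 := hF.eps_pos
  obtain rfl : s = fun _ => r := funext hs
  have hle : ∀ e ∈ E ∩ ball x r, ∀ v,
      ‖((W e r).starProjection - (W x (3 * r)).starProjection) v‖ ≤ 216 * ε * ‖v‖ := by
    intro e he v
    have hex := mem_ball_iff_norm.1 he.2
    refine ContinuousLinearMap.le_of_opNorm_le _ ((hF.norm_sub_le_of_comparable he.1 hx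
      (T := 6 * r) (Λ := 6) hr0 ?_ ?_ ?_ ?_ ?_ ?_ ?_).trans_eq ?_) v <;> linarith
  refine ⟨fun e _ hse => absurd hse hr0.not_ge, fun e he _ z hz => ?_, fun e he _ z _ w _ => ?_⟩
  · have hex := mem_ball_iff_norm.1 he.2
    have hnear := hF.near_plane x hx (3 * r) (by linarith) (by linarith) e he.1 (by linarith)
    calc _ = ‖((W e r).starProjection - (W x (3 * r)).starProjection) (z - e) +
            ((e - x) - (W x (3 * r)).starProjection (e - x))‖ := by
          rw [← norm_neg]; congr 1; simp only [sub_apply, map_sub]; abel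
      _ ≤ 216 * ε * (r / 40) + ε * (3 * r) := (norm_add_le _ _).trans
          (add_le_add ((hle e he _).trans (by gcongr)) hnear)
      _ ≤ 250 * ε * r := by nlinarith
  · calc _ = ‖((W e r).starProjection - (W x (3 * r)).starProjection) (z - w)‖ := by
          rw [← norm_neg]; congr 1; simp only [sub_apply, map_sub]; abel
      _ ≤ 216 * ε * ‖z - w‖ := hle e he _
      _ ≤ 250 * ε * ‖z - w‖ := by gcongr; norm_num

end Flattening

section FlatteningSeq

variable {X : Type*}

lemma exists_backward_seq (m : ℕ) (Y : ℕ → X → X) :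
    ∃ z : ℕ → X → X, (∀ e, z m e = e) ∧ ∀ k < m, ∀ e, z k e = Y k (z (k + 1) e) := by
  induction m generalizing Y with
  | zero => exact ⟨fun _ => id, fun _ => rfl, fun k hk => absurd hk k.not_lt_zero⟩
  | succ m ih =>
    obtain ⟨z, hz, h⟩ := ih fun k => Y (k + 1)
    refine ⟨fun k => Nat.casesOn k (fun e => Y 0 (z 0 e)) z, hz, fun k hk e => ?_⟩
    cases k with
    | zero => rfl
    | succ k => exact h k (Nat.lt_of_succ_lt_succ hk) e

variable [NormedAddCommGroup X] [InnerProductSpace ℝ X] [FiniteDimensional ℝ X]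

/-- The points `e` of a set `F` on which the `m`-th scale vanishes, moved by the successive
flattenings `Y (m - 1), …, Y 0`: the position of `e` after `m - k` steps is `z k e`. -/
structure FlatteningSeq (F : Set X) (W : X → ℝ → Submodule ℝ X) (δ θ r β : ℝ) (s : ℕ → X → ℝ)
    (m : ℕ) (Y z : ℕ → X → X) : Prop where
  scaleChain : ScaleChain F W δ θ r s
  theta_le : θ ≤ 1 / 1000
  delta_le : δ ≤ 1 / 6
  beta_pos : 0 < β
  beta_le : 2000 * β ≤ δ
  scale_eq_zero : ∀ e ∈ F, s m e = 0
  flattens : ∀ k, Flattens F W (s k) β (Y k)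
  last_eq : ∀ e, z m e = e
  eq_apply_succ : ∀ k < m, ∀ e, z k e = Y k (z (k + 1) e)

/-- Nearby points of the image of `F` under `z` have differences `2 * β`-close to the planes
`W e (s e)`. -/
def IsTangent (F : Set X) (W : X → ℝ → Submodule ℝ X) (β : ℝ) (s : X → ℝ) (z : X → X) : Prop :=
  ∀ e ∈ F, ∀ f ∈ F, ‖z e - z f‖ ≤ s e / 200 →
    ‖(z e - z f) - (W e (s e)).starProjection (z e - z f)‖ ≤ 2 * β * ‖z e - z f‖

lemma ScaleChain.mono {E F : Set X} {W : X → ℝ → Submodule ℝ X} {δ θ r : ℝ} {s : ℕ → X → ℝ}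
    (hs : ScaleChain E W δ θ r s) (hFE : F ⊆ E) : ScaleChain F W δ θ r s :=
  ⟨hs.zero_eq, fun k e he => hs.nonneg k e (hFE he), fun k e he => hs.succ_le k e (hFE he),
    fun k e he f hf => hs.slowlyVarying k e (hFE he) f (hFE hf),
    fun k e he => hs.tilt k e (hFE he), fun k e he => hs.close k e (hFE he)⟩

variable {E F : Set X} {W : X → ℝ → Submodule ℝ X} {δ θ r β ε : ℝ} {s : ℕ → X → ℝ} {d m k : ℕ}
  {Y z : ℕ → X → X} {e f : X}

namespace FlatteningSeq

lemma scale_succ_le (h : FlatteningSeq F W δ θ r β s m Y z) (k : ℕ) (he : e ∈ F) :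
    s (k + 1) e ≤ s k e / 1000 := by
  have hsucc := h.scaleChain.succ_le k e he
  have := mul_le_mul_of_nonneg_right h.theta_le (h.scaleChain.nonneg k e he)
  linarith

lemma beta_mul_le (h : FlatteningSeq F W δ θ r β s m Y z) {a : ℝ} (ha : 0 ≤ a) :
    β * a ≤ a / 12000 := by
  have := mul_le_mul_of_nonneg_right (by linarith [h.delta_le, h.beta_le] : β ≤ 1 / 12000) ha
  linarith

lemma norm_sub_le (h : FlatteningSeq F W δ θ r β s m Y z) (hk : k ≤ m) (he : e ∈ F) :
    ‖z k e - e‖ ≤ 2 * β * s k e := by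
  have hβ := h.beta_pos
  induction hk using Nat.decreasingInduction with
  | self => simp [h.last_eq, h.scale_eq_zero e he]
  | @of_succ k hk ih =>
    have hsucc := h.scale_succ_le k he
    have hnonneg := h.scaleChain.nonneg (k + 1) e he
    rw [h.eq_apply_succ k hk]
    rcases (h.scaleChain.nonneg k e he).eq_or_lt with h0 | h0
    · rw [show s (k + 1) e = 0 by linarith, mul_zero, norm_le_zero_iff, sub_eq_zero] at ih
      rw [ih, (h.flattens k).eq_self e he h0.symm.le, ← h0, sub_self, norm_zero, mul_zero]
    · have hstep : 2 * β * s (k + 1) e ≤ 2 * β * (s k e / 1000) := by gcongr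
      have hβs := h.beta_mul_le h0.le
      have hnear := (h.flattens k).near e he h0 (z (k + 1) e) (by linarith)
      have hproj := (W e (s k e)).norm_starProjection_apply_le (z (k + 1) e - e)
      have htri := norm_sub_le_norm_sub_add_norm_sub (Y k (z (k + 1) e))
        (e + (W e (s k e)).starProjection (z (k + 1) e - e)) e
      rw [add_sub_cancel_left] at htri
      linarith [mul_pos hβ h0]

lemma norm_sub_sub_le (h : FlatteningSeq F W δ θ r β s m Y z) (hk : k ≤ m) (he : e ∈ F)
    (hf : f ∈ F) : ‖(e - f) - (z k e - z k f)‖ ≤ 2 * β * (s k e + s k f) :=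
  calc ‖(e - f) - (z k e - z k f)‖ = ‖(z k f - f) - (z k e - e)‖ := by congr 1; abel
    _ ≤ ‖z k f - f‖ + ‖z k e - e‖ := _root_.norm_sub_le _ _
    _ ≤ 2 * β * (s k e + s k f) := by linarith [h.norm_sub_le hk he, h.norm_sub_le hk hf]

lemma norm_sub_le_add (h : FlatteningSeq F W δ θ r β s m Y z) (hk : k ≤ m) (he : e ∈ F)
    (hf : f ∈ F) : ‖e - f‖ ≤ ‖z k e - z k f‖ + s k e / 1000 + s k f / 1000 := by
  have hse := h.scaleChain.nonneg k e he
  have hsf := h.scaleChain.nonneg k f hf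
  linarith [h.norm_sub_sub_le hk he hf, h.beta_mul_le (add_nonneg hse hsf),
    norm_le_norm_sub_add (e - f) (z k e - z k f)]

lemma norm_succ_sub_le (h : FlatteningSeq F W δ θ r β s m Y z) (hk : k < m) (he : e ∈ F)
    (hf : f ∈ F) (hef : ‖e - f‖ ≤ s k e / 50) : ‖z (k + 1) f - e‖ ≤ s k e / 40 := by
  have hsf := h.scaleChain.nonneg (k + 1) f hf
  linarith [h.norm_sub_le (k := k + 1) hk hf, h.scale_succ_le k hf, h.beta_mul_le hsf,
    (h.scaleChain.slowlyVarying k).le_add he hf, h.scaleChain.nonneg k e he,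
    norm_sub_le_norm_sub_add_norm_sub (z (k + 1) f) f e, norm_sub_rev f e]

lemma norm_succ_self_sub_le (h : FlatteningSeq F W δ θ r β s m Y z) (hk : k < m) (he : e ∈ F) :
    ‖z (k + 1) e - e‖ ≤ s k e / 40 :=
  h.norm_succ_sub_le hk he he <| by
    rw [sub_self, norm_zero]
    exact div_nonneg (h.scaleChain.nonneg k e he) (by norm_num)

lemma norm_sub_sub_le_of_le (h : FlatteningSeq F W δ θ r β s m Y z) (hk : k < m) (he : e ∈ F)
    (hf : f ∈ F) (hfar : s k e / 200 ≤ ‖z (k + 1) e - z (k + 1) f‖) :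
    ‖(z (k + 1) e - z (k + 1) f) - (z k e - z k f)‖
      ≤ 3 * δ * ‖z (k + 1) e - z (k + 1) f‖ := by
  have hβ := h.beta_pos
  have hδ := h.beta_le
  have hdist := h.norm_sub_le_add (k := k + 1) hk he hf
  have hse := h.scale_succ_le k he
  have hsf := h.scale_succ_le k hf
  have hsfe := (h.scaleChain.slowlyVarying k).le_add he hf
  have hse0 := h.scaleChain.nonneg k e he
  calc ‖(z (k + 1) e - z (k + 1) f) - (z k e - z k f)‖
      = ‖((e - f) - (z k e - z k f)) - ((e - f) - (z (k + 1) e - z (k + 1) f))‖ := by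
        congr 1; abel
    _ ≤ 2 * β * (s k e + s k f) + 2 * β * (s (k + 1) e + s (k + 1) f) :=
        (_root_.norm_sub_le _ _).trans (add_le_add (h.norm_sub_sub_le hk.le he hf)
          (h.norm_sub_sub_le (k := k + 1) hk he hf))
    _ = 2 * β * (s k e + s k f + s (k + 1) e + s (k + 1) f) := by ring
    _ ≤ 2 * β * (500 * ‖z (k + 1) e - z (k + 1) f‖) := by gcongr; linarith
    _ = 1000 * β * ‖z (k + 1) e - z (k + 1) f‖ := by ring
    _ ≤ 3 * δ * ‖z (k + 1) e - z (k + 1) f‖ :=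
        mul_le_mul_of_nonneg_right (by linarith) (norm_nonneg _)

lemma norm_sub_starProjection_le_of_lt (h : FlatteningSeq F W δ θ r β s m Y z)
    (hF : FlatField d ε E W) (hFE : F ⊆ E) (hε : ε ≤ β) (hr : r ≤ 1 / 10) (hk : k < m)
    (he : e ∈ F) (hf : f ∈ F) {v : X} (hv : v = z (k + 1) e - z (k + 1) f)
    (hlow : s (k + 1) e / 200 < ‖v‖) (hup : ‖v‖ < s k e / 200) :
    ‖v - (W e (200 * ‖v‖)).starProjection v‖ ≤ 1300 * β * ‖v‖ := by
  have hβ := h.beta_pos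
  have hk1 : k + 1 ≤ m := hk
  have hsk := h.scaleChain.le (h.theta_le.trans (by norm_num)) k he
  have hse0 := h.scaleChain.nonneg (k + 1) e he
  have hdist := h.norm_sub_le_add hk1 he hf
  have hsfe := (h.scaleChain.slowlyVarying (k + 1)).le_add he hf
  rw [← hv] at hdist
  have hplane := hF.near_plane e (hFE he) (200 * ‖v‖) (by linarith) (by linarith) f (hFE hf)
    (by rw [norm_sub_rev]; linarith)
  have hmove := (norm_sub_starProjection_le_norm (W e (200 * ‖v‖)) ((e - f) - v)).trans
    (hv ▸ h.norm_sub_sub_le hk1 he hf)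
  calc ‖v - (W e (200 * ‖v‖)).starProjection v‖
      = ‖((f - e) - (W e (200 * ‖v‖)).starProjection (f - e)) +
          (((e - f) - v) - (W e (200 * ‖v‖)).starProjection ((e - f) - v))‖ := by
        rw [← norm_neg]; congr 1; simp only [map_sub]; abel
    _ ≤ ε * (200 * ‖v‖) + 2 * β * (s (k + 1) e + s (k + 1) f) :=
        (norm_add_le _ _).trans (add_le_add hplane hmove)
    _ ≤ β * (200 * ‖v‖) + 2 * β * (500 * ‖v‖) := by gcongr; linarith
    _ ≤ 1300 * β * ‖v‖ := by linarith [mul_nonneg hβ.le (norm_nonneg v)]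

lemma norm_sub_starProjection_le (h : FlatteningSeq F W δ θ r β s m Y z)
    (hF : FlatField d ε E W) (hFE : F ⊆ E) (hε : ε ≤ β) (hr : r ≤ 1 / 10) (hk : k < m)
    (htan : IsTangent F W β (s (k + 1)) (z (k + 1))) (he : e ∈ F) (hf : f ∈ F) {v : X}
    (hv : v = z (k + 1) e - z (k + 1) f) (hup : ‖v‖ < s k e / 200) :
    ‖v - (W e (s k e)).starProjection v‖ ≤ (2 * δ + 1300 * β) * ‖v‖ := by
  have hβ := h.beta_pos
  rcases (norm_nonneg v).eq_or_lt with hv0 | hv0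
  · simp [norm_eq_zero.1 hv0.symm]
  have hβv : 0 < β * ‖v‖ := by positivity
  have hturn : ∀ t, 0 < t → s (k + 1) e ≤ t → t ≤ s k e →
      ‖v - (W e (s k e)).starProjection v‖
        ≤ ‖v - (W e t).starProjection v‖ + 2 * δ * ‖v‖ := fun t ht0 ht1 ht2 => by
    have hclose := ((W e t).starProjection - (W e (s k e)).starProjection).le_of_opNorm_le
      (h.scaleChain.close k e he t ht0 ht1 ht2) v
    have htri := norm_sub_le_norm_sub_add_norm_sub v ((W e t).starProjection v)
      ((W e (s k e)).starProjection v)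
    rw [sub_apply] at hclose
    linarith
  rcases le_or_gt ‖v‖ (s (k + 1) e / 200) with hlow | hlow
  · have hsucc := h.scale_succ_le k he
    have hplane := htan e he f hf (hv ▸ hlow)
    rw [← hv] at hplane
    linarith [hturn (s (k + 1) e) (by linarith) le_rfl (by linarith)]
  · linarith [hturn (200 * ‖v‖) (by linarith) (by linarith) (by linarith),
      h.norm_sub_starProjection_le_of_lt hF hFE hε hr hk he hf hv hlow hup]

lemma norm_sub_sub_le_of_isTangent (h : FlatteningSeq F W δ θ r β s m Y z)
    (hF : FlatField d ε E W) (hFE : F ⊆ E) (hε : ε ≤ β) (hr : r ≤ 1 / 10) (hk : k < m)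
    (htan : IsTangent F W β (s (k + 1)) (z (k + 1))) (he : e ∈ F) (hf : f ∈ F) :
    ‖(z (k + 1) e - z (k + 1) f) - (z k e - z k f)‖
      ≤ 3 * δ * ‖z (k + 1) e - z (k + 1) f‖ := by
  rcases le_or_gt (s k e / 200) ‖z (k + 1) e - z (k + 1) f‖ with hfar | hnear
  · exact h.norm_sub_sub_le_of_le hk he hf hfar
  have hδ := h.beta_le
  have hβ := h.beta_pos
  have hdist := h.norm_sub_le_add (k := k + 1) hk he hf
  have hse0 : 0 < s k e := by linarith [norm_nonneg (z (k + 1) e - z (k + 1) f)]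
  have hef : ‖e - f‖ ≤ s k e / 50 := by
    linarith [h.scale_succ_le k he, h.scale_succ_le k hf,
      (h.scaleChain.slowlyVarying k).le_add he hf]
  have hplane := h.norm_sub_starProjection_le hF hFE hε hr hk htan he hf rfl hnear
  have hflat := (h.flattens k).near_sub e he hse0 _ (h.norm_succ_self_sub_le hk he) _
    (h.norm_succ_sub_le hk he hf hef)
  rw [← h.eq_apply_succ k hk, ← h.eq_apply_succ k hk] at hflat
  set v := z (k + 1) e - z (k + 1) f
  calc ‖v - (z k e - z k f)‖
      ≤ ‖v - (W e (s k e)).starProjection v‖ +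
          ‖(W e (s k e)).starProjection v - (z k e - z k f)‖ :=
        norm_sub_le_norm_sub_add_norm_sub _ _ _
    _ ≤ (2 * δ + 1300 * β) * ‖v‖ + β * ‖v‖ := add_le_add hplane (by rwa [norm_sub_rev])
    _ = (2 * δ + 1301 * β) * ‖v‖ := by ring
    _ ≤ 3 * δ * ‖v‖ := by gcongr; linarith

lemma isTangent_of_norm_sub_sub_le (h : FlatteningSeq F W δ θ r β s m Y z) (hk : k < m)
    (hmove : ∀ e ∈ F, ∀ f ∈ F, ‖(z (k + 1) e - z (k + 1) f) - (z k e - z k f)‖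
      ≤ 3 * δ * ‖z (k + 1) e - z (k + 1) f‖) : IsTangent F W β (s k) (z k) := by
  intro e he f hf hef
  have hβ := h.beta_pos
  rcases (h.scaleChain.nonneg k e he).eq_or_lt with h0 | h0
  · rw [← h0, zero_div, norm_le_zero_iff] at hef
    simp [hef]
  have hnorm : ‖z (k + 1) e - z (k + 1) f‖ ≤ 2 * ‖z k e - z k f‖ := by
    have := mul_le_mul_of_nonneg_right h.delta_le (norm_nonneg (z (k + 1) e - z (k + 1) f))
    linarith [hmove e he f hf, norm_le_norm_sub_add (z (k + 1) e - z (k + 1) f) (z k e - z k f)]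
  have hef' : ‖e - f‖ ≤ s k e / 50 := by
    linarith [h.norm_sub_le_add hk.le he hf, (h.scaleChain.slowlyVarying k).le_add he hf]
  have hflat := (h.flattens k).norm_sub_le he h0 (h.norm_succ_self_sub_le hk he)
    (h.norm_succ_sub_le hk he hf hef')
  rw [← h.eq_apply_succ k hk, ← h.eq_apply_succ k hk] at hflat
  exact hflat.trans ((mul_le_mul_of_nonneg_left hnorm hβ.le).trans_eq (by ring))

lemma isTangent (h : FlatteningSeq F W δ θ r β s m Y z) (hF : FlatField d ε E W) (hFE : F ⊆ E)
    (hε : ε ≤ β) (hr : r ≤ 1 / 10) (hk : k ≤ m) : IsTangent F W β (s k) (z k) := by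
  induction hk using Nat.decreasingInduction with
  | self =>
    intro e he f _ hef
    rw [h.scale_eq_zero e he, zero_div, norm_le_zero_iff] at hef
    simp [hef]
  | of_succ k hk ih =>
    exact h.isTangent_of_norm_sub_sub_le hk fun e he f hf =>
      h.norm_sub_sub_le_of_isTangent hF hFE hε hr hk ih he hf

end FlatteningSeq

end FlatteningSeq

section LipschitzExtension

open scoped NNReal

variable {α : Type*} [PseudoMetricSpace α] {S : Set α} {K : ℝ≥0} {b : ℝ}

lemma exists_bounded_lipschitz_extension_real {f : α → ℝ} (hf : LipschitzOnWith K f S)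
    (hb : 0 ≤ b) (hfb : ∀ z ∈ S, |f z| ≤ b) :
    ∃ g : α → ℝ, EqOn g f S ∧ (∀ z, |g z| ≤ b) ∧ LipschitzWith K g := by
  obtain ⟨g, hg, hfg⟩ := hf.extend_real
  refine ⟨fun z => max (-b) (min b (g z)), fun z hz => ?_, fun z => ?_,
    (hg.const_min b).const_max (-b)⟩
  · have hle := abs_le.1 (hfb z hz)
    simp only [← hfg hz, min_eq_right hle.2, max_eq_right hle.1]
  · exact abs_le.2 ⟨le_max_left _ _, max_le (by linarith) (min_le_left _ _)⟩

lemma lipschitzOnWith_indicator_union {Z : Type*} [NormedAddCommGroup Z] {f : α → Z} {x : α}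
    {r R : ℝ} (hf : LipschitzOnWith K f S) (hfb : ∀ z ∈ S, ‖f z‖ ≤ b) (hS : S ⊆ ball x r)
    (hrR : r ≤ R) (hb : b ≤ K * (R - r)) :
    LipschitzOnWith K (S.indicator f) (S ∪ (ball x R)ᶜ) := by
  have hzero : ∀ {z}, z ∈ (ball x R)ᶜ → S.indicator f z = 0 := fun hz =>
    indicator_of_notMem (fun hzS => hz (ball_subset_ball hrR (hS hzS))) f
  have hdist : ∀ {z w}, z ∈ S → w ∈ (ball x R)ᶜ → ‖f z‖ ≤ K * dist z w := fun {z w} hz hw => by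
    have hzx := mem_ball.1 (hS hz)
    have hwx := not_lt.1 (mt mem_ball.2 hw)
    refine (hfb z hz).trans (hb.trans ?_)
    gcongr
    linarith [dist_triangle_left w x z]
  refine LipschitzOnWith.of_dist_le_mul ?_
  rintro z (hz | hz) w (hw | hw)
  · rw [indicator_of_mem hz, indicator_of_mem hw]
    exact hf.dist_le_mul z hz w hw
  · rw [indicator_of_mem hz, hzero hw, dist_zero_right]
    exact hdist hz hw
  · rw [hzero hz, indicator_of_mem hw, dist_zero_left, dist_comm]
    exact hdist hw hz
  · rw [hzero hz, hzero hw, dist_self]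
    positivity

variable {Z : Type*} [NormedAddCommGroup Z] [InnerProductSpace ℝ Z] [FiniteDimensional ℝ Z]

lemma exists_bounded_lipschitz_extension {f : α → Z} (hf : LipschitzOnWith K f S)
    (hb : 0 ≤ b) (hfb : ∀ z ∈ S, ‖f z‖ ≤ b) :
    ∃ g : α → Z, EqOn g f S ∧ (∀ z, ‖g z‖ ≤ Module.finrank ℝ Z * b) ∧
      LipschitzWith (Module.finrank ℝ Z * K) g := by
  let o := stdOrthonormalBasis ℝ Z
  have hle : ∀ i (v : Z), |(inner ℝ (o i) v : ℝ)| ≤ ‖v‖ := fun i v => by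
    simpa using abs_real_inner_le_norm (o i) v
  have hcoord : ∀ i, LipschitzOnWith K (fun z => (inner ℝ (o i) (f z) : ℝ)) S := fun i =>
    LipschitzOnWith.of_dist_le_mul fun z hz w hw => by
      rw [Real.dist_eq, ← inner_sub_right]
      exact (hle i _).trans (dist_eq_norm (f z) (f w) ▸ hf.dist_le_mul z hz w hw)
  choose g hgf hgb hgK using fun i => exists_bounded_lipschitz_extension_real (hcoord i) hb
    fun z hz => (hle i _).trans (hfb z hz)
  have hinner : ∀ i z, inner ℝ (o i) (∑ j, g j z • o j) = g i z := fun i z =>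
    o.orthonormal.inner_right_fintype _ i
  have hbound : ∀ {v : Z} {a : ℝ}, (∀ i, ‖(inner ℝ (o i) v : ℝ)‖ ≤ a) →
      ‖v‖ ≤ Module.finrank ℝ Z * a := fun hv => by
    simpa using norm_le_card_mul_of_inner_le o hv
  refine ⟨fun z => ∑ j, g j z • o j, fun z hz => ?_, fun z => hbound fun i => ?_,
    LipschitzWith.of_dist_le_mul fun z w => ?_⟩
  · simp only [hgf _ hz, o.sum_repr']
  · exact hinner i z ▸ hgb i z
  · rw [NNReal.coe_mul, NNReal.coe_natCast, mul_assoc, dist_eq_norm]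
    refine hbound fun i => ?_
    rw [inner_sub_right, hinner, hinner]
    exact (hgK i).dist_le_mul z w

lemma exists_lipschitz_extension_eq_zero {f : α → Z} {x : α} {r R : ℝ}
    (hf : LipschitzOnWith K f S) (hb0 : 0 ≤ b) (hfb : ∀ z ∈ S, ‖f z‖ ≤ b) (hS : S ⊆ ball x r)
    (hrR : r ≤ R) (hb : b ≤ K * (R - r)) :
    ∃ g : α → Z, EqOn g f S ∧ (∀ z ∉ ball x R, g z = 0) ∧
      (∀ z, ‖g z‖ ≤ Module.finrank ℝ Z * b) ∧ LipschitzWith (Module.finrank ℝ Z * K) g := by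
  have hind : ∀ z, ‖S.indicator f z‖ ≤ b := fun z => by
    by_cases hz : z ∈ S
    · rw [indicator_of_mem hz]
      exact hfb z hz
    · rwa [indicator_of_notMem hz, norm_zero]
  obtain ⟨g, hgf, hgb, hgK⟩ := exists_bounded_lipschitz_extension
    (lipschitzOnWith_indicator_union hf hfb hS hrR hb) hb0 fun z _ => hind z
  exact ⟨g, fun z hz => (hgf (Or.inl hz)).trans (indicator_of_mem hz f), fun z hz =>
    (hgf (Or.inr hz)).trans (indicator_of_notMem
      (fun hzS => hz (ball_subset_ball hrR (hS hzS))) f), hgb, hgK⟩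

end LipschitzExtension

section Displacement

variable {X : Type*} [NormedAddCommGroup X]

lemma norm_id_add_sub_bounds {u : X → X} (hu : LipschitzWith (1 / 2) u) (z w : X) :
    1 / 2 * ‖z - w‖ ≤ ‖(z + u z) - (w + u w)‖ ∧ ‖(z + u z) - (w + u w)‖ ≤ 2 * ‖z - w‖ := by
  have hle : ‖u z - u w‖ ≤ 1 / 2 * ‖z - w‖ := by
    simpa [dist_eq_norm] using hu.dist_le_mul z w
  rw [add_sub_add_comm]
  constructor <;> linarith [norm_add_le (z - w) (u z - u w), norm_nonneg (z - w),
    norm_le_add_norm_add (z - w) (u z - u w)]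

/-- The successive displacements of a point by the vector fields `u 0, u 1, …`. -/
def displace (u : ℕ → X → X) : ℕ → X → X
  | 0, y => y
  | k + 1, y => displace u k y + u k (displace u k y)

variable {u : ℕ → X → X} {m : ℕ}

lemma displace_bijective [NormedSpace ℝ X] [CompleteSpace X]
    (hu : ∀ k < m, LipschitzWith (1 / 2) (u k)) : Function.Bijective (displace u m) := by
  induction m with
  | zero => exact Function.bijective_id
  | succ m ih => exact (bijective_id_add_of_lipschitz (NNReal.half_lt_self one_ne_zero)
      (hu m m.lt_succ_self)).comp (ih fun k hk => hu k (hk.trans m.lt_succ_self))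

lemma norm_displace_sub_bounds (hu : ∀ k < m, LipschitzWith (1 / 2) (u k)) (z w : X) :
    (1 / 2) ^ m * ‖z - w‖ ≤ ‖displace u m z - displace u m w‖ ∧
      ‖displace u m z - displace u m w‖ ≤ 2 ^ m * ‖z - w‖ := by
  induction m with
  | zero => simp [displace]
  | succ m ih =>
    have hm := ih fun k hk => hu k (hk.trans m.lt_succ_self)
    have hstep := norm_id_add_sub_bounds (hu m m.lt_succ_self) (displace u m z) (displace u m w)
    simp only [displace, pow_succ]
    constructor <;> linarith

lemma norm_displace_sub_le {c : ℝ} (hu : ∀ k < m, ∀ y, ‖u k y‖ ≤ c * (1 / 2) ^ k) (y : X) :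
    ‖displace u m y - y‖ ≤ 2 * c * (1 - (1 / 2) ^ m) := by
  induction m with
  | zero => simp [displace]
  | succ m ih =>
    have hm := ih fun k hk => hu k (hk.trans m.lt_succ_self)
    calc ‖displace u (m + 1) y - y‖ = ‖(displace u m y - y) + u m (displace u m y)‖ := by
          rw [displace, add_sub_right_comm]
      _ ≤ 2 * c * (1 - (1 / 2) ^ m) + c * (1 / 2) ^ m :=
          (norm_add_le _ _).trans (add_le_add hm (hu m m.lt_succ_self _))
      _ = 2 * c * (1 - (1 / 2) ^ (m + 1)) := by ring

lemma displace_eq_self {y : X} (hu : ∀ k < m, u k y = 0) : displace u m y = y := by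
  induction m with
  | zero => rfl
  | succ m ih =>
    rw [displace, ih fun k hk => hu k (hk.trans m.lt_succ_self), hu m m.lt_succ_self, add_zero]

lemma displace_eq_of_orbit {z : ℕ → X} (hz : ∀ k < m, z k + u k (z k) = z (k + 1)) :
    displace u m (z 0) = z m := by
  induction m with
  | zero => rfl
  | succ m ih =>
    rw [displace, ih fun k hk => hz k (hk.trans m.lt_succ_self), hz m m.lt_succ_self]

end Displacement

section BiLipschitz

variable {X : Type*} [NormedAddCommGroup X] [InnerProductSpace ℝ X] [FiniteDimensional ℝ X]
  {E F : Set X} {W : X → ℝ → Submodule ℝ X} {δ θ r β ε : ℝ} {s : ℕ → X → ℝ} {d m k : ℕ}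
  {Y z : ℕ → X → X} {e f x : X}

lemma ScaleChain.le_pow (hs : ScaleChain E W δ θ r s) (hθ : θ ≤ 1 / 2) (k : ℕ) (he : e ∈ E) :
    s k e ≤ (1 / 2) ^ k * r := by
  induction k with
  | zero => rw [hs.zero_eq, pow_zero, one_mul]
  | succ k ih =>
    calc s (k + 1) e ≤ θ * s k e := hs.succ_le k e he
      _ ≤ 1 / 2 * ((1 / 2) ^ k * r) :=
        mul_le_mul hθ ih (hs.nonneg k e he) (by norm_num)
      _ = (1 / 2) ^ (k + 1) * r := by ring

namespace FlatteningSeq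

lemma norm_succ_sub_sub_le (h : FlatteningSeq F W δ θ r β s m Y z) (hF : FlatField d ε E W)
    (hFE : F ⊆ E) (hε : ε ≤ β) (hr : r ≤ 1 / 10) (hk : k < m) (he : e ∈ F) (hf : f ∈ F) :
    ‖(z (k + 1) e - z (k + 1) f) - (z k e - z k f)‖ ≤ 6 * δ * ‖z k e - z k f‖ := by
  have hδ : 0 ≤ δ := by linarith [h.beta_pos, h.beta_le]
  have hmove := h.norm_sub_sub_le_of_isTangent hF hFE hε hr hk
    (h.isTangent hF hFE hε hr (k := k + 1) hk) he hf
  have hexpand : ‖z (k + 1) e - z (k + 1) f‖ ≤ 2 * ‖z k e - z k f‖ := by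
    have := mul_le_mul_of_nonneg_right h.delta_le (norm_nonneg (z (k + 1) e - z (k + 1) f))
    linarith [norm_le_norm_sub_add (z (k + 1) e - z (k + 1) f) (z k e - z k f)]
  calc _ ≤ 3 * δ * ‖z (k + 1) e - z (k + 1) f‖ := hmove
    _ ≤ 3 * δ * (2 * ‖z k e - z k f‖) := by gcongr
    _ = 6 * δ * ‖z k e - z k f‖ := by ring

lemma injOn (h : FlatteningSeq F W δ θ r β s m Y z) (hF : FlatField d ε E W)
    (hFE : F ⊆ E) (hε : ε ≤ β) (hr : r ≤ 1 / 10) (hk : k ≤ m) : InjOn (z k) F := by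
  induction hk using Nat.decreasingInduction with
  | self => exact fun e _ f _ hef => by rwa [h.last_eq, h.last_eq] at hef
  | of_succ k hk ih =>
    intro e he f hf hef
    have hmove := h.norm_succ_sub_sub_le hF hFE hε hr hk he hf
    rw [hef, sub_self, norm_zero, mul_zero, sub_zero, norm_le_zero_iff, sub_eq_zero] at hmove
    exact ih he hf hmove

lemma norm_succ_sub_self_le (h : FlatteningSeq F W δ θ r β s m Y z) (hk : k < m) (he : e ∈ F) :
    ‖z (k + 1) e - z k e‖ ≤ 3 * β * ((1 / 2) ^ k * r) := by
  have hβ := h.beta_pos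
  have hs0 := h.scaleChain.nonneg k e he
  have hk0 := h.norm_sub_le hk.le he
  rw [norm_sub_rev] at hk0
  calc ‖z (k + 1) e - z k e‖ ≤ ‖z (k + 1) e - e‖ + ‖e - z k e‖ :=
        norm_sub_le_norm_sub_add_norm_sub _ _ _
    _ ≤ 2 * β * s (k + 1) e + 2 * β * s k e :=
        add_le_add (h.norm_sub_le (k := k + 1) hk he) hk0
    _ ≤ 2 * β * (s k e / 2) + 2 * β * s k e := by
        gcongr
        linarith [h.scale_succ_le k he]
    _ = 3 * β * s k e := by ring
    _ ≤ 3 * β * ((1 / 2) ^ k * r) := by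
        gcongr
        exact h.scaleChain.le_pow (h.theta_le.trans (by norm_num)) k he

lemma mem_ball (h : FlatteningSeq F W δ θ r β s m Y z) (hr0 : 0 < r) (hFx : F ⊆ ball x r)
    (hk : k ≤ m) (he : e ∈ F) : z k e ∈ ball x (3 / 2 * r) := by
  have hs := h.scaleChain.le (h.theta_le.trans (by norm_num)) k he
  have hex := mem_ball_iff_norm.1 (hFx he)
  rw [mem_ball_iff_norm]
  linarith [h.norm_sub_le hk he, h.beta_mul_le (h.scaleChain.nonneg k e he),
    norm_sub_le_norm_sub_add_norm_sub (z k e) e x]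

lemma exists_displacement (h : FlatteningSeq F W δ θ r β s m Y z) (hF : FlatField d ε E W)
    (hFE : F ⊆ E) (hFx : F ⊆ ball x r) (hε : ε ≤ β) (hr0 : 0 < r) (hr : r ≤ 1 / 10)
    (hδ : Module.finrank ℝ X * (6 * δ) ≤ 1 / 2) (hk : k < m) :
    ∃ u : X → X, (∀ e ∈ F, z k e + u (z k e) = z (k + 1) e) ∧ (∀ y ∉ ball x (2 * r), u y = 0) ∧
      (∀ y, ‖u y‖ ≤ Module.finrank ℝ X * (3 * β * r) * (1 / 2) ^ k) ∧
      LipschitzWith (1 / 2) u := by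
  have hβ := h.beta_pos
  have hδ0 : 0 < δ := by linarith [h.beta_le]
  have hinj := (h.injOn hF hFE hε hr hk.le).leftInvOn_invFunOn
  let D : X → X := fun y => z (k + 1) (Function.invFunOn (z k) F y) - y
  have hD : ∀ e ∈ F, D (z k e) = z (k + 1) e - z k e := fun e he => by simp only [D, hinj he]
  have hlip : LipschitzOnWith (6 * δ).toNNReal D (z k '' F) := by
    refine LipschitzOnWith.of_dist_le_mul ?_
    rintro _ ⟨e, he, rfl⟩ _ ⟨f, hf, rfl⟩
    rw [dist_eq_norm, dist_eq_norm, hD e he, hD f hf, Real.coe_toNNReal _ (by positivity),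
      sub_sub_sub_comm]
    exact h.norm_succ_sub_sub_le hF hFE hε hr hk he hf
  have hpow : (1 / 2 : ℝ) ^ k * r ≤ r :=
    mul_le_of_le_one_left hr0.le (pow_le_one₀ (by norm_num) (by norm_num))
  obtain ⟨u, huD, hu0, hub, hu⟩ := exists_lipschitz_extension_eq_zero
    (x := x) (r := 3 / 2 * r) (R := 2 * r) (b := 3 * β * ((1 / 2) ^ k * r)) hlip (by positivity)
    (by rintro _ ⟨e, he, rfl⟩; exact hD e he ▸ h.norm_succ_sub_self_le hk he)
    (by rintro _ ⟨e, he, rfl⟩; exact h.mem_ball hr0 hFx hk.le he) (by linarith) (by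
      rw [Real.coe_toNNReal _ (by positivity)]
      calc 3 * β * ((1 / 2) ^ k * r) ≤ 3 * δ * r := by gcongr; linarith [h.beta_le]
        _ = 6 * δ * (2 * r - 3 / 2 * r) := by ring)
  refine ⟨u, fun e he => ?_, hu0, fun y => (hub y).trans_eq (by ring), hu.weaken ?_⟩
  · rw [huD (mem_image_of_mem _ he), hD e he, add_sub_cancel]
  · rw [← NNReal.coe_le_coe]
    simpa [Real.coe_toNNReal _ (by positivity : 0 ≤ 6 * δ)] using hδ

end FlatteningSeq

lemma FlatField.exists_flattens_seq (hF : FlatField d ε E W) (hs : ScaleChain E W δ θ r s)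
    (hθ : θ ≤ 1) (hε : 250 * ε ≤ β) (hβ : Module.finrank ℝ X * (101 * (150 * ε)) ≤ β)
    (hβ1 : β ≤ 1) (hr0 : 0 < r) (hr : r ≤ 1 / 10) (hx : x ∈ E) :
    ∃ Y : ℕ → X → X, (∀ y, Y 0 y = x + (W x (3 * r)).starProjection (y - x)) ∧
      ∀ k, Flattens (E ∩ ball x r) W (s k) β (Y k) := by
  choose Y hY using fun k => hF.exists_flattens (by linarith)
    (fun e he => (hs.le hθ k he).trans hr) (hs.slowlyVarying k)
  refine ⟨fun k => Nat.casesOn k (fun y => x + (W x (3 * r)).starProjection (y - x))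
    fun k => Y (k + 1), fun _ => rfl, fun k => ?_⟩
  cases k with
  | zero => exact (hF.flattens_proj (by linarith) hx hr0 hr hs.zero_eq).mono subset_rfl hε
  | succ k => exact (hY (k + 1)).mono inter_subset_left hβ

/-- The points of `F` at which the scales have stopped after `m` steps are brought into the plane
through `x` by the flattenings; `g` undoes these motions one by one. -/
lemma FlatField.exists_biLipschitz (hF : FlatField d ε E W) (hs : ScaleChain E W δ θ r s)
    (hθ : θ ≤ 1 / 1000) (hδ : Module.finrank ℝ X * (6 * δ) ≤ 1 / 2) (hδ6 : δ ≤ 1 / 6)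
    (hε : 250 * ε ≤ β) (hεβ : Module.finrank ℝ X * (101 * (150 * ε)) ≤ β) (hβ : 2000 * β ≤ δ)
    (hr0 : 0 < r) (hr : r ≤ 1 / 10) (hx : x ∈ E) (m : ℕ) :
    ∃ g : X → X, Function.Bijective g ∧
      (∀ z w, (1 / 2) ^ m * ‖z - w‖ ≤ ‖g z - g w‖ ∧ ‖g z - g w‖ ≤ 2 ^ m * ‖z - w‖) ∧
      (∀ z, ‖g z - z‖ ≤ Module.finrank ℝ X * (6 * β * r)) ∧
      (∀ z ∉ ball x (2 * r), g z = z) ∧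
      ∀ e ∈ E ∩ ball x r, s m e = 0 → e ∈ g '' (AffineSubspace.mk' x (W x (3 * r)) : Set X) := by
  have hβ0 : 0 < β := by linarith [hF.eps_pos]
  obtain ⟨Y, hY0, hY⟩ :=
    hF.exists_flattens_seq hs (by linarith) hε hεβ (by linarith) hr0 hr hx
  obtain ⟨z, hzm, hz⟩ := exists_backward_seq m Y
  have hseq : FlatteningSeq {e ∈ E ∩ ball x r | s m e = 0} W δ θ r β s m Y z :=
    ⟨hs.mono fun e he => he.1.1, hθ, hδ6, hβ0, hβ, fun e he => he.2,
      fun k => (hY k).mono (sep_subset _ _) le_rfl, hzm, hz⟩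
  choose! u huz hu0 hub hu using fun k (hk : k < m) => hseq.exists_displacement hF
    (fun e he => he.1.1) (fun e he => he.1.2) (by linarith [hF.eps_pos]) hr0 hr hδ hk
  refine ⟨displace u m, displace_bijective hu, norm_displace_sub_bounds hu,
    fun y => (norm_displace_sub_le hub y).trans ?_,
    fun y hy => displace_eq_self fun k hk => hu0 k hk y hy, fun e he hse => ?_⟩
  · calc _ ≤ 2 * (Module.finrank ℝ X * (3 * β * r)) :=
          mul_le_of_le_one_right (by positivity) (sub_le_self 1 (by positivity))
      _ = Module.finrank ℝ X * (6 * β * r) := by ring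
  · have hm : 0 < m := Nat.pos_of_ne_zero fun h0 => by
      rw [h0, hs.zero_eq] at hse
      exact hr0.ne' hse
    refine ⟨z 0 e, ?_, (displace_eq_of_orbit (z := fun k => z k e)
      fun k hk => huz k hk e ⟨he, hse⟩).trans (hzm e)⟩
    rw [hz 0 hm, hY0, SetLike.mem_coe, AffineSubspace.mem_mk', vsub_eq_sub, add_sub_cancel_left]
    exact Submodule.starProjection_apply_mem _ _

end BiLipschitz

section BallVolume

variable {X ι κ : Type*} [NormedAddCommGroup X] [NormedSpace ℝ X] [FiniteDimensional ℝ X]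

lemma exists_measureReal_ball_eq (X : Type*) [NormedAddCommGroup X] [NormedSpace ℝ X]
    [FiniteDimensional ℝ X] [MeasurableSpace X] [BorelSpace X] :
    ∃ ω : ℝ, 0 < ω ∧ ∀ (p : X) (t : ℝ), 0 < t →
      (Measure.addHaar : Measure X).real (ball p t) = t ^ Module.finrank ℝ X * ω := by
  refine ⟨(Measure.addHaar : Measure X).real (ball 0 1), ?_, fun p t ht => ?_⟩
  · exact ENNReal.toReal_pos (measure_ball_pos _ _ one_pos).ne' measure_ball_lt_top.ne
  · rw [Measure.real, Measure.addHaar_ball_of_pos _ p ht, ENNReal.toReal_mul,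
      ENNReal.toReal_ofReal (by positivity), Measure.real]

lemma sum_pow_finrank_le_of_disjoint_ball (s : Finset ι) {p : ι → X} {t : ι → ℝ}
    (ht : ∀ i ∈ s, 0 < t i) {q : X} {R : ℝ} (hR : 0 < R)
    (hsub : ∀ i ∈ s, ball (p i) (t i) ⊆ ball q R)
    (hdisj : (s : Set ι).PairwiseDisjoint fun i => ball (p i) (t i)) :
    ∑ i ∈ s, t i ^ Module.finrank ℝ X ≤ R ^ Module.finrank ℝ X := by
  borelize X
  obtain ⟨ω, hω, hball⟩ := exists_measureReal_ball_eq X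
  have hle : ∑ i ∈ s, (Measure.addHaar : Measure X).real (ball (p i) (t i))
      ≤ (Measure.addHaar : Measure X).real (ball q R) := by
    rw [← measureReal_biUnion_finset hdisj (fun i _ => measurableSet_ball)
      (fun i _ => measure_ball_lt_top.ne)]
    exact measureReal_mono (iUnion₂_subset hsub) measure_ball_lt_top.ne
  rw [hball q R hR, Finset.sum_congr rfl fun i hi => hball (p i) (t i) (ht i hi),
    ← Finset.sum_mul] at hle
  exact le_of_mul_le_mul_right hle hω

lemma measureReal_le_sum_add_sum {α : Type*} [MeasurableSpace α] {μ : Measure α} {s : Finset ι}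
    {L : Finset κ} {A : Set α} {B : ι → Set α} {N : κ → Set α} (hB : ∀ i ∈ s, μ (B i) ≠ ∞)
    (hN : ∀ l ∈ L, μ (N l) ≠ ∞) (hA : A ⊆ (⋃ i ∈ s, B i) ∪ ⋃ l ∈ L, N l) :
    μ.real A ≤ ∑ i ∈ s, μ.real (B i) + ∑ l ∈ L, μ.real (N l) := by
  have hBs : μ (⋃ i ∈ s, B i) < ∞ :=
    (measure_biUnion_finset_le s _).trans_lt (ENNReal.sum_lt_top.2 fun i hi => (hB i hi).lt_top)
  have hNL : μ (⋃ l ∈ L, N l) < ∞ :=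
    (measure_biUnion_finset_le L _).trans_lt (ENNReal.sum_lt_top.2 fun l hl => (hN l hl).lt_top)
  calc μ.real A ≤ μ.real ((⋃ i ∈ s, B i) ∪ ⋃ l ∈ L, N l) :=
        measureReal_mono hA (measure_union_lt_top hBs hNL).ne
    _ ≤ μ.real (⋃ i ∈ s, B i) + μ.real (⋃ l ∈ L, N l) := measureReal_union_le _ _
    _ ≤ _ := add_le_add (measureReal_biUnion_finset_le _ _) (measureReal_biUnion_finset_le _ _)

lemma pow_finrank_add_le_of_ball_subset (s : Finset ι) (L : Finset κ) {p : ι → X} {t : ι → ℝ}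
    (ht : ∀ i ∈ s, 0 < t i) {q q' : κ → X} {T : κ → ℝ} (hT : ∀ l ∈ L, 0 < T l) {q₀ : X} {c R : ℝ}
    (hc : 0 < c) (hR : 0 < R) (hq : ∀ l ∈ L, ball (q' l) (c * T l) ⊆ ball (q l) (T l))
    (hcov : ball q₀ R ⊆ (⋃ i ∈ s, ball (p i) (t i)) ∪
      ⋃ l ∈ L, ball (q l) (T l) \ ball (q' l) (c * T l)) :
    R ^ Module.finrank ℝ X + c ^ Module.finrank ℝ X * ∑ l ∈ L, T l ^ Module.finrank ℝ X
      ≤ ∑ i ∈ s, t i ^ Module.finrank ℝ X + ∑ l ∈ L, T l ^ Module.finrank ℝ X := by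
  borelize X
  obtain ⟨ω, hω, hball⟩ := exists_measureReal_ball_eq X
  set D := Module.finrank ℝ X
  set μ : Measure X := Measure.addHaar
  have hle := measureReal_le_sum_add_sum (μ := μ) (fun i _ => measure_ball_lt_top.ne)
    (fun l _ => ((measure_mono sdiff_subset).trans_lt measure_ball_lt_top).ne) hcov
  have hdiff : ∀ l ∈ L, μ.real (ball (q l) (T l) \ ball (q' l) (c * T l))
      = (T l ^ D - c ^ D * T l ^ D) * ω := by
    intro l hl
    rw [measureReal_sdiff (hq l hl) measurableSet_ball measure_ball_lt_top.ne, hball _ _ (hT l hl),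
      hball _ _ (mul_pos hc (hT l hl)), mul_pow]
    ring
  rw [hball q₀ R hR, Finset.sum_congr rfl fun i hi => hball (p i) (t i) (ht i hi),
    Finset.sum_congr rfl hdiff, ← Finset.sum_mul, ← Finset.sum_mul, ← add_mul] at hle
  have hcancel := le_of_mul_le_mul_right hle hω
  rw [Finset.sum_sub_distrib, ← Finset.mul_sum] at hcancel
  linarith

end BallVolume

section Covering

/-- A finite family of balls, encoded as pairs (center, radius), which covers `E ∩ ball b ρ` and
in which every ball meeting `ball b ρ` has radius at most `c * ρ`. -/
structure IsFineCover {X : Type*} [NormedAddCommGroup X] (E : Set X) (𝒰 : Finset (X × ℝ)) (c : ℝ)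
    (b : X) (ρ : ℝ) : Prop where
  pos : ∀ U ∈ 𝒰, 0 < U.2
  cover : ∀ f ∈ E, ‖f - b‖ < ρ → ∃ U ∈ 𝒰, f ∈ ball U.1 U.2
  small : ∀ U ∈ 𝒰, (ball U.1 U.2 ∩ ball b ρ).Nonempty → U.2 ≤ c * ρ

variable {X : Type*} [NormedAddCommGroup X] [InnerProductSpace ℝ X] [FiniteDimensional ℝ X]

/-- Disjoint balls `ball l (t l)`, `l ∈ L`, inside `ball b ρ`, on which the plane approximating `E`
makes an angle at least `α` with `W b ρ`. -/
structure IsTiltedFamily (E : Set X) (W : X → ℝ → Submodule ℝ X) (α : ℝ) (b : X) (ρ : ℝ)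
    (L : Finset X) (t : X → ℝ) : Prop where
  mem : ∀ l ∈ L, l ∈ E
  pos : ∀ l ∈ L, 0 < t l
  le_one : ∀ l ∈ L, t l ≤ 1
  subset : ∀ l ∈ L, ball l (t l) ⊆ ball b ρ
  disjoint : (L : Set X).PairwiseDisjoint fun l => ball l (t l)
  tilt : ∀ l ∈ L, α ≤ ‖(W b ρ).starProjection - (W l (t l)).starProjection‖

variable {d : ℕ} {ε α ζ : ℝ} {E : Set X} {W : X → ℝ → Submodule ℝ X}

lemma norm_starProjection_le_of_le_norm_sub (Q : Submodule ℝ X) {v : X} (hv : ‖v‖ = 1) {β : ℝ}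
    (hβ0 : 0 ≤ β) (hβ : β ≤ ‖v - Q.starProjection v‖) : ‖Q.starProjection v‖ ≤ 1 - β ^ 2 / 2 := by
  have hpyth : 1 = ‖Q.starProjection v‖ ^ 2 + ‖v - Q.starProjection v‖ ^ 2 := by
    rw [← one_pow 2, ← hv, Submodule.norm_sq_eq_add_norm_sq_starProjection v Q,
      Submodule.starProjection_orthogonal_val]
  have hsq : β ^ 2 ≤ ‖v - Q.starProjection v‖ ^ 2 := by gcongr
  have hβ1 : β ^ 2 ≤ 1 := by linarith [sq_nonneg ‖Q.starProjection v‖]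
  refine (abs_le_of_sq_le_sq' ?_ (by linarith)).2
  nlinarith [sq_nonneg (β ^ 2 / 2)]

lemma FlatField.inner_le_of_tilt (hF : FlatField d ε E W) {l f v : X} {t : ℝ} (hl : l ∈ E)
    (ht : 0 < t) (ht1 : t ≤ 1) (hf : f ∈ E) (hfl : ‖f - l‖ < t) (hv : ‖v‖ = 1) (hα0 : 0 ≤ α)
    (hα : α / 4 ≤ ‖v - (W l t).starProjection v‖) (hε : 64 * ε ≤ α ^ 2) :
    inner ℝ (f - l) v ≤ (1 - 2 * (α ^ 2 / 128)) * t := by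
  set Q := (W l t).starProjection
  have hQv : ‖Q v‖ ≤ 1 - (α / 4) ^ 2 / 2 :=
    norm_starProjection_le_of_le_norm_sub _ hv (by positivity) hα
  have hpar : inner ℝ (f - l) (Q v) ≤ t * (1 - (α / 4) ^ 2 / 2) :=
    (real_inner_le_norm _ _).trans (mul_le_mul hfl.le hQv (norm_nonneg _) ht.le)
  have hperp : inner ℝ ((f - l) - Q (f - l)) v ≤ ε * t := by
    refine (real_inner_le_norm _ _).trans ?_
    rw [hv, mul_one]
    exact hF.near_plane l hl t ht ht1 f hf hfl
  calc inner ℝ (f - l) v = inner ℝ (f - l) (Q v) + inner ℝ ((f - l) - Q (f - l)) v := by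
        rw [inner_sub_left (f - l) (Q (f - l)), Submodule.inner_starProjection_left_eq_right]
        ring
    _ ≤ t * (1 - (α / 4) ^ 2 / 2) + ε * t := add_le_add hpar hperp
    _ ≤ (1 - 2 * (α ^ 2 / 128)) * t := by nlinarith

lemma FlatField.exists_image_subset_ball_sdiff (hF : FlatField d ε E W) {P : Submodule ℝ X}
    (hP : Module.finrank ℝ P = d) {l : X} (hl : l ∈ E) {t : ℝ} (ht : 0 < t) (ht1 : t ≤ 1)
    (hα0 : 0 < α) (hα : α ≤ 2) (hεα : 64 * ε ≤ α ^ 2)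
    (htilt : α ≤ ‖P.starProjection - (W l t).starProjection‖) :
    ∃ q : P, ball q (α ^ 2 / 128 * t) ⊆ ball (P.orthogonalProjectionOnto l) t ∧
      P.orthogonalProjectionOnto '' (E ∩ ball l t) ⊆
        ball (P.orthogonalProjectionOnto l) t \ ball q (α ^ 2 / 128 * t) := by
  obtain ⟨v, hvP, hv1, hv⟩ := exists_tilted_vector
    (hP.trans (hF.finrank_eq l hl t ht ht1).symm) hα0 hα htilt
  set π := P.orthogonalProjectionOnto
  set v' : P := ⟨v, hvP⟩
  have hv1' : ‖v'‖ = 1 := hv1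
  have hα1 : α ^ 2 / 128 ≤ 1 := by nlinarith
  refine ⟨π l + ((1 - α ^ 2 / 128) * t) • v', ball_subset_ball' ?_, ?_⟩
  · rw [dist_eq_norm, add_sub_cancel_left, norm_smul, hv1',
      Real.norm_of_nonneg (mul_nonneg (sub_nonneg.2 hα1) ht.le)]
    linarith
  rintro _ ⟨f, ⟨hf, hfl⟩, rfl⟩
  rw [mem_ball, dist_eq_norm] at hfl
  refine ⟨?_, fun hmem => ?_⟩
  · rw [mem_ball, dist_eq_norm, ← map_sub]
    exact (Submodule.norm_orthogonalProjectionOnto_apply_le _ _).trans_lt hfl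
  · rw [mem_ball, dist_eq_norm, ← sub_sub, ← map_sub] at hmem
    have hle : inner ℝ (π (f - l)) v' ≤ (1 - 2 * (α ^ 2 / 128)) * t := by
      rw [Submodule.inner_orthogonalProjectionOnto_eq_of_mem_right]
      exact hF.inner_le_of_tilt hl ht ht1 hf hfl hv1 hα0.le hv hεα
    have hCS := real_inner_le_norm (((1 - α ^ 2 / 128) * t) • v' - π (f - l)) v'
    rw [inner_sub_left, real_inner_smul_left, real_inner_self_eq_norm_sq, hv1', one_pow, mul_one,
      mul_one, norm_sub_rev] at hCS
    linarith

lemma FlatField.exists_orthogonalProjectionOnto_eq (hF : FlatField d ε E W) {b : X} {ρ : ℝ}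
    (hb : b ∈ E) (hρ : 0 < ρ) (hρ1 : ρ ≤ 1) (hζ : ζ ≤ 1 / 2) (hεζ : 20 * ε ≤ ζ) {q : W b ρ}
    (hq : q ∈ ball ((W b ρ).orthogonalProjectionOnto b) ((1 - ζ) * ρ)) :
    ∃ f ∈ E, ‖f - b‖ < (1 - ζ / 2) * ρ ∧ (W b ρ).orthogonalProjectionOnto f = q := by
  have hε0 := hF.eps_pos
  rw [mem_ball, dist_eq_norm, Submodule.coe_norm] at hq
  obtain ⟨f, hf, hfq, hfd⟩ := hF.exists_starProjection_eq (by linarith) hb hρ hρ1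
    (q - (W b ρ).orthogonalProjectionOnto b).2 (by nlinarith)
  refine ⟨f, hf, ?_, ?_⟩
  · have := norm_le_norm_sub_add (f - b)
      ((q - (W b ρ).orthogonalProjectionOnto b : W b ρ) : X)
    nlinarith
  · have hsub : (W b ρ).orthogonalProjectionOnto (f - b) = q - (W b ρ).orthogonalProjectionOnto b :=
      Subtype.ext hfq
    rwa [map_sub, sub_left_inj] at hsub

open Classical in
lemma FlatField.ball_subset_of_isFineCover (hF : FlatField d ε E W) {b : X} {ρ : ℝ} (hb : b ∈ E)
    (hρ : 0 < ρ) (hρ1 : ρ ≤ 1) (hζ : ζ ≤ 1 / 2) (hεζ : 20 * ε ≤ ζ) {𝒰 : Finset (X × ℝ)}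
    (hU : IsFineCover E 𝒰 (ζ / 4) b ρ) (L : Finset X) (t : X → ℝ) :
    ball ((W b ρ).orthogonalProjectionOnto b) ((1 - ζ) * ρ) ⊆
      (⋃ U ∈ 𝒰.filter fun U => ball U.1 U.2 ⊆ ball b ρ ∧ ∀ l ∈ L, ¬ ball U.1 U.2 ⊆ ball l (t l),
        ball ((W b ρ).orthogonalProjectionOnto U.1) U.2) ∪
      ⋃ l ∈ L, (W b ρ).orthogonalProjectionOnto '' (E ∩ ball l (t l)) := by
  intro q hq
  have hε0 := hF.eps_pos
  obtain ⟨f, hf, hfb, rfl⟩ := hF.exists_orthogonalProjectionOnto_eq hb hρ hρ1 hζ hεζ hq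
  by_cases hfL : ∃ l ∈ L, f ∈ ball l (t l)
  · obtain ⟨l, hl, hfl⟩ := hfL
    exact Or.inr (mem_biUnion hl ⟨f, ⟨hf, hfl⟩, rfl⟩)
  push Not at hfL
  have hfρ : ‖f - b‖ < ρ := by nlinarith
  obtain ⟨U, hUU, hfU⟩ := hU.cover f hf hfρ
  have hUρ := hU.small U hUU ⟨f, hfU, by rwa [mem_ball, dist_eq_norm]⟩
  have hsub : ball U.1 U.2 ⊆ ball b ρ := by
    apply ball_subset_ball'
    have := dist_triangle_left U.1 b f
    rw [dist_eq_norm f b] at this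
    linarith [mem_ball.1 hfU]
  refine Or.inl (mem_biUnion (x := U)
    (Finset.mem_filter.2 ⟨hUU, hsub, fun l hl hUl => hfL l hl (hUl hfU)⟩) ?_)
  rw [mem_ball, dist_eq_norm, ← map_sub]
  exact (Submodule.norm_orthogonalProjectionOnto_apply_le _ _).trans_lt
    (by rwa [← dist_eq_norm])

open Classical in
lemma FlatField.pow_add_le_of_isFineCover (hF : FlatField d ε E W) {b : X} {ρ : ℝ} (hb : b ∈ E)
    (hρ : 0 < ρ) (hρ1 : ρ ≤ 1) (hζ : ζ ≤ 1 / 2) (hεζ : 20 * ε ≤ ζ) (hα0 : 0 < α) (hα : α ≤ 2)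
    (hεα : 64 * ε ≤ α ^ 2) {𝒰 : Finset (X × ℝ)} (hU : IsFineCover E 𝒰 (ζ / 4) b ρ)
    {L : Finset X} {t : X → ℝ} (hL : IsTiltedFamily E W α b ρ L t) :
    ((1 - ζ) * ρ) ^ d + (α ^ 2 / 128) ^ d * ∑ l ∈ L, t l ^ d ≤
      (∑ U ∈ 𝒰 with ball U.1 U.2 ⊆ ball b ρ ∧ ∀ l ∈ L, ¬ ball U.1 U.2 ⊆ ball l (t l), U.2 ^ d)
        + ∑ l ∈ L, t l ^ d := by
  have hfr : Module.finrank ℝ (W b ρ) = d := hF.finrank_eq b hb ρ hρ hρ1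
  have htilted : ∀ l ∈ L, ∃ q : W b ρ,
      ball q (α ^ 2 / 128 * t l) ⊆ ball ((W b ρ).orthogonalProjectionOnto l) (t l) ∧
      (W b ρ).orthogonalProjectionOnto '' (E ∩ ball l (t l)) ⊆
        ball ((W b ρ).orthogonalProjectionOnto l) (t l) \ ball q (α ^ 2 / 128 * t l) :=
    fun l hl => hF.exists_image_subset_ball_sdiff hfr (hL.mem l hl) (hL.pos l hl) (hL.le_one l hl)
      hα0 hα hεα (hL.tilt l hl)
  choose! q hqsub hq using htilted
  have key := pow_finrank_add_le_of_ball_subset (t := Prod.snd) _ L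
    (fun U hUU => hU.pos U (Finset.mem_filter.1 hUU).1) hL.pos (by positivity)
    (mul_pos (by linarith) hρ) hqsub
    ((hF.ball_subset_of_isFineCover hb hρ hρ1 hζ hεζ hU L t).trans
      (union_subset_union_right _ (iUnion₂_mono hq)))
  rwa [hfr] at key

lemma one_sub_mul_mul_pow_le (d : ℕ) {t : ℝ} (ht : 0 ≤ t) (hζ : ζ ≤ 2) :
    (1 - d * ζ) * t ^ d ≤ ((1 - ζ) * t) ^ d := by
  rw [mul_pow]
  gcongr
  have := one_add_mul_le_pow (a := -ζ) (by linarith) d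
  rw [← sub_eq_add_neg] at this
  linarith

lemma sum_filter_forall_not_add_sum_sum_filter {ι κ M : Type*} [AddCommMonoid M] (s : Finset ι)
    (L : Finset κ) (R : ι → κ → Prop) [∀ i l, Decidable (R i l)]
    [DecidablePred fun i => ∀ l ∈ L, ¬ R i l]
    (hR : ∀ i ∈ s, ∀ l ∈ L, ∀ l' ∈ L, R i l → R i l' → l = l') (f : ι → M) :
    ∑ i ∈ s with ∀ l ∈ L, ¬ R i l, f i + ∑ l ∈ L, ∑ i ∈ s with R i l, f i = ∑ i ∈ s, f i := by
  classical
  have hdisj : (L : Set κ).PairwiseDisjoint fun l => s.filter (R · l) := by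
    intro l hl l' hl' hne
    refine Finset.disjoint_left.2 fun i hi hi' => hne ?_
    rw [Finset.mem_filter] at hi hi'
    exact hR i hi.1 l hl l' hl' hi.2 hi'.2
  rw [← Finset.sum_biUnion hdisj,
    ← Finset.sum_filter_add_sum_filter_not s fun i => ∀ l ∈ L, ¬ R i l]
  congr 2
  ext i
  simp only [Finset.mem_biUnion, Finset.mem_filter, not_forall, not_not, exists_prop]
  tauto

open Classical in
lemma sum_filter_not_ball_subset_add {Y : Type*} [PseudoMetricSpace Y] {𝒰 : Finset (Y × ℝ)}
    (hU : ∀ U ∈ 𝒰, 0 < U.2) {L : Finset Y} {t : Y → ℝ}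
    (hL : (L : Set Y).PairwiseDisjoint fun l => ball l (t l)) (f : Y × ℝ → ℝ) :
    ∑ U ∈ 𝒰 with ∀ l ∈ L, ¬ ball U.1 U.2 ⊆ ball l (t l), f U +
      ∑ l ∈ L, ∑ U ∈ 𝒰 with ball U.1 U.2 ⊆ ball l (t l), f U = ∑ U ∈ 𝒰, f U :=
  sum_filter_forall_not_add_sum_sum_filter 𝒰 L (fun U l => ball U.1 U.2 ⊆ ball l (t l))
    (fun U hUU _ hl _ hl' hUl hUl' => hL.elim hl hl' <| not_disjoint_iff.2
      ⟨U.1, hUl (mem_ball_self (hU U hUU)), hUl' (mem_ball_self (hU U hUU))⟩) f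

open Classical in
lemma FlatField.pow_le_sum_of_isFineCover (hF : FlatField d ε E W) {b : X} {ρ : ℝ} (hb : b ∈ E)
    (hρ : 0 < ρ) (hρ1 : ρ ≤ 1) (hζ : ζ ≤ 1 / 2) (hεζ : 20 * ε ≤ ζ) {𝒰 : Finset (X × ℝ)}
    (hU : IsFineCover E 𝒰 (ζ / 4) b ρ) :
    ((1 - ζ) * ρ) ^ d ≤ ∑ U ∈ 𝒰 with ball U.1 U.2 ⊆ ball b ρ, U.2 ^ d := by
  have hε : 64 * ε ≤ 2 ^ 2 := by linarith
  have h := hF.pow_add_le_of_isFineCover hb hρ hρ1 hζ hεζ two_pos le_rfl hε hU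
    (L := ∅) (t := fun _ => 0) ⟨by simp, by simp, by simp, by simp, by simp, by simp⟩
  simpa only [Finset.sum_empty, mul_zero, add_zero, Finset.notMem_empty, IsEmpty.forall_iff,
    implies_true, and_true] using h

open Classical in
lemma FlatField.gain_of_isFineCover (hF : FlatField d ε E W) {b : X} {ρ : ℝ} (hb : b ∈ E)
    (hρ : 0 < ρ) (hρ1 : ρ ≤ 1) (hζ : ζ ≤ 1 / 2) (hεζ : 20 * ε ≤ ζ) (hα0 : 0 < α) (hα : α ≤ 2)
    (hεα : 64 * ε ≤ α ^ 2) (hζα : d * ζ ≤ (α ^ 2 / 128) ^ d / 2) {𝒰 : Finset (X × ℝ)}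
    (hU : IsFineCover E 𝒰 (ζ / 4) b ρ) {L : Finset X} {t : X → ℝ}
    (hL : IsTiltedFamily E W α b ρ L t) (hUL : ∀ l ∈ L, IsFineCover E 𝒰 (ζ / 4) l (t l)) :
    (1 - d * ζ) * ρ ^ d + (α ^ 2 / 128) ^ d / 2 * ∑ l ∈ L, t l ^ d ≤
      ∑ U ∈ 𝒰 with ball U.1 U.2 ⊆ ball b ρ, U.2 ^ d := by
  have houter := (add_le_add_left (one_sub_mul_mul_pow_le d hρ.le (by linarith)) _).trans
    (hF.pow_add_le_of_isFineCover hb hρ hρ1 hζ hεζ hα0 hα hεα hU hL)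
  have hinner : (1 - d * ζ) * ∑ l ∈ L, t l ^ d ≤
      ∑ l ∈ L, ∑ U ∈ 𝒰 with ball U.1 U.2 ⊆ ball l (t l), U.2 ^ d := by
    rw [Finset.mul_sum]
    exact Finset.sum_le_sum fun l hl =>
      (one_sub_mul_mul_pow_le d (hL.pos l hl).le (by linarith)).trans
        (hF.pow_le_sum_of_isFineCover (hL.mem l hl) (hL.pos l hl) (hL.le_one l hl) hζ hεζ
          (hUL l hl))
  have hsplit := sum_filter_not_ball_subset_add (𝒰 := 𝒰.filter fun U => ball U.1 U.2 ⊆ ball b ρ)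
    (fun U hUU => hU.pos U (Finset.mem_filter.1 hUU).1) hL.disjoint fun U => U.2 ^ d
  have hin : ∀ l ∈ L, (∑ U ∈ (𝒰.filter fun U => ball U.1 U.2 ⊆ ball b ρ) with
      ball U.1 U.2 ⊆ ball l (t l), U.2 ^ d) =
        ∑ U ∈ 𝒰 with ball U.1 U.2 ⊆ ball l (t l), U.2 ^ d := by
    intro l hl
    rw [Finset.filter_filter]
    exact Finset.sum_congr (Finset.filter_congr fun U _ =>
      and_iff_right_of_imp fun h => h.trans (hL.subset l hl)) fun _ _ => rfl
  rw [Finset.sum_congr rfl hin, Finset.filter_filter] at hsplit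
  have hsum0 : 0 ≤ ∑ l ∈ L, t l ^ d := Finset.sum_nonneg fun l hl => pow_nonneg (hL.pos l hl).le _
  have hζsum := mul_le_mul_of_nonneg_right hζα hsum0
  linarith

end Covering

section Families

/-- A covering of `E ∩ closedBall x (2 * r)` by balls centered on `E`, encoded as pairs
(center, radius), with radii at most `max (σ ·) η`. -/
structure IsLevelCover {X : Type*} [NormedAddCommGroup X] (E : Set X) (x : X) (r : ℝ) (σ : X → ℝ)
    (η : ℝ) (𝒰 : Finset (X × ℝ)) : Prop where
  mem : ∀ U ∈ 𝒰, U.1 ∈ E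
  pos : ∀ U ∈ 𝒰, 0 < U.2
  le : ∀ U ∈ 𝒰, U.2 ≤ max (σ U.1) η
  cover : ∀ f ∈ E, ‖f - x‖ ≤ 2 * r → ∃ U ∈ 𝒰, f ∈ ball U.1 U.2

/-- A finite family of points of `E ∩ ball x r` with scale `σ ≥ η`, separated at this scale. -/
structure IsSeparatedFamily {X : Type*} [NormedAddCommGroup X] (E : Set X) (x : X) (r : ℝ)
    (σ : X → ℝ) (η : ℝ) (I : Finset X) : Prop where
  mem : ∀ i ∈ I, i ∈ E
  near : ∀ i ∈ I, ‖i - x‖ < r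
  le : ∀ i ∈ I, η ≤ σ i
  disjoint : (I : Set X).PairwiseDisjoint fun i => ball i (σ i)

variable {X : Type*} [NormedAddCommGroup X] {E : Set X} {x : X} {r η : ℝ} {σ σ' : X → ℝ}

lemma IsSeparatedFamily.pos {I : Finset X} (hI : IsSeparatedFamily E x r σ η I) (hη : 0 < η)
    {i : X} (hi : i ∈ I) : 0 < σ i :=
  hη.trans_le (hI.le i hi)

lemma IsSeparatedFamily.mono {I J : Finset X} (hI : IsSeparatedFamily E x r σ η I) (hJ : J ⊆ I) :
    IsSeparatedFamily E x r σ η J :=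
  ⟨fun i hi => hI.mem i (hJ hi), fun i hi => hI.near i (hJ hi), fun i hi => hI.le i (hJ hi),
    hI.disjoint.subset (Finset.coe_subset.2 hJ)⟩

open Classical in
lemma IsLevelCover.replace {𝒰 : Finset (X × ℝ)} (hU : IsLevelCover E x r σ' η 𝒰)
    (hσ : ∀ e ∈ E, σ' e ≤ σ e) {u : Finset X} (hu : ∀ b ∈ u, b ∈ E) (hu0 : ∀ b ∈ u, 0 < σ b) :
    IsLevelCover E x r σ η ({U ∈ 𝒰 | ∀ b ∈ u, ¬ ball U.1 U.2 ⊆ ball b (σ b)} ∪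
      u.image fun b => (b, σ b)) := by
  have hmem : ∀ U ∈ {U ∈ 𝒰 | ∀ b ∈ u, ¬ ball U.1 U.2 ⊆ ball b (σ b)} ∪ u.image fun b => (b, σ b),
      U ∈ 𝒰 ∨ ∃ b ∈ u, (b, σ b) = U := fun U hU' => by
    rw [Finset.mem_union, Finset.mem_filter, Finset.mem_image] at hU'
    exact hU'.imp_left And.left
  refine ⟨fun U hU' => ?_, fun U hU' => ?_, fun U hU' => ?_, fun f hf hfx => ?_⟩
  · rcases hmem U hU' with hU' | ⟨b, hb, rfl⟩
    exacts [hU.mem U hU', hu b hb]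
  · rcases hmem U hU' with hU' | ⟨b, hb, rfl⟩
    exacts [hU.pos U hU', hu0 b hb]
  · rcases hmem U hU' with hU' | ⟨b, -, rfl⟩
    exacts [(hU.le U hU').trans (max_le_max_right _ (hσ _ (hU.mem U hU'))), le_max_left _ _]
  · obtain ⟨U, hU', hfU⟩ := hU.cover f hf hfx
    by_cases h : ∃ b ∈ u, ball U.1 U.2 ⊆ ball b (σ b)
    · obtain ⟨b, hb, hsub⟩ := h
      exact ⟨(b, σ b), Finset.mem_union_right _ (Finset.mem_image_of_mem _ hb), hsub hfU⟩
    · push Not at h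
      exact ⟨U, Finset.mem_union_left _ (Finset.mem_filter.2 ⟨hU', h⟩), hfU⟩

open Classical in
lemma IsLevelCover.le_cost_of_replace {d : ℕ} {𝒰 : Finset (X × ℝ)}
    (hU : IsLevelCover E x r σ' η 𝒰) (hσ : ∀ e ∈ E, σ' e ≤ σ e) {u : Finset X}
    (hu : ∀ b ∈ u, b ∈ E) (hu0 : ∀ b ∈ u, 0 < σ b)
    (hdisj : (u : Set X).PairwiseDisjoint fun b => ball b (σ b)) {Λ : ℝ}
    (hΛ : ∀ 𝒰', IsLevelCover E x r σ η 𝒰' → Λ ≤ ∑ U ∈ 𝒰', U.2 ^ d) :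
    Λ + ∑ b ∈ u, ∑ U ∈ 𝒰 with ball U.1 U.2 ⊆ ball b (σ b), U.2 ^ d
      ≤ ∑ U ∈ 𝒰, U.2 ^ d + ∑ b ∈ u, σ b ^ d := by
  have hsplit := sum_filter_not_ball_subset_add hU.pos hdisj fun U => U.2 ^ d
  have hcost : ∑ U ∈ {U ∈ 𝒰 | ∀ b ∈ u, ¬ ball U.1 U.2 ⊆ ball b (σ b)} ∪
      u.image fun b => (b, σ b), U.2 ^ d ≤
      ∑ U ∈ 𝒰 with ∀ b ∈ u, ¬ ball U.1 U.2 ⊆ ball b (σ b), U.2 ^ d + ∑ b ∈ u, σ b ^ d := by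
    rw [← Finset.sum_image (f := fun U : X × ℝ => U.2 ^ d) (g := fun b => (b, σ b))
      fun b _ b' _ h => congrArg Prod.fst h, ← Finset.sum_union_inter]
    exact le_add_of_nonneg_right <| Finset.sum_nonneg fun U hU' =>
      pow_nonneg (hU.pos U (Finset.mem_filter.1 (Finset.mem_inter.1 hU').1).1).le _
  linarith [hΛ _ (hU.replace hσ hu hu0)]

lemma IsLevelCover.isFineCover {s : X → ℝ} {θ ζ t : ℝ} {𝒰 : Finset (X × ℝ)} {l : X}
    (hU : IsLevelCover E x r (fun e => 4 * θ * s e) η 𝒰) (hs : SlowlyVarying E s)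
    (hθ0 : 0 ≤ θ) (hθ : θ ≤ 1 / 1000) (hθζ : 48 * θ ≤ ζ) (hl : l ∈ E) (ht : 0 < t)
    (hlx : ‖l - x‖ + t ≤ 2 * r) (hst : s l ≤ 2 * t) (hη : η ≤ 12 * θ * t) :
    IsFineCover E 𝒰 (ζ / 4) l t := by
  refine ⟨hU.pos, fun f hf hfl => hU.cover f hf ?_, ?_⟩
  · linarith [norm_sub_le_norm_sub_add_norm_sub f l x]
  rintro U hUU ⟨y, hyU, hyl⟩
  have hUl : ‖U.1 - l‖ ≤ U.2 + t := by
    rw [← dist_eq_norm]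
    linarith [dist_triangle_left U.1 l y, mem_ball.1 hyU, mem_ball.1 hyl]
  have hUt : U.2 ≤ 12 * θ * t := by
    rcases le_max_iff.1 (hU.le U hUU) with hUs | hUη
    · have hsU : s U.1 ≤ 2 * t + (U.2 + t) / 10 := by
        linarith [hs U.1 (hU.mem U hUU) l hl]
      have hθU := mul_le_mul_of_nonneg_right hθ (hU.pos U hUU).le
      have hθs := mul_le_mul_of_nonneg_left hsU (by positivity : 0 ≤ 4 * θ)
      have hθt : 0 ≤ θ * t := by positivity
      linarith
    · exact hUη.trans hη
  exact hUt.trans (mul_le_mul_of_nonneg_right (by linarith) ht.le)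

end Families

section Selection

variable {X : Type*} [NormedAddCommGroup X] {σ : X → ℝ}

lemma SlowlyVarying.le_mul_of_ball_inter_nonempty {E : Set X} (hσ : SlowlyVarying E σ) {a b : X}
    (ha : a ∈ E) (hb : b ∈ E) (hab : (ball a (σ a) ∩ ball b (σ b)).Nonempty) :
    σ a ≤ 1.3 * σ b ∧ σ b ≤ 1.3 * σ a := by
  obtain ⟨y, hya, hyb⟩ := hab
  have hy0 := dist_nonneg.trans_lt (mem_ball.1 hya)
  have hy0' := dist_nonneg.trans_lt (mem_ball.1 hyb)
  have hdist : ‖a - b‖ ≤ σ a + σ b := by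
    rw [← dist_eq_norm]
    linarith [dist_triangle_left a b y, mem_ball.1 hya, mem_ball.1 hyb]
  constructor
  · linarith [hσ a ha b hb]
  · linarith [hσ.le_add ha hb]

lemma sum_le_sum_sum_filter {ι κ : Type*} (I : Finset ι) (L : Finset κ) (R : ι → κ → Prop)
    [∀ i l, Decidable (R i l)] {f : ι → ℝ} (hf : ∀ i ∈ I, 0 ≤ f i)
    (h : ∀ i ∈ I, ∃ l ∈ L, R i l) : ∑ i ∈ I, f i ≤ ∑ l ∈ L, ∑ i ∈ I with R i l, f i := by
  simp_rw [Finset.sum_filter]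
  rw [Finset.sum_comm]
  refine Finset.sum_le_sum fun i hi => ?_
  obtain ⟨l, hl, hil⟩ := h i hi
  calc f i = if R i l then f i else 0 := (if_pos hil).symm
    _ ≤ ∑ l ∈ L, if R i l then f i else 0 :=
      Finset.single_le_sum (f := fun l => if R i l then f i else 0)
        (fun l _ => ite_nonneg (hf i hi) le_rfl) hl

lemma exists_disjoint_closedBall_covering (I : Finset X) (hσ : ∀ i ∈ I, 0 ≤ σ i) :
    ∃ J ⊆ I, (J : Set X).PairwiseDisjoint (fun a => closedBall a (σ a)) ∧
      ∀ i ∈ I, ∃ j ∈ J, ‖i - j‖ ≤ 5 * σ j := by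
  obtain ⟨J, hJI, hJdisj, hJcov⟩ :=
    Vitali.exists_disjoint_subfamily_covering_enlargement_closedBall (I : Set X) id σ
      (∑ i ∈ I, σ i) (fun i hi => Finset.single_le_sum hσ hi) 5 (by norm_num)
  lift J to Finset X using I.finite_toSet.subset hJI
  refine ⟨J, Finset.coe_subset.1 hJI, hJdisj, fun i hi => ?_⟩
  obtain ⟨j, hj, hij⟩ := hJcov i hi
  have hmem := hij (mem_closedBall_self (hσ i hi))
  rw [id, id, mem_closedBall, dist_eq_norm] at hmem
  exact ⟨j, hj, hmem⟩

variable [NormedSpace ℝ X] [FiniteDimensional ℝ X]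

open Classical in
lemma card_filter_ball_inter_nonempty_le {J : Finset X} (hσ : SlowlyVarying (J : Set X) σ)
    (hJ : (J : Set X).PairwiseDisjoint fun a => closedBall a (σ a / 20)) {b : X} (hb : b ∈ J)
    (hb0 : 0 < σ b) :
    (Finset.card {a ∈ J | (ball a (σ a) ∩ ball b (σ b)).Nonempty} : ℝ)
      ≤ 120 ^ Module.finrank ℝ X := by
  have hsub : ∀ a ∈ {a ∈ J | (ball a (σ a) ∩ ball b (σ b)).Nonempty},
      ball a (σ b / 40) ⊆ ball b (3 * σ b) := by
    intro a ha
    obtain ⟨haJ, hab⟩ := Finset.mem_filter.1 ha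
    have hcomp := hσ.le_mul_of_ball_inter_nonempty haJ hb hab
    obtain ⟨y, hya, hyb⟩ := hab
    apply ball_subset_ball'
    linarith [dist_triangle_left a b y, mem_ball.1 hya, mem_ball.1 hyb]
  have hdisj : (({a ∈ J | (ball a (σ a) ∩ ball b (σ b)).Nonempty} : Finset X) :
      Set X).PairwiseDisjoint fun a => ball a (σ b / 40) :=
    (hJ.subset fun a ha => (Finset.mem_filter.1 ha).1).mono_on fun a ha => by
      obtain ⟨haJ, hab⟩ := Finset.mem_filter.1 ha
      exact ball_subset_closedBall.trans (closedBall_subset_closedBall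
        (by linarith [(hσ.le_mul_of_ball_inter_nonempty haJ hb hab).2]))
  have hpack := sum_pow_finrank_le_of_disjoint_ball _ (fun _ _ => by positivity)
    (by positivity : 0 < 3 * σ b) hsub hdisj
  rw [Finset.sum_const, nsmul_eq_mul,
    show 3 * σ b = 120 * (σ b / 40) by ring, mul_pow (120 : ℝ)] at hpack
  exact le_of_mul_le_mul_right hpack (by positivity)

lemma exists_disjoint_ball_sum_le {J : Finset X} (hσ : SlowlyVarying (J : Set X) σ)
    (hσ0 : ∀ j ∈ J, 0 < σ j) (hJ : (J : Set X).PairwiseDisjoint fun a => closedBall a (σ a / 20))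
    {w : X → ℝ} (hw : ∀ j ∈ J, 0 ≤ w j) :
    ∃ u ⊆ J, (u : Set X).PairwiseDisjoint (fun b => ball b (σ b)) ∧
      ∑ j ∈ J, w j ≤ 2 * 120 ^ Module.finrank ℝ X * ∑ b ∈ u, w b := by
  classical
  obtain ⟨u, huJ, hudisj, hucov⟩ := Vitali.exists_disjoint_subfamily_covering_enlargement
    (fun j => ball j (σ j)) (J : Set X) w 2 (by norm_num) hw (∑ j ∈ J, w j)
    (fun j hj => Finset.single_le_sum hw hj) (fun j hj => ⟨j, mem_ball_self (hσ0 j hj)⟩)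
  lift u to Finset X using J.finite_toSet.subset huJ
  refine ⟨u, Finset.coe_subset.1 huJ, hudisj, ?_⟩
  have hsum : ∀ b ∈ u, ∑ a ∈ J with (ball a (σ a) ∩ ball b (σ b)).Nonempty ∧ w a ≤ 2 * w b, w a
      ≤ 2 * 120 ^ Module.finrank ℝ X * w b := fun b hb => by
    have hcard := card_filter_ball_inter_nonempty_le hσ hJ (huJ hb) (hσ0 b (huJ hb))
    have hfilter : (Finset.card {a ∈ J | (ball a (σ a) ∩ ball b (σ b)).Nonempty ∧
        w a ≤ 2 * w b} : ℝ) ≤ 120 ^ Module.finrank ℝ X :=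
      le_trans (by gcongr; exact fun h => h.1) hcard
    calc _ ≤ Finset.card {a ∈ J | (ball a (σ a) ∩ ball b (σ b)).Nonempty ∧ w a ≤ 2 * w b} •
          (2 * w b) := Finset.sum_le_card_nsmul _ _ _ fun a ha => (Finset.mem_filter.1 ha).2.2
      _ ≤ 120 ^ Module.finrank ℝ X * (2 * w b) := by
          rw [nsmul_eq_mul]
          exact mul_le_mul_of_nonneg_right hfilter (by linarith [hw b (huJ hb)])
      _ = 2 * 120 ^ Module.finrank ℝ X * w b := by ring
  rw [Finset.mul_sum]
  exact (sum_le_sum_sum_filter J u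
    (fun a b => (ball a (σ a) ∩ ball b (σ b)).Nonempty ∧ w a ≤ 2 * w b) hw hucov).trans
    (Finset.sum_le_sum hsum)

open Classical in
lemma exists_disjoint_ball_sum_le_sum_sum {I : Finset X} (hσ : SlowlyVarying (I : Set X) σ)
    (hσ0 : ∀ i ∈ I, 0 < σ i) {f : X → ℝ} (hf : ∀ i ∈ I, 0 ≤ f i) :
    ∃ u ⊆ I, (u : Set X).PairwiseDisjoint (fun b => ball b (σ b)) ∧
      ∑ i ∈ I, f i ≤ 2 * 120 ^ Module.finrank ℝ X *
        ∑ b ∈ u, ∑ i ∈ I with ‖i - b‖ ≤ σ b / 4, f i := by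
  obtain ⟨J, hJI, hJ, hcov⟩ := exists_disjoint_closedBall_covering I (σ := fun i => σ i / 20)
    fun i hi => by linarith [hσ0 i hi]
  obtain ⟨u, huJ, hudisj, hu⟩ := exists_disjoint_ball_sum_le
    (fun a ha b hb => hσ a (hJI ha) b (hJI hb)) (fun j hj => hσ0 j (hJI hj)) hJ
    (w := fun b => ∑ i ∈ I with ‖i - b‖ ≤ σ b / 4, f i)
    fun j _ => Finset.sum_nonneg fun i hi => hf i (Finset.mem_filter.1 hi).1
  refine ⟨u, huJ.trans hJI, hudisj, le_trans ?_ hu⟩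
  refine sum_le_sum_sum_filter I J (fun i b => ‖i - b‖ ≤ σ b / 4) hf fun i hi => ?_
  obtain ⟨j, hj, hij⟩ := hcov i hi
  exact ⟨j, hj, by linarith⟩

end Selection

/-- Smallness conditions on the parameters of the construction: the turning threshold `δ`, the ratio
`θ` of consecutive scales, the relative cost `ζ` of the boundary of a covering, and the flatness
`ε`. -/
structure SmallParams (d : ℕ) (δ θ ζ ε : ℝ) : Prop where
  delta_pos : 0 < δ
  delta_le : δ ≤ 1 / 8
  theta_pos : 0 < θ
  theta_le : θ ≤ 1 / 1000
  theta_le_zeta : 48 * θ ≤ ζ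
  zeta_le : ζ ≤ 1 / 2
  zeta_le_delta : d * ζ ≤ ((δ / 2) ^ 2 / 128) ^ d / 2
  eps_le : 10000 * ε ≤ δ * θ
  eps_le_zeta : 20 * ε ≤ ζ
  eps_le_delta : 64 * ε ≤ (δ / 2) ^ 2

section Gain

variable {X : Type*} [NormedAddCommGroup X] [InnerProductSpace ℝ X] [FiniteDimensional ℝ X]
  {d : ℕ} {ε δ θ ζ r η : ℝ} {E : Set X} {W : X → ℝ → Submodule ℝ X} {s : ℕ → X → ℝ} {x : X}

lemma FlatField.norm_sub_le_of_theta_mul_le (hF : FlatField d ε E W) (hp : SmallParams d δ θ ζ ε)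
    {e f : X} (he : e ∈ E) (hf : f ∈ E) {t t' T : ℝ} (ht : 0 < t) (ht' : 0 < t') (hT : T ≤ 1)
    (htT : ‖e - f‖ + 2 * t ≤ T) (htT' : 2 * t' ≤ T) (hθt : θ * T ≤ t) (hθt' : θ * T ≤ t') :
    ‖(W e t).starProjection - (W f t').starProjection‖ ≤ δ / 100 := by
  have hθ0 := hp.theta_pos
  have hεθ : θ⁻¹ * ε ≤ δ / 10000 := by
    rw [inv_mul_le_iff₀ hθ0]
    linarith [hp.eps_le]
  have hclose := hF.norm_sub_le_of_comparable he hf ht ht' hT htT htT'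
    ((le_inv_mul_iff₀ hθ0).2 hθt) ((le_inv_mul_iff₀ hθ0).2 hθt') (by linarith [hp.delta_le])
  linarith [hp.delta_pos]

lemma FlatField.norm_sub_le_of_near (hF : FlatField d ε E W) (hs : ScaleChain E W δ θ r s)
    (hp : SmallParams d δ θ ζ ε) (hr : r ≤ 1 / 10) {k : ℕ} {i b : X} (hi : i ∈ E) (hb : b ∈ E)
    (hb0 : 0 < s k b) (hib : ‖i - b‖ ≤ θ * s k b) :
    ‖(W i (s k i)).starProjection - (W b (4 * θ * s k b)).starProjection‖ ≤ δ / 100 := by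
  have hθ0 := hp.theta_pos
  have hθ := hp.theta_le
  have hle := hs.le (by linarith) k hb
  have hθb := mul_le_mul_of_nonneg_right hθ hb0.le
  have hθb0 : 0 < θ * s k b := by positivity
  have hbi := hs.slowlyVarying k i hi b hb
  have hib' := (hs.slowlyVarying k).le_add hi hb
  exact hF.norm_sub_le_of_theta_mul_le hp hi hb (T := 3 * s k b) (by linarith) (by positivity)
    (by linarith) (by linarith) (by linarith) (by linarith) (by linarith)

lemma FlatField.norm_sub_le_of_next_le (hF : FlatField d ε E W) (hs : ScaleChain E W δ θ r s)
    (hp : SmallParams d δ θ ζ ε) (hr : r ≤ 1 / 10) {k : ℕ} {i : X} (hi : i ∈ E)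
    (hi0 : 0 < s (k + 1) i) {t : ℝ} (hit : 2 * θ * s (k + 1) i ≤ t) (hti : t ≤ s k i) :
    ‖(W i t).starProjection - (W i (s k i)).starProjection‖ ≤ 2 * δ + δ / 100 := by
  have hθ0 := hp.theta_pos
  have hθ := hp.theta_le
  have hδ0 := hp.delta_pos
  have hsr := hs.le (by linarith) (k + 1) hi
  have hθi := mul_le_mul_of_nonneg_right hθ hi0.le
  have ht0 : 0 < t := lt_of_lt_of_le (by positivity) hit
  rcases le_total (s (k + 1) i) t with h | h
  · linarith [hs.close k i hi t ht0 h hti]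
  · have hnext := hs.close k i hi (s (k + 1) i) hi0 le_rfl
      (hs.antitone (by linarith) hi k.le_succ)
    have hclose := hF.norm_sub_le_of_theta_mul_le hp hi hi (T := 2 * s (k + 1) i) ht0 hi0
      (by linarith) (by rw [sub_self, norm_zero]; linarith) le_rfl (by linarith) (by linarith)
    linarith [norm_sub_le_norm_sub_add_norm_sub (W i t).starProjection
      (W i (s (k + 1) i)).starProjection (W i (s k i)).starProjection]

lemma FlatField.half_norm_le_norm_starProjection (hF : FlatField d ε E W)
    (hs : ScaleChain E W δ θ r s) (hp : SmallParams d δ θ ζ ε) (hr : r ≤ 1 / 10) {k : ℕ}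
    {i j b : X} (hi : i ∈ E) (hj : j ∈ E) (hb : b ∈ E) (hb0 : 0 < s k b)
    (hib : ‖i - b‖ ≤ θ * s k b) (hjb : ‖j - b‖ ≤ θ * s k b) (hi0 : 0 < s (k + 1) i)
    (hij : 4 * θ * s (k + 1) i ≤ ‖j - i‖) :
    ‖j - i‖ / 2 ≤ ‖(W b (4 * θ * s k b)).starProjection (j - i)‖ := by
  have hθ0 := hp.theta_pos
  have hθ := hp.theta_le
  have hδ := hp.delta_le
  have hε : ε ≤ 1 / 1000 := by nlinarith [hp.eps_le]
  have hθb := mul_le_mul_of_nonneg_right hθ hb0.le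
  have hbi := (hs.slowlyVarying k).le_add hi hb
  have hsr := hs.le (by linarith) k hi
  have hji : ‖j - i‖ ≤ 2 * (θ * s k b) := by
    linarith [norm_sub_le_norm_sub_add_norm_sub j b i, norm_sub_rev b i]
  have hji0 : 0 < ‖j - i‖ := lt_of_lt_of_le (by positivity) hij
  set Q := (W i (2 * ‖j - i‖)).starProjection
  set P := (W b (4 * θ * s k b)).starProjection
  have hQP : ‖Q - P‖ ≤ 2 * δ + δ / 100 + δ / 100 :=
    (norm_sub_le_norm_sub_add_norm_sub Q (W i (s k i)).starProjection P).trans <| add_le_add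
      (hF.norm_sub_le_of_next_le hs hp hr hi hi0 (by linarith) (by linarith))
      (hF.norm_sub_le_of_near hs hp hr hi hb hb0 hib)
  have hflat : ‖(j - i) - Q (j - i)‖ ≤ ε * (2 * ‖j - i‖) :=
    hF.near_plane i hi _ (by positivity) (by linarith) j hj (by linarith)
  have htilt : ‖Q (j - i) - P (j - i)‖ ≤ (2 * δ + δ / 100 + δ / 100) * ‖j - i‖ :=
    ContinuousLinearMap.le_of_opNorm_le _ hQP (j - i)
  have hsum := norm_sub_le_norm_sub_add_norm_sub (j - i) (Q (j - i)) (P (j - i))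
  have hback := norm_le_norm_sub_add (j - i) (P (j - i))
  have hεj := mul_le_mul_of_nonneg_right hε hji0.le
  have hδj := mul_le_mul_of_nonneg_right hδ hji0.le
  linarith

lemma FlatField.sum_pow_le_of_near (hF : FlatField d ε E W) (hs : ScaleChain E W δ θ r s)
    (hp : SmallParams d δ θ ζ ε) (hr : r ≤ 1 / 10) {k : ℕ} {b l : X} {t : ℝ} (hb : b ∈ E)
    (hb0 : 0 < s k b) (hl : l ∈ E) (ht : 0 < t) (hlt : s (k + 1) l ≤ 2 * t) (hη : 0 < η)
    {I : Finset X} (hI : IsSeparatedFamily E x r (fun e => 4 * θ * s (k + 1) e) η I)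
    (hIb : ∀ i ∈ I, ‖i - b‖ ≤ θ * s k b) (hIl : ∀ i ∈ I, ‖i - l‖ ≤ 5 * t) :
    ∑ i ∈ I, (4 * θ * s (k + 1) i) ^ d ≤ 12 ^ d * t ^ d := by
  have hθ0 := hp.theta_pos
  have hθ := hp.theta_le
  have hσ0 : ∀ i ∈ I, 0 < 4 * θ * s (k + 1) i := fun i hi => hI.pos hη hi
  have hle := hs.le (by linarith) k hb
  have hfr := hF.finrank_eq b hb (4 * θ * s k b) (by positivity) (by nlinarith)
  set π := (W b (4 * θ * s k b)).orthogonalProjectionOnto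
  have hsub : ∀ i ∈ I, ball (π i) (2 * θ * s (k + 1) i) ⊆ ball (π l) (6 * t) := by
    intro i hi
    apply ball_subset_ball'
    rw [dist_eq_norm, ← map_sub]
    have hπ : ‖π (i - l)‖ ≤ 5 * t :=
      (Submodule.norm_orthogonalProjectionOnto_apply_le _ _).trans (hIl i hi)
    have hi3 : s (k + 1) i ≤ 3 * t := by
      linarith [hs.slowlyVarying (k + 1) i (hI.mem i hi) l hl, hIl i hi]
    nlinarith
  have hdisj : (I : Set X).PairwiseDisjoint fun i => ball (π i) (2 * θ * s (k + 1) i) := by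
    intro i hi j hj hij
    have hdist := hI.disjoint hi hj hij
    have hi0 := hσ0 i hi
    have hj0 := hσ0 j hj
    simp only [Function.onFun] at hdist ⊢
    rw [disjoint_ball_ball_iff (by linarith) (by linarith), dist_eq_norm] at hdist ⊢
    rw [← map_sub]
    have hproj : ‖i - j‖ / 2 ≤ ‖π (i - j)‖ := hF.half_norm_le_norm_starProjection hs hp hr
      (hI.mem j hj) (hI.mem i hi) hb hb0 (hIb j hj) (hIb i hi)
      (pos_of_mul_pos_right hj0 (by positivity)) (by linarith)
    linarith
  have key := sum_pow_finrank_le_of_disjoint_ball I (fun i hi => by linarith [hσ0 i hi])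
    (by positivity) hsub hdisj
  rw [hfr] at key
  calc ∑ i ∈ I, (4 * θ * s (k + 1) i) ^ d = 2 ^ d * ∑ i ∈ I, (2 * θ * s (k + 1) i) ^ d := by
        rw [Finset.mul_sum]
        exact Finset.sum_congr rfl fun i _ => by rw [← mul_pow]; ring
    _ ≤ 2 ^ d * (6 * t) ^ d := by gcongr
    _ = 12 ^ d * t ^ d := by rw [← mul_pow, ← mul_pow]; ring

lemma FlatField.exists_isTiltedFamily (hF : FlatField d ε E W) (hs : ScaleChain E W δ θ r s)
    (hp : SmallParams d δ θ ζ ε) (hr : r ≤ 1 / 10) {k : ℕ} {b : X} (hb : b ∈ E)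
    (hb0 : 0 < s k b) (hη : 0 < η) {I : Finset X}
    (hI : IsSeparatedFamily E x r (fun e => 4 * θ * s (k + 1) e) η I)
    (hIb : ∀ i ∈ I, ‖i - b‖ ≤ θ * s k b) :
    ∃ L ⊆ I, ∃ t : X → ℝ, IsTiltedFamily E W (δ / 2) b (4 * θ * s k b) L t ∧
      (∀ l ∈ L, s (k + 1) l ≤ 2 * t l ∧ t l ≤ r) ∧ ∀ i ∈ I, ∃ l ∈ L, ‖i - l‖ ≤ 5 * t l := by
  have hθ0 := hp.theta_pos
  have hθ := hp.theta_le
  have hδ0 := hp.delta_pos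
  have hI0 : ∀ i ∈ I, 0 < s (k + 1) i := fun i hi =>
    pos_of_mul_pos_right (hI.pos hη hi) (by positivity)
  choose! t hst htθ htilt using fun i hi => hs.tilt k i (hI.mem i hi) (hI0 i hi)
  have ht0 : ∀ i ∈ I, 0 < t i := fun i hi => by linarith [hst i hi, hI0 i hi]
  have htr : ∀ i ∈ I, t i ≤ r := fun i hi => (htθ i hi).trans <|
    (mul_le_of_le_one_left (hs.nonneg k i (hI.mem i hi)) (by linarith)).trans
      (hs.le (by linarith) k (hI.mem i hi))
  have htb : ∀ i ∈ I, t i ≤ 1.1 * (θ * s k b) := fun i hi => by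
    have hsi := hs.slowlyVarying k i (hI.mem i hi) b hb
    have hθb := mul_le_mul_of_nonneg_right hθ hb0.le
    nlinarith [htθ i hi, hIb i hi]
  obtain ⟨L, hLI, hdisj, hcov⟩ :=
    exists_disjoint_closedBall_covering I fun i hi => (ht0 i hi).le
  refine ⟨L, hLI, t, ⟨fun l hl => hI.mem l (hLI hl), fun l hl => ht0 l (hLI hl), fun l hl => ?_,
    fun l hl => ball_subset_ball' ?_, hdisj.mono fun l => ball_subset_closedBall, fun l hl => ?_⟩,
    fun l hl => ⟨by linarith [hst l (hLI hl)], htr l (hLI hl)⟩, hcov⟩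
  · linarith [htr l (hLI hl)]
  · rw [dist_eq_norm]
    linarith [htb l (hLI hl), hIb l (hLI hl), mul_pos hθ0 hb0]
  · have hnear := hF.norm_sub_le_of_near hs hp hr (hI.mem l (hLI hl)) hb hb0 (hIb l (hLI hl))
    rw [norm_sub_rev] at hnear ⊢
    linarith [htilt l (hLI hl), norm_sub_le_norm_sub_add_norm_sub (W l (t l)).starProjection
      (W b (4 * θ * s k b)).starProjection (W l (s k l)).starProjection]

open Classical in
/-- Over each separated point the planes have turned by at least `δ`, so a covering at the scale
`s (k + 1)` costs definitely more than the single ball at the scale `s k`. -/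
lemma FlatField.local_gain (hF : FlatField d ε E W) (hs : ScaleChain E W δ θ r s)
    (hp : SmallParams d δ θ ζ ε) (hr : r ≤ 1 / 10) {k : ℕ} {b : X} (hb : b ∈ E)
    (hbx : ‖b - x‖ < r) (hb0 : 0 < s k b) (hη : 0 < η) {𝒰 : Finset (X × ℝ)}
    (hU : IsLevelCover E x r (fun e => 4 * θ * s (k + 1) e) η 𝒰) {I : Finset X}
    (hI : IsSeparatedFamily E x r (fun e => 4 * θ * s (k + 1) e) η I) (hbI : b ∈ I)
    (hIb : ∀ i ∈ I, ‖i - b‖ ≤ θ * s k b) :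
    (1 - d * ζ) * (4 * θ * s k b) ^ d
        + ((δ / 2) ^ 2 / 128) ^ d / 2 / 12 ^ d * ∑ i ∈ I, (4 * θ * s (k + 1) i) ^ d
      ≤ ∑ U ∈ 𝒰 with ball U.1 U.2 ⊆ ball b (4 * θ * s k b), U.2 ^ d := by
  have hθ0 := hp.theta_pos
  have hθ := hp.theta_le
  have hδ0 := hp.delta_pos
  have hsr := hs.le (by linarith) k hb
  have hθb := mul_le_mul_of_nonneg_right hθ hb0.le
  have hθb0 : 0 < θ * s k b := mul_pos hθ0 hb0
  obtain ⟨L, hLI, t, hL, hst, hcov⟩ := hF.exists_isTiltedFamily hs hp hr hb hb0 hη hI hIb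
  have hsum : ∑ i ∈ I, (4 * θ * s (k + 1) i) ^ d ≤ 12 ^ d * ∑ l ∈ L, t l ^ d := by
    rw [Finset.mul_sum]
    refine (sum_le_sum_sum_filter I L (fun i l => ‖i - l‖ ≤ 5 * t l)
      (fun i hi => pow_nonneg (hI.pos hη hi).le _) hcov).trans (Finset.sum_le_sum fun l hl => ?_)
    exact hF.sum_pow_le_of_near hs hp hr hb hb0 (hL.mem l hl) (hL.pos l hl) (hst l hl).1 hη
      (hI.mono (Finset.filter_subset _ _)) (fun i hi => hIb i (Finset.mem_filter.1 hi).1)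
      fun i hi => (Finset.mem_filter.1 hi).2
  have hUb : IsFineCover E 𝒰 (ζ / 4) b (4 * θ * s k b) := by
    have hsb := hs.succ_le k b hb
    exact hU.isFineCover (hs.slowlyVarying (k + 1)) hθ0.le hθ hp.theta_le_zeta hb (by positivity)
      (by linarith) (by linarith) ((hI.le b hbI).trans (by nlinarith))
  have hUL : ∀ l ∈ L, IsFineCover E 𝒰 (ζ / 4) l (t l) := fun l hl => by
    obtain ⟨hsl, htr⟩ := hst l hl
    exact hU.isFineCover (hs.slowlyVarying (k + 1)) hθ0.le hθ hp.theta_le_zeta (hL.mem l hl)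
      (hL.pos l hl) (by linarith [hI.near l (hLI hl)]) hsl
      ((hI.le l (hLI hl)).trans (by nlinarith [hL.pos l hl]))
  have hgain := hF.gain_of_isFineCover hb (by positivity) (by linarith) hp.zeta_le hp.eps_le_zeta
    (half_pos hδ0) (by linarith [hp.delta_le]) hp.eps_le_delta hp.zeta_le_delta hUb hL hUL
  refine le_trans (add_le_add_right ?_ _) hgain
  rw [div_mul_eq_mul_div, div_le_iff₀ (by positivity), mul_assoc, mul_comm _ ((12 : ℝ) ^ d)]
  exact mul_le_mul_of_nonneg_left hsum (by positivity)

end Gain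

/-- The constant by which the separated families at one scale are controlled by the increase of the
covering cost. -/
def gainConst (n d : ℕ) (δ : ℝ) : ℝ := 2 * 120 ^ n / (((δ / 2) ^ 2 / 128) ^ d / 2 / 12 ^ d)

lemma gainConst_pos (n d : ℕ) {δ : ℝ} (hδ : 0 < δ) : 0 < gainConst n d δ := by
  unfold gainConst
  positivity

section Step

variable {X : Type*} [NormedAddCommGroup X] [InnerProductSpace ℝ X] [FiniteDimensional ℝ X]
  {d : ℕ} {ε δ θ ζ r η Λ : ℝ} {E : Set X} {W : X → ℝ → Submodule ℝ X} {s : ℕ → X → ℝ} {x : X}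

lemma ScaleChain.ballRadius_le (hs : ScaleChain E W δ θ r s) (hθ0 : 0 ≤ θ) (hθ : θ ≤ 1) {e : X}
    (he : e ∈ E) {k l : ℕ} (hkl : k ≤ l) : 4 * θ * s l e ≤ 4 * θ * s k e :=
  mul_le_mul_of_nonneg_left (hs.antitone hθ he hkl) (by positivity)

open Classical in
lemma FlatField.gain_le_cost_sub (hF : FlatField d ε E W) (hs : ScaleChain E W δ θ r s)
    (hp : SmallParams d δ θ ζ ε) (hr : r ≤ 1 / 10) (hη : 0 < η) {k : ℕ} {𝒰 : Finset (X × ℝ)}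
    (hU : IsLevelCover E x r (fun e => 4 * θ * s (k + 1) e) η 𝒰)
    (hΛ : ∀ 𝒰', IsLevelCover E x r (fun e => 4 * θ * s k e) η 𝒰' → Λ ≤ ∑ U ∈ 𝒰', U.2 ^ d)
    {I u : Finset X} (hI : IsSeparatedFamily E x r (fun e => 4 * θ * s (k + 1) e) η I)
    (hk : ∀ i ∈ I, 0 < s k i) (huI : u ⊆ I)
    (hu : (u : Set X).PairwiseDisjoint fun b => ball b (4 * θ * s k b)) :
    ((δ / 2) ^ 2 / 128) ^ d / 2 / 12 ^ d *
        ∑ b ∈ u, ∑ i ∈ I with ‖i - b‖ ≤ 4 * θ * s k b / 4, (4 * θ * s (k + 1) i) ^ d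
      ≤ (∑ U ∈ 𝒰, U.2 ^ d - Λ) + d * ζ * ∑ b ∈ u, (4 * θ * s k b) ^ d := by
  have hθ0 := hp.theta_pos
  have hlocal := Finset.sum_le_sum fun b hb => by
    have hb0 := hk b (huI hb)
    exact hF.local_gain hs hp hr (hI.mem b (huI hb)) (hI.near b (huI hb)) hb0 hη hU
      (hI.mono (Finset.filter_subset (fun i => ‖i - b‖ ≤ 4 * θ * s k b / 4) I))
      (Finset.mem_filter.2 ⟨huI hb, by rw [sub_self, norm_zero]; positivity⟩)
      fun i hi => (Finset.mem_filter.1 hi).2.trans (by linarith)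
  rw [Finset.sum_add_distrib, ← Finset.mul_sum, ← Finset.mul_sum] at hlocal
  have hcost := hU.le_cost_of_replace
    (fun e he => hs.ballRadius_le hθ0.le (hp.theta_le.trans (by norm_num)) he k.le_succ)
    (fun b hb => hI.mem b (huI hb)) (fun b hb => by have := hk b (huI hb); positivity) hu hΛ
  linarith

lemma FlatField.exists_separated (hF : FlatField d ε E W) (hs : ScaleChain E W δ θ r s)
    (hp : SmallParams d δ θ ζ ε) (hA : gainConst (Module.finrank ℝ X) d δ * (d * ζ) ≤ 1 / 2)
    (hr : r ≤ 1 / 10) (hη : 0 < η) {k : ℕ} {𝒰 : Finset (X × ℝ)}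
    (hU : IsLevelCover E x r (fun e => 4 * θ * s (k + 1) e) η 𝒰)
    (hΛ : ∀ 𝒰', IsLevelCover E x r (fun e => 4 * θ * s k e) η 𝒰' → Λ ≤ ∑ U ∈ 𝒰', U.2 ^ d)
    {I : Finset X} (hI : IsSeparatedFamily E x r (fun e => 4 * θ * s (k + 1) e) η I) :
    ∃ u, IsSeparatedFamily E x r (fun e => 4 * θ * s k e) η u ∧
      ∑ i ∈ I, (4 * θ * s (k + 1) i) ^ d ≤
        gainConst (Module.finrank ℝ X) d δ * (∑ U ∈ 𝒰, U.2 ^ d - Λ) +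
          1 / 2 * ∑ b ∈ u, (4 * θ * s k b) ^ d := by
  classical
  have hθ0 := hp.theta_pos
  have hθ := hp.theta_le
  have hδ0 := hp.delta_pos
  have hle : ∀ e ∈ E, 4 * θ * s (k + 1) e ≤ 4 * θ * s k e := fun e he =>
    hs.ballRadius_le hθ0.le (by linarith) he k.le_succ
  have hσ0 : ∀ i ∈ I, 0 < 4 * θ * s k i := fun i hi =>
    (hI.pos hη hi).trans_le (hle i (hI.mem i hi))
  have hslow : SlowlyVarying (I : Set X) fun e => 4 * θ * s k e := fun a ha b hb => by
    have hab := hs.slowlyVarying k a (hI.mem a ha) b (hI.mem b hb)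
    have hθab := mul_le_mul_of_nonneg_left hab (by positivity : 0 ≤ 4 * θ)
    nlinarith [norm_nonneg (a - b)]
  obtain ⟨u, huI, hudisj, hu⟩ := exists_disjoint_ball_sum_le_sum_sum hslow hσ0
    fun i hi => pow_nonneg (hI.pos hη hi).le d
  refine ⟨u, ⟨fun b hb => hI.mem b (huI hb), fun b hb => hI.near b (huI hb),
    fun b hb => (hI.le b (huI hb)).trans (hle b (hI.mem b (huI hb))), hudisj⟩, ?_⟩
  have hgain := hF.gain_le_cost_sub hs hp hr hη hU hΛ hI
    (fun i hi => pos_of_mul_pos_right (hσ0 i hi) (by positivity)) huI hudisj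
  have hu0 : 0 ≤ ∑ b ∈ u, (4 * θ * s k b) ^ d :=
    Finset.sum_nonneg fun b hb => pow_nonneg (hσ0 b (huI hb)).le _
  refine hu.trans ?_
  calc _ = gainConst (Module.finrank ℝ X) d δ * (((δ / 2) ^ 2 / 128) ^ d / 2 / 12 ^ d *
        ∑ b ∈ u, ∑ i ∈ I with ‖i - b‖ ≤ 4 * θ * s k b / 4, (4 * θ * s (k + 1) i) ^ d) := by
        rw [gainConst]
        field_simp
    _ ≤ _ := mul_le_mul_of_nonneg_left hgain (gainConst_pos _ d hδ0).le
    _ ≤ _ := by linarith [mul_le_mul_of_nonneg_right hA hu0]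

end Step

lemma exists_disjoint_closedBall_cover_of_totallyBounded {X : Type*} [NormedAddCommGroup X]
    {Q : Set X} (hQ : TotallyBounded Q) {σ : X → ℝ} {η : ℝ} (hη : 0 < η)
    (hσ : ∀ q ∈ Q, η ≤ σ q) :
    ∃ u : Finset X, (u : Set X) ⊆ Q ∧ (u : Set X).PairwiseDisjoint (fun b => closedBall b (σ b)) ∧
      Q ⊆ ⋃ b ∈ u, ball b (6 * σ b) := by
  obtain ⟨I, hIQ, hIfin, hIcov⟩ := Metric.finite_approx_of_totallyBounded hQ η hη
  lift I to Finset X using hIfin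
  obtain ⟨u, huI, hudisj, hucov⟩ :=
    exists_disjoint_closedBall_covering I fun i hi => hη.le.trans (hσ i (hIQ hi))
  have huQ : (u : Set X) ⊆ Q := (Finset.coe_subset.2 huI).trans hIQ
  refine ⟨u, huQ, hudisj, fun q hq => ?_⟩
  obtain ⟨i, hi, hqi⟩ := mem_iUnion₂.1 (hIcov hq)
  obtain ⟨b, hb, hib⟩ := hucov i hi
  refine mem_iUnion₂.2 ⟨b, hb, mem_ball.2 ?_⟩
  rw [← dist_eq_norm] at hib
  linarith [dist_triangle q i b, mem_ball.1 hqi, hσ b (huQ hb)]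

/-- Ahlfors regularity of dimension `d` with constant `C₀`, at scales up to `1`. -/
def IsAhlforsRegular {X : Type*} [NormedAddCommGroup X] [MeasurableSpace X] [BorelSpace X] (d : ℕ)
    (C₀ : ℝ) (E : Set X) : Prop :=
  ∀ x ∈ E, ∀ r : ℝ, 0 < r → r ≤ 1 →
    ENNReal.ofReal (C₀⁻¹ * r ^ d) ≤ μH[(d : ℝ)] (E ∩ ball x r) ∧
    μH[(d : ℝ)] (E ∩ ball x r) ≤ ENNReal.ofReal (C₀ * r ^ d)

section Packing

variable {X : Type*} [NormedAddCommGroup X] [MeasurableSpace X] [BorelSpace X] {d : ℕ}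
  {C₀ r R η T : ℝ} {E : Set X} {x : X} {σ : X → ℝ}

lemma IsAhlforsRegular.sum_pow_le (hE : IsAhlforsRegular d C₀ E) (hC : 0 < C₀)
    (hEm : MeasurableSet E) (hx : x ∈ E) (hR0 : 0 < R) (hR1 : R ≤ 1) {I : Finset X}
    (hI : ∀ i ∈ I, i ∈ E) (hσ0 : ∀ i ∈ I, 0 < σ i) (hσ1 : ∀ i ∈ I, σ i ≤ 1)
    (hsub : ∀ i ∈ I, ball i (σ i) ⊆ ball x R)
    (hdisj : (I : Set X).PairwiseDisjoint fun i => ball i (σ i)) :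
    ∑ i ∈ I, σ i ^ d ≤ C₀ ^ 2 * R ^ d := by
  have hmeas : ∑ i ∈ I, ENNReal.ofReal (C₀⁻¹ * σ i ^ d) ≤ ENNReal.ofReal (C₀ * R ^ d) :=
    calc ∑ i ∈ I, ENNReal.ofReal (C₀⁻¹ * σ i ^ d)
        ≤ ∑ i ∈ I, μH[(d : ℝ)] (E ∩ ball i (σ i)) :=
          Finset.sum_le_sum fun i hi => (hE i (hI i hi) (σ i) (hσ0 i hi) (hσ1 i hi)).1
      _ = μH[(d : ℝ)] (⋃ i ∈ I, E ∩ ball i (σ i)) :=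
          (measure_biUnion_finset (hdisj.mono fun i => inter_subset_right)
            fun i _ => hEm.inter measurableSet_ball).symm
      _ ≤ μH[(d : ℝ)] (E ∩ ball x R) :=
          measure_mono (iUnion₂_subset fun i hi => inter_subset_inter_right _ (hsub i hi))
      _ ≤ ENNReal.ofReal (C₀ * R ^ d) := (hE x hx R hR0 hR1).2
  rw [← ENNReal.ofReal_sum_of_nonneg fun i hi =>
      mul_nonneg (by positivity) (pow_nonneg (hσ0 i hi).le d),
    ENNReal.ofReal_le_ofReal_iff (by positivity), ← Finset.mul_sum, inv_mul_le_iff₀ hC] at hmeas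
  linarith

lemma IsAhlforsRegular.sum_pow_le_of_isSeparatedFamily (hE : IsAhlforsRegular d C₀ E) (hC : 0 < C₀)
    (hEm : MeasurableSet E) (hx : x ∈ E) (hr0 : 0 < r) (hr : r ≤ 1 / 2) (hη : 0 < η)
    (hσ : ∀ e ∈ E, σ e ≤ r) {I : Finset X} (hI : IsSeparatedFamily E x r σ η I) :
    ∑ i ∈ I, σ i ^ d ≤ C₀ ^ 2 * 2 ^ d * r ^ d := by
  refine (hE.sum_pow_le hC hEm hx (R := 2 * r) (by linarith) (by linarith) hI.mem
    (fun i hi => hI.pos hη hi) (fun i hi => (hσ i (hI.mem i hi)).trans (by linarith))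
    (fun i hi => ball_subset_ball' ?_) hI.disjoint).trans (le_of_eq (by rw [mul_pow, mul_assoc]))
  rw [dist_eq_norm]
  linarith [hI.near i hi, hσ i (hI.mem i hi)]

lemma IsAhlforsRegular.exists_isLevelCover [ProperSpace X] (hE : IsAhlforsRegular d C₀ E)
    (hC : 0 < C₀) (hEm : MeasurableSet E) (hx : x ∈ E) (hr : r ≤ 1 / 10) (hη : 0 < η)
    (hηr : η ≤ r) (σ : X → ℝ) :
    ∃ 𝒰, IsLevelCover E x r σ η 𝒰 ∧ ∑ U ∈ 𝒰, U.2 ^ d ≤ C₀ ^ 2 * 18 ^ d * r ^ d := by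
  classical
  obtain ⟨u, hu, hudisj, hucov⟩ := exists_disjoint_closedBall_cover_of_totallyBounded
    ((isCompact_closedBall x (2 * r)).totallyBounded.subset (inter_subset_right (s := E)))
    (σ := fun _ => η / 6) (η := η / 6) (by positivity) fun _ _ => le_rfl
  have hball : ∀ b ∈ u, ball b (η / 6) ⊆ ball x (3 * r) := fun b hb =>
    ball_subset_ball' (by linarith [mem_closedBall.1 (hu hb).2])
  refine ⟨u.image fun b => (b, η), ⟨?_, ?_, ?_, fun f hf hfx => ?_⟩, ?_⟩
  · exact Finset.forall_mem_image.2 fun b hb => (hu hb).1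
  · exact Finset.forall_mem_image.2 fun _ _ => hη
  · exact Finset.forall_mem_image.2 fun _ _ => le_max_right _ _
  · obtain ⟨b, hb, hfb⟩ := mem_iUnion₂.1 (hucov ⟨hf, mem_closedBall_iff_norm.2 hfx⟩)
    rw [mul_div_cancel₀ η (by norm_num)] at hfb
    exact ⟨(b, η), Finset.mem_image_of_mem _ hb, hfb⟩
  · have hsum := hE.sum_pow_le hC hEm hx (R := 3 * r) (by linarith) (by linarith)
      (fun b hb => (hu hb).1) (fun _ _ => by positivity) (fun _ _ => by linarith) hball
      (hudisj.mono fun _ => ball_subset_closedBall)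
    rw [Finset.sum_image fun _ _ _ _ h => congrArg Prod.fst h]
    calc ∑ _b ∈ u, η ^ d = 6 ^ d * ∑ b ∈ u, (η / 6) ^ d := by
          rw [Finset.mul_sum]
          exact Finset.sum_congr rfl fun b _ => by rw [← mul_pow]; ring
      _ ≤ 6 ^ d * (C₀ ^ 2 * (3 * r) ^ d) := by gcongr
      _ = C₀ ^ 2 * 18 ^ d * r ^ d := by
          rw [show (18 : ℝ) = 6 * 3 by norm_num, mul_pow, mul_pow]
          ring

lemma IsAhlforsRegular.measure_le [ProperSpace X] (hE : IsAhlforsRegular d C₀ E) (hC : 0 < C₀)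
    (hη : 0 < η) (hσ : ∀ e ∈ E, 6 * σ e ≤ 1) {Q : Set X} (hQE : Q ⊆ E ∩ ball x r)
    (hQ : ∀ e ∈ Q, η ≤ σ e)
    (hT : ∀ I, IsSeparatedFamily E x r σ η I → ∑ i ∈ I, σ i ^ d ≤ T) :
    μH[(d : ℝ)] Q ≤ ENNReal.ofReal (C₀ * 6 ^ d * T) := by
  obtain ⟨u, huQ, hudisj, hucov⟩ := exists_disjoint_closedBall_cover_of_totallyBounded
    ((isCompact_closedBall x r).totallyBounded.subset
      (hQE.trans (inter_subset_right.trans ball_subset_closedBall))) hη hQ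
  have hu0 : ∀ b ∈ u, 0 < 6 * σ b := fun b hb => by linarith [hQ b (huQ hb)]
  have hsum : ∑ b ∈ u, σ b ^ d ≤ T := hT u ⟨fun b hb => (hQE (huQ hb)).1,
    fun b hb => mem_ball_iff_norm.1 (hQE (huQ hb)).2, fun b hb => hQ b (huQ hb),
    hudisj.mono fun b => ball_subset_closedBall⟩
  calc μH[(d : ℝ)] Q ≤ μH[(d : ℝ)] (⋃ b ∈ u, E ∩ ball b (6 * σ b)) := measure_mono <| by
        rw [← inter_iUnion₂]
        exact subset_inter (hQE.trans inter_subset_left) hucov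
    _ ≤ ∑ b ∈ u, μH[(d : ℝ)] (E ∩ ball b (6 * σ b)) := measure_biUnion_finset_le _ _
    _ ≤ ∑ b ∈ u, ENNReal.ofReal (C₀ * (6 * σ b) ^ d) := Finset.sum_le_sum fun b hb =>
        (hE b (hQE (huQ hb)).1 _ (hu0 b hb) (hσ b (hQE (huQ hb)).1)).2
    _ = ENNReal.ofReal (C₀ * 6 ^ d * ∑ b ∈ u, σ b ^ d) := by
        rw [← ENNReal.ofReal_sum_of_nonneg fun b hb =>
          mul_nonneg hC.le (pow_nonneg (hu0 b hb).le d), Finset.mul_sum]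
        simp_rw [mul_pow, mul_assoc]
    _ ≤ ENNReal.ofReal (C₀ * 6 ^ d * T) := by gcongr

end Packing

section Extremal

variable {X : Type*} [NormedAddCommGroup X] (d : ℕ) (E : Set X) (x : X) (r : ℝ) (σ : X → ℝ) (η : ℝ)

/-- The supremum of `∑ i ∈ I, σ i ^ d` over the separated families `I`. -/
def maxSeparatedSum : ℝ :=
  sSup ((fun I : Finset X => ∑ i ∈ I, σ i ^ d) '' {I | IsSeparatedFamily E x r σ η I})

/-- The infimum of the cost `∑ U ∈ 𝒰, U.2 ^ d` over the coverings `𝒰`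
(`0` if there is no covering). -/
def minCoverCost : ℝ :=
  sInf ((fun 𝒰 : Finset (X × ℝ) => ∑ U ∈ 𝒰, U.2 ^ d) '' {𝒰 | IsLevelCover E x r σ η 𝒰})

lemma isSeparatedFamily_empty : IsSeparatedFamily E x r σ η ∅ := by
  constructor <;> simp

variable {E x r σ η}

lemma maxSeparatedSum_nonneg (hη : 0 < η) : 0 ≤ maxSeparatedSum d E x r σ η :=
  Real.sSup_nonneg <| forall_mem_image.2 fun _ hI =>
    Finset.sum_nonneg fun _ hi => pow_nonneg (hI.pos hη hi).le d

variable {d} in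
lemma IsSeparatedFamily.sum_le_maxSeparatedSum {T : ℝ}
    (hT : ∀ J, IsSeparatedFamily E x r σ η J → ∑ i ∈ J, σ i ^ d ≤ T) {I : Finset X}
    (hI : IsSeparatedFamily E x r σ η I) : ∑ i ∈ I, σ i ^ d ≤ maxSeparatedSum d E x r σ η :=
  le_csSup ⟨T, forall_mem_image.2 hT⟩ (mem_image_of_mem _ hI)

lemma IsLevelCover.sum_nonneg {𝒰 : Finset (X × ℝ)} (hU : IsLevelCover E x r σ η 𝒰) :
    0 ≤ ∑ U ∈ 𝒰, U.2 ^ d :=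
  Finset.sum_nonneg fun U hUU => pow_nonneg (hU.pos U hUU).le d

lemma minCoverCost_nonneg : 0 ≤ minCoverCost d E x r σ η :=
  Real.sInf_nonneg <| forall_mem_image.2 fun _ hU => hU.sum_nonneg d

lemma IsLevelCover.minCoverCost_le {𝒰 : Finset (X × ℝ)} (hU : IsLevelCover E x r σ η 𝒰) :
    minCoverCost d E x r σ η ≤ ∑ U ∈ 𝒰, U.2 ^ d :=
  csInf_le ⟨0, forall_mem_image.2 fun _ hU' => hU'.sum_nonneg d⟩ (mem_image_of_mem _ hU)

end Extremal

lemma sum_range_succ_add_le {T Λ : ℕ → ℝ} {g : ℝ}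
    (h : ∀ k, T (k + 1) ≤ g * (Λ (k + 1) - Λ k) + 1 / 2 * T k) (m : ℕ) :
    ∑ k ∈ Finset.range m, T (k + 1) + T m ≤ 2 * g * (Λ m - Λ 0) + T 0 := by
  induction m with
  | zero => simp
  | succ m ih =>
    rw [Finset.sum_range_succ]
    linarith [h m]

/-- The constant in the bound for the measure of the points at which the planes turn `m` times. -/
def turnConst (n d : ℕ) (δ C₀ : ℝ) : ℝ :=
  C₀ * 6 ^ d * (2 * gainConst n d δ * (C₀ ^ 2 * 18 ^ d) + C₀ ^ 2 * 2 ^ d)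

section Turn

variable {X : Type*} [NormedAddCommGroup X] [InnerProductSpace ℝ X] [FiniteDimensional ℝ X]
  [MeasurableSpace X] [BorelSpace X] {d : ℕ} {C₀ ε δ θ ζ r η : ℝ} {E : Set X}
  {W : X → ℝ → Submodule ℝ X} {s : ℕ → X → ℝ} {x : X}

lemma ScaleChain.sum_pow_le (hs : ScaleChain E W δ θ r s) (hE : IsAhlforsRegular d C₀ E)
    (hC : 0 < C₀) (hEm : MeasurableSet E) (hθ : θ ≤ 1 / 4) (hx : x ∈ E) (hr0 : 0 < r)
    (hr : r ≤ 1 / 2) (hη : 0 < η) {k : ℕ} {I : Finset X}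
    (hI : IsSeparatedFamily E x r (fun e => 4 * θ * s k e) η I) :
    ∑ i ∈ I, (4 * θ * s k i) ^ d ≤ C₀ ^ 2 * 2 ^ d * r ^ d :=
  hE.sum_pow_le_of_isSeparatedFamily hC hEm hx hr0 hr hη (fun e he =>
    (mul_le_of_le_one_left (hs.nonneg k e he) (by linarith)).trans (hs.le (by linarith) k he)) hI

lemma FlatField.maxSeparatedSum_succ_le (hF : FlatField d ε E W) (hs : ScaleChain E W δ θ r s)
    (hp : SmallParams d δ θ ζ ε) (hA : gainConst (Module.finrank ℝ X) d δ * (d * ζ) ≤ 1 / 2)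
    (hE : IsAhlforsRegular d C₀ E) (hC : 0 < C₀) (hx : x ∈ E) (hr : r ≤ 1 / 10) (hη : 0 < η)
    (hηr : η ≤ r) (k : ℕ) :
    maxSeparatedSum d E x r (fun e => 4 * θ * s (k + 1) e) η ≤
      gainConst (Module.finrank ℝ X) d δ *
          (minCoverCost d E x r (fun e => 4 * θ * s (k + 1) e) η -
            minCoverCost d E x r (fun e => 4 * θ * s k e) η) +
        1 / 2 * maxSeparatedSum d E x r (fun e => 4 * θ * s k e) η := by
  have hg := gainConst_pos (Module.finrank ℝ X) d hp.delta_pos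
  have hEm := hF.isClosed.measurableSet
  refine csSup_le (Nonempty.image _ ⟨∅, isSeparatedFamily_empty E x r _ η⟩)
    (forall_mem_image.2 fun I hI => ?_)
  rw [← sub_le_iff_le_add, ← div_le_iff₀' hg, le_sub_iff_add_le]
  obtain ⟨𝒰₀, hU₀, -⟩ := hE.exists_isLevelCover hC hEm hx hr hη hηr
    fun e => 4 * θ * s (k + 1) e
  refine le_csInf (Nonempty.image _ ⟨𝒰₀, hU₀⟩) (forall_mem_image.2 fun 𝒰 hU => ?_)
  rw [← le_sub_iff_add_le, div_le_iff₀' hg, sub_le_iff_le_add]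
  obtain ⟨u, hu, hIu⟩ := hF.exists_separated hs hp hA hr hη hU
    (fun 𝒰' hU' => hU'.minCoverCost_le d) hI
  have hmax : ∑ b ∈ u, (4 * θ * s k b) ^ d ≤
      maxSeparatedSum d E x r (fun e => 4 * θ * s k e) η :=
    hu.sum_le_maxSeparatedSum fun J hJ => hs.sum_pow_le hE hC hEm (by linarith [hp.theta_le]) hx
      (hη.trans_le hηr) (by linarith) hη hJ
  linarith

lemma FlatField.sum_maxSeparatedSum_le (hF : FlatField d ε E W) (hs : ScaleChain E W δ θ r s)
    (hp : SmallParams d δ θ ζ ε) (hA : gainConst (Module.finrank ℝ X) d δ * (d * ζ) ≤ 1 / 2)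
    (hE : IsAhlforsRegular d C₀ E) (hC : 0 < C₀) (hx : x ∈ E) (hr : r ≤ 1 / 10) (hη : 0 < η)
    (hηr : η ≤ r) (m : ℕ) :
    ∑ k ∈ Finset.range m, maxSeparatedSum d E x r (fun e => 4 * θ * s (k + 1) e) η ≤
      (2 * gainConst (Module.finrank ℝ X) d δ * (C₀ ^ 2 * 18 ^ d) + C₀ ^ 2 * 2 ^ d) * r ^ d := by
  have hg := gainConst_pos (Module.finrank ℝ X) d hp.delta_pos
  have hr0 : 0 < r := hη.trans_le hηr
  have hEm := hF.isClosed.measurableSet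
  have htel := sum_range_succ_add_le
    (T := fun k => maxSeparatedSum d E x r (fun e => 4 * θ * s k e) η)
    (Λ := fun k => minCoverCost d E x r (fun e => 4 * θ * s k e) η)
    (hF.maxSeparatedSum_succ_le hs hp hA hE hC hx hr hη hηr) m
  have hsep0 : maxSeparatedSum d E x r (fun e => 4 * θ * s 0 e) η ≤ C₀ ^ 2 * 2 ^ d * r ^ d :=
    Real.sSup_le (forall_mem_image.2 fun I hI => hs.sum_pow_le hE hC hEm
      (by linarith [hp.theta_le]) hx hr0 (by linarith) hη hI) (by positivity)
  have hsepm := maxSeparatedSum_nonneg d (E := E) (x := x) (r := r)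
    (σ := fun e => 4 * θ * s m e) hη
  have hcost0 := minCoverCost_nonneg d (E := E) (x := x) (r := r) (σ := fun e => 4 * θ * s 0 e)
    (η := η)
  have hcostm : minCoverCost d E x r (fun e => 4 * θ * s m e) η ≤ C₀ ^ 2 * 18 ^ d * r ^ d := by
    obtain ⟨𝒰, hU, hcost⟩ := hE.exists_isLevelCover hC hEm hx hr hη hηr fun e => 4 * θ * s m e
    exact (hU.minCoverCost_le d).trans hcost
  have hgain := mul_le_mul_of_nonneg_left (sub_le_sub hcostm hcost0) hg.le
  linarith

lemma FlatField.measure_le_ballRadius_le (hF : FlatField d ε E W) (hs : ScaleChain E W δ θ r s)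
    (hp : SmallParams d δ θ ζ ε) (hA : gainConst (Module.finrank ℝ X) d δ * (d * ζ) ≤ 1 / 2)
    (hE : IsAhlforsRegular d C₀ E) (hC : 0 < C₀) (hx : x ∈ E) (hr : r ≤ 1 / 10) (hη : 0 < η)
    (hηr : η ≤ r) {m : ℕ} (hm : 0 < m) :
    μH[(d : ℝ)] {e ∈ E ∩ ball x r | η ≤ 4 * θ * s m e} ≤
      ENNReal.ofReal (turnConst (Module.finrank ℝ X) d δ C₀ / m * r ^ d) := by
  have hθ0 := hp.theta_pos
  have hθ := hp.theta_le
  have hr0 : 0 < r := hη.trans_le hηr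
  set M := 2 * gainConst (Module.finrank ℝ X) d δ * (C₀ ^ 2 * 18 ^ d) + C₀ ^ 2 * 2 ^ d with hM
  obtain ⟨k, hk, hTk⟩ : ∃ k ∈ Finset.range m,
      maxSeparatedSum d E x r (fun e => 4 * θ * s (k + 1) e) η ≤ M * r ^ d / m := by
    refine Finset.exists_le_of_sum_le ⟨0, Finset.mem_range.2 hm⟩
      ((hF.sum_maxSeparatedSum_le hs hp hA hE hC hx hr hη hηr m).trans (le_of_eq ?_))
    rw [Finset.sum_const, Finset.card_range, nsmul_eq_mul,
      mul_div_cancel₀ _ (Nat.cast_ne_zero.2 hm.ne')]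
  have hσ : ∀ e ∈ E, 6 * (4 * θ * s (k + 1) e) ≤ 1 := fun e he => by
    nlinarith [hs.le (by linarith) (k + 1) he, hs.nonneg (k + 1) e he]
  have hmax : ∀ I, IsSeparatedFamily E x r (fun e => 4 * θ * s (k + 1) e) η I →
      ∑ i ∈ I, (4 * θ * s (k + 1) i) ^ d ≤ M * r ^ d / m := fun I hI =>
    (hI.sum_le_maxSeparatedSum fun J hJ => hs.sum_pow_le hE hC hF.isClosed.measurableSet
      (by linarith) hx hr0 (by linarith) hη hJ).trans hTk
  calc _ ≤ ENNReal.ofReal (C₀ * 6 ^ d * (M * r ^ d / m)) :=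
        hE.measure_le hC hη hσ (sep_subset _ _) (fun e he => he.2.trans <|
          hs.ballRadius_le hθ0.le (by linarith) he.1.1 (Finset.mem_range.1 hk)) hmax
    _ = _ := by rw [turnConst, hM]; ring_nf

lemma FlatField.measure_turn_le (hF : FlatField d ε E W) (hs : ScaleChain E W δ θ r s)
    (hp : SmallParams d δ θ ζ ε) (hA : gainConst (Module.finrank ℝ X) d δ * (d * ζ) ≤ 1 / 2)
    (hE : IsAhlforsRegular d C₀ E) (hC : 0 < C₀) (hx : x ∈ E) (hr0 : 0 < r) (hr : r ≤ 1 / 10)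
    {m : ℕ} (hm : 0 < m) :
    μH[(d : ℝ)] {e ∈ E ∩ ball x r | 0 < s m e} ≤
      ENNReal.ofReal (turnConst (Module.finrank ℝ X) d δ C₀ / m * r ^ d) := by
  have hθ0 := hp.theta_pos
  have hunion : {e ∈ E ∩ ball x r | 0 < s m e} ⊆
      ⋃ j : ℕ, {e ∈ E ∩ ball x r | r / (j + 1) ≤ 4 * θ * s m e} := by
    rintro e ⟨he, he0⟩
    have hpos : 0 < 4 * θ * s m e := by positivity
    obtain ⟨j, hj⟩ := exists_nat_gt (r / (4 * θ * s m e))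
    rw [div_lt_iff₀ hpos] at hj
    refine mem_iUnion.2 ⟨j, he, (div_le_iff₀ (by positivity)).2 ?_⟩
    linarith
  refine (measure_mono hunion).trans ?_
  have hmono : Monotone fun j : ℕ => {e ∈ E ∩ ball x r | r / (j + 1) ≤ 4 * θ * s m e} :=
    fun i j hij e he => ⟨he.1, le_trans (by gcongr) he.2⟩
  rw [hmono.measure_iUnion]
  exact iSup_le fun j => hF.measure_le_ballRadius_le hs hp hA hE hC hx hr (by positivity)
    (div_le_self hr0.le (le_add_of_nonneg_left j.cast_nonneg)) hm

end Turn

section BigPiece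

variable {X : Type*} [NormedAddCommGroup X] [InnerProductSpace ℝ X] [FiniteDimensional ℝ X]
  [MeasurableSpace X] [BorelSpace X] {n d : ℕ} {C₀ β ε δ θ ζ r : ℝ} {E : Set X}
  {W : X → ℝ → Submodule ℝ X} {x : X}

lemma FlatField.exists_biLipschitz_measure_le (hF : FlatField d ε E W)
    (hn : Module.finrank ℝ X = n) (hp : SmallParams d δ θ ζ ε)
    (hδ : n * (6 * δ) ≤ 1 / 2) (hA : gainConst n d δ * (d * ζ) ≤ 1 / 2)
    (hE : IsAhlforsRegular d C₀ E) (hC : 0 < C₀) (hε : 250 * ε ≤ β)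
    (hεβ : n * (101 * (150 * ε)) ≤ β) (hβ : 2000 * β ≤ δ) (hr0 : 0 < r) (hr : r ≤ 1 / 10)
    (hx : x ∈ E) {m : ℕ} (hm : 0 < m) :
    ∃ g : X → X, Function.Bijective g ∧
      (∀ z w, (1 / 2) ^ m * ‖z - w‖ ≤ ‖g z - g w‖ ∧ ‖g z - g w‖ ≤ 2 ^ m * ‖z - w‖) ∧
      (∀ z, ‖g z - z‖ ≤ n * (6 * β * r)) ∧ (∀ z ∉ ball x (2 * r), g z = z) ∧
      μH[(d : ℝ)] ((E ∩ ball x r) \ g '' (AffineSubspace.mk' x (W x (3 * r)) : Set X)) ≤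
        ENNReal.ofReal (turnConst n d δ C₀ / m * r ^ d) := by
  subst hn
  have hs := hF.scaleChain (hp.delta_le.trans (by norm_num)) hp.theta_pos hp.theta_le hp.eps_le
    hr0 hr
  obtain ⟨g, hbij, hlip, hdist, hid, hcover⟩ := hF.exists_biLipschitz hs hp.theta_le hδ
    (hp.delta_le.trans (by norm_num)) hε hεβ hβ hr0 hr hx m
  have hsub : (E ∩ ball x r) \ g '' (AffineSubspace.mk' x (W x (3 * r)) : Set X) ⊆
      {e ∈ E ∩ ball x r | 0 < stoppingScale E W δ θ r m e} := fun e he =>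
    ⟨he.1, (hs.nonneg m e he.1.1).lt_of_ne fun h => he.2 (hcover e he.1 h.symm)⟩
  exact ⟨g, hbij, hlip, hdist, hid,
    (measure_mono hsub).trans (hF.measure_turn_le hs hp hA hE hC hx hr0 hr hm)⟩

end BigPiece

lemma exists_smallParams {n d : ℕ} (hd : 0 < d) (hn : 2 ≤ n) {C : ℝ} (hC : 0 < C) :
    ∃ δ θ ζ ε₀ : ℝ, 0 < ε₀ ∧ n * (6 * δ) ≤ 1 / 2 ∧ gainConst n d δ * (d * ζ) ≤ 1 / 2 ∧
      ∀ ε ≤ ε₀, SmallParams d δ θ ζ ε ∧ 2000 * (C * ε) ≤ δ := by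
  have hn2 : (2 : ℝ) ≤ n := by exact_mod_cast hn
  have hd0 : (0 : ℝ) < d := by exact_mod_cast hd
  obtain ⟨δ, hδ0, hδ⟩ : ∃ δ : ℝ, 0 < δ ∧ n * (6 * δ) = 1 / 2 :=
    ⟨1 / (12 * n), by positivity, by field_simp; norm_num⟩
  have hδ8 : δ ≤ 1 / 8 := by nlinarith
  have hg := gainConst_pos n d hδ0
  obtain ⟨ζ, hζ0, hζ, hζδ, hζg⟩ : ∃ ζ : ℝ, 0 < ζ ∧ ζ ≤ 1 / 2 ∧
      ζ ≤ ((δ / 2) ^ 2 / 128) ^ d / 2 / d ∧ ζ ≤ 1 / 2 / (gainConst n d δ * d) :=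
    ⟨min (1 / 2) (min _ _), by positivity, min_le_left _ _,
      (min_le_right _ _).trans (min_le_left _ _), (min_le_right _ _).trans (min_le_right _ _)⟩
  rw [le_div_iff₀' hd0] at hζδ
  rw [le_div_iff₀' (by positivity), mul_assoc] at hζg
  obtain ⟨θ, hθ0, hθ, hθζ⟩ : ∃ θ : ℝ, 0 < θ ∧ θ ≤ 1 / 1000 ∧ θ ≤ ζ / 48 :=
    ⟨min (1 / 1000) (ζ / 48), by positivity, min_le_left _ _, min_le_right _ _⟩
  obtain ⟨ε₀, hε₀, hεθ, hεζ, hεδ, hεC⟩ : ∃ ε₀ : ℝ, 0 < ε₀ ∧ ε₀ ≤ δ * θ / 10000 ∧ ε₀ ≤ ζ / 20 ∧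
      ε₀ ≤ (δ / 2) ^ 2 / 64 ∧ ε₀ ≤ δ / (2000 * C) :=
    ⟨min (min _ _) (min _ _), by positivity, (min_le_left _ _).trans (min_le_left _ _),
      (min_le_left _ _).trans (min_le_right _ _), (min_le_right _ _).trans (min_le_left _ _),
      (min_le_right _ _).trans (min_le_right _ _)⟩
  rw [le_div_iff₀' (by positivity), mul_assoc] at hεC
  exact ⟨δ, θ, ζ, ε₀, hε₀, hδ.le, hζg, fun ε hε => ⟨⟨hδ0, hδ8, hθ0, hθ, by linarith, hζ, hζδ,
    by linarith, by linarith, by linarith⟩, le_trans (by gcongr) hεC⟩⟩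

/-- **Theorem 15.39**: LARRF sets have very big pieces of bi-Lipschitz images of
`d`-planes: for each `τ > 0` there is `K = K(n,d,C₀,τ)` such that for `x ∈ E`
and `0 < r ≤ 10⁻¹` there are a `d`-plane `P` through `x` and a `K`-bi-Lipschitz
bijection `g` of `ℝⁿ`, with `|g − id| ≤ Cε`, `g = id` outside `B(x,2r)`, and
`H^d(E ∩ B(x,r) ∖ g(P)) ≤ τ r^d`. -/
theorem thm_15_39 (n d : ℕ) (hd : 0 < d) (hdn : d < n) :
    ∃ ε₀ : ℝ, 0 < ε₀ ∧ ∃ C : ℝ, 0 < C ∧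
    ∀ C₀ τ : ℝ, 1 ≤ C₀ → 0 < τ →
    ∃ K : ℝ, 1 ≤ K ∧
    ∀ ε : ℝ, 0 < ε → ε ≤ ε₀ →
    ∀ E : Set (V n), IsLARRF n d ε C₀ E →
    ∀ x ∈ E, ∀ r : ℝ, 0 < r → r ≤ 10⁻¹ →
    ∃ (P : Set (V n)) (g : V n → V n),
      IsAffinePlane n d P ∧ x ∈ P ∧
      Function.Bijective g ∧
      (∀ z w : V n,
        K⁻¹ * dist z w ≤ dist (g z) (g w) ∧ dist (g z) (g w) ≤ K * dist z w) ∧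
      (∀ z : V n, dist (g z) z ≤ C * ε) ∧
      (∀ z : V n, z ∉ ball x (2 * r) → g z = z) ∧
      μH[(d : ℝ)] ((E ∩ ball x r) \ g '' P) ≤ ENNReal.ofReal (τ * r ^ d) := by
  obtain ⟨C₁, hC₁⟩ : ∃ C₁ : ℝ, C₁ = n * (101 * 150) + 250 := ⟨_, rfl⟩
  have hn0 : (0 : ℝ) < n := by exact_mod_cast hd.trans hdn
  have hC₁0 : 0 < C₁ := by rw [hC₁]; positivity
  obtain ⟨δ, θ, ζ, ε₀, hε₀, hδn, hA, hparams⟩ := exists_smallParams hd (by omega : 2 ≤ n) hC₁0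
  refine ⟨ε₀, hε₀, n * (6 * C₁), by positivity, fun C₀ τ hC₀ hτ => ?_⟩
  obtain ⟨m, hmτ, hm⟩ := (((tendsto_const_div_atTop_nhds_zero_nat
    (turnConst n d δ C₀)).eventually_le_const hτ).and (Filter.eventually_gt_atTop 0)).exists
  refine ⟨2 ^ m, one_le_pow₀ one_le_two, fun ε hε hεε₀ E hE x hx r hr0 hr => ?_⟩
  obtain ⟨hp, hβ⟩ := hparams ε hεε₀
  obtain ⟨W, hF⟩ := hE.exists_flatField hε
  obtain ⟨g, hbij, hlip, hdist, hid, hbig⟩ := hF.exists_biLipschitz_measure_le (β := C₁ * ε)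
    finrank_euclideanSpace_fin hp hδn hA (fun y hy t ht0 ht1 => (hE.2.2 y hy t ht0 ht1).2)
    (by linarith) (by nlinarith) (by nlinarith) hβ hr0 (by rwa [one_div]) hx hm
  refine ⟨_, g, ⟨AffineSubspace.mk' x (W x (3 * r)), rfl, ?_, x, AffineSubspace.self_mem_mk' ..⟩,
    AffineSubspace.self_mem_mk' .., hbij, fun z w => ?_, fun z => ?_, hid, hbig.trans ?_⟩
  · rw [AffineSubspace.direction_mk', hF.finrank_eq x hx _ (by linarith) (by linarith)]
  · simpa [dist_eq_norm] using hlip z w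
  · rw [dist_eq_norm]
    refine (hdist z).trans ?_
    have : C₁ * ε * r ≤ C₁ * ε := mul_le_of_le_one_right (by positivity) (by linarith)
    nlinarith
  · gcongr
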